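/- arXiv:2404.04529 — 2 statements merged into one kernel-verified Lean document; each statement's English description precedes it below -/
import Mathlib

section
/- For m ≥ 3, the K_m-free random graph R(K_m) (the Henson graph) satisfies Out(Aut(R(K_m))) ≅ {e}; that is, every abstract group automorphism of Aut(R(K_m)) is inner. -/
open MeasureTheory Topology

/-- An analytic subgroup of countable index in a Polish group is open. -/
theorem Subgroup.isOpen_of_analyticSet {Γ : Type*} [Group Γ] [TopologicalSpace Γ]
    [IsTopologicalGroup Γ] [PolishSpace Γ] (H : Subgroup Γ) [Countable (Γ ⧸ H)]
    (hH : AnalyticSet (H : Set Γ)) : IsOpen (H : Set Γ) := by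
  have hcompl : AnalyticSet (H : Set Γ)ᶜ := by
    have hunion : (H : Set Γ)ᶜ =
        ⋃ q : {q : Γ ⧸ H // q ≠ ((1 : Γ) : Γ ⧸ H)}, (fun g => q.1.out * g) '' (H : Set Γ) := by
      ext g
      simp only [Set.mem_compl_iff, SetLike.mem_coe, Set.mem_iUnion, Set.mem_image]
      constructor
      · intro hg
        refine ⟨⟨(g : Γ ⧸ H), ?_⟩, (g : Γ ⧸ H).out⁻¹ * g, ?_, by simp⟩
        · intro h
          rw [eq_comm, QuotientGroup.eq] at h
          simp_all
        · rw [← QuotientGroup.eq]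
          simp
      · rintro ⟨⟨q, hq⟩, k, hk, rfl⟩ h
        apply hq
        rw [← QuotientGroup.out_eq' q, eq_comm, QuotientGroup.eq]
        simpa [H.mul_mem_cancel_right hk] using h
    rw [hunion]
    exact AnalyticSet.iUnion fun q => hH.image_of_continuous (continuous_const_mul _)
  borelize Γ
  obtain ⟨U, hU, hHU⟩ := (hH.measurableSet_of_compl hcompl).residualEq_isOpen
  have htranslate : ∀ g : Γ, ((fun x => g * x) ⁻¹' (H : Set Γ)) =ᶠ[residual Γ]
      ((fun x => g * x) ⁻¹' U) := fun g =>
    (tendsto_residual_of_isOpenMap (continuous_const_mul g)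
      (isOpenMap_mul_left g)).eventually hHU
  have hne : U.Nonempty := by
    by_contra hUe
    rw [Set.not_nonempty_iff_eq_empty] at hUe
    subst hUe
    have hall : ∀ᶠ x in residual Γ, ∀ q : Γ ⧸ H, ¬ q.out⁻¹ * x ∈ H := by
      rw [eventually_countable_forall]
      intro q
      filter_upwards [htranslate q.out⁻¹] with x hx hxH
      have : (fun x => q.out⁻¹ * x) ⁻¹' (∅ : Set Γ) = ∅ := rfl
      exact (hx.mp hxH : False)
    obtain ⟨x, hx⟩ := (dense_of_mem_residual hall).nonempty
    apply hx (x : Γ ⧸ H)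
    rw [← QuotientGroup.eq]
    simp
  obtain ⟨u, hu⟩ := hne
  apply Subgroup.isOpen_of_mem_nhds H (g := 1)
  have hnhds : (fun g : Γ => g⁻¹ * u) ⁻¹' U ∈ 𝓝 (1 : Γ) := by
    apply ContinuousAt.preimage_mem_nhds
    · fun_prop
    · simpa using hU.mem_nhds hu
  filter_upwards [hnhds] with g hg
  have hgood : ∀ᶠ x in residual Γ, (x ∈ H ↔ x ∈ U) ∧ (g * x ∈ H ↔ g * x ∈ U) := by
    filter_upwards [hHU, htranslate g] with x hx hx'
    exact ⟨iff_of_eq hx, iff_of_eq hx'⟩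
  have hopen : IsOpen (U ∩ (fun x => g * x) ⁻¹' U) :=
    hU.inter (hU.preimage (continuous_const_mul g))
  obtain ⟨x, ⟨hxU, hgxU⟩, hx⟩ := (dense_of_mem_residual hgood).inter_open_nonempty _ hopen
    ⟨g⁻¹ * u, hg, by simpa using hu⟩
  have h1 := hx.1.mpr hxU
  have h2 := hx.2.mpr hgxU
  exact (H.mul_mem_cancel_right h1).mp h2

namespace SimpleGraph
variable {V : Type*} {G : SimpleGraph V}

/-- The topology of pointwise convergence of an automorphism together with its inverse. -/
instance isoTopologicalSpace [TopologicalSpace V] : TopologicalSpace (G ≃g G) :=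
  .induced (fun g => ((g : V → V), (g.symm : V → V))) inferInstance

theorem continuous_aut_coe [TopologicalSpace V] :
    Continuous fun g : G ≃g G => ((g : V → V), (g.symm : V → V)) :=
  continuous_induced_dom

theorem continuous_aut_apply [TopologicalSpace V] (a : V) : Continuous fun g : G ≃g G => g a :=
  (continuous_apply a).comp (continuous_fst.comp continuous_aut_coe)

theorem continuous_aut_symm_apply [TopologicalSpace V] (a : V) :
    Continuous fun g : G ≃g G => g.symm a :=
  (continuous_apply a).comp (continuous_snd.comp continuous_aut_coe)

theorem continuous_aut_iff [TopologicalSpace V] {X : Type*} [TopologicalSpace X]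
    {f : X → (G ≃g G)} : Continuous f ↔
      (∀ a, Continuous fun x => f x a) ∧ ∀ a, Continuous fun x => (f x).symm a := by
  rw [continuous_induced_rng]
  constructor
  · intro h
    exact ⟨fun a => (continuous_apply a).comp (continuous_fst.comp h),
      fun a => (continuous_apply a).comp (continuous_snd.comp h)⟩
  · rintro ⟨h1, h2⟩
    exact (continuous_pi h1).prodMk (continuous_pi h2)

theorem continuous_apply_of_discrete [TopologicalSpace V] [DiscreteTopology V]
    {X : Type*} [TopologicalSpace X] {φ : X → V → V} {b : X → V}
    (hφ : ∀ a, Continuous fun x => φ x a) (hb : Continuous b) :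
    Continuous fun x => φ x (b x) := by
  rw [continuous_iff_continuousAt]
  intro x
  have hev : ∀ᶠ y in 𝓝 x, b y = b x :=
    ((isOpen_discrete {b x}).preimage hb).mem_nhds rfl
  refine ((hφ (b x)).continuousAt (x := x)).congr ?_
  filter_upwards [hev] with y hy
  rw [hy]

instance [TopologicalSpace V] [DiscreteTopology V] : IsTopologicalGroup (G ≃g G) where
  continuous_mul := by
    rw [continuous_aut_iff]
    constructor
    · intro a
      exact continuous_apply_of_discrete (φ := fun (p : (G ≃g G) × (G ≃g G)) a => p.1 a)
        (b := fun p => p.2 a)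
        (fun a => (continuous_aut_apply a).comp continuous_fst)
        ((continuous_aut_apply a).comp continuous_snd)
    · intro a
      exact continuous_apply_of_discrete (φ := fun (p : (G ≃g G) × (G ≃g G)) a => p.2.symm a)
        (b := fun p => p.1.symm a)
        (fun a => (continuous_aut_symm_apply a).comp continuous_snd)
        ((continuous_aut_symm_apply a).comp continuous_fst)
  continuous_inv := continuous_aut_iff.2
    ⟨fun a => continuous_aut_symm_apply a, fun a => continuous_aut_apply a⟩

instance [TopologicalSpace V] [DiscreteTopology V] [Countable V] : PolishSpace (G ≃g G) := by
  have : PolishSpace V := {}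
  apply Topology.IsClosedEmbedding.polishSpace (β := (V → V) × (V → V))
    (f := fun g : G ≃g G => ((g : V → V), (g.symm : V → V)))
  refine ⟨⟨⟨rfl⟩, ?_⟩, ?_⟩
  · intro g g' h
    ext a
    exact congrFun (congrArg Prod.fst h) a
  · have hrange : Set.range (fun g : G ≃g G => ((g : V → V), (g.symm : V → V))) =
        {p | (∀ a, p.1 (p.2 a) = a) ∧ (∀ a, p.2 (p.1 a) = a) ∧
          ∀ a b, G.Adj (p.1 a) (p.1 b) ↔ G.Adj a b} := by
      ext p
      constructor
      · rintro ⟨g, rfl⟩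
        exact ⟨fun a => g.apply_symm_apply a, fun a => g.symm_apply_apply a,
          fun a b => g.map_adj_iff⟩
      · rintro ⟨h1, h2, h3⟩
        exact ⟨⟨⟨p.1, p.2, h2, h1⟩, @fun a b => h3 a b⟩, rfl⟩
    have hfst : ∀ a, Continuous fun p : (V → V) × (V → V) => p.1 a := fun a => by fun_prop
    have hsnd : ∀ a, Continuous fun p : (V → V) × (V → V) => p.2 a := fun a => by fun_prop
    rw [hrange]
    simp only [Set.ofPred_and, Set.ofPred_forall]
    refine IsClosed.inter (isClosed_iInter fun a => ?_)
      (IsClosed.inter (isClosed_iInter fun a => ?_)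
        (isClosed_iInter fun a => isClosed_iInter fun b => ?_))
    · exact isClosed_eq (continuous_apply_of_discrete hfst (hsnd a)) continuous_const
    · exact isClosed_eq (continuous_apply_of_discrete hsnd (hfst a)) continuous_const
    · exact (isClosed_discrete {q : V × V | G.Adj q.1 q.2 ↔ G.Adj a b}).preimage
        ((hfst a).prodMk (hfst b))

/-- Open subgroups contain the pointwise stabilizer of a finite set. -/
theorem exists_finset_of_isOpen [TopologicalSpace V] [DiscreteTopology V] [DecidableEq V]
    {H : Subgroup (G ≃g G)}
    (hH : IsOpen (H : Set (G ≃g G))) :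
    ∃ F : Finset V, ∀ g : G ≃g G, (∀ a ∈ F, g a = a) → g ∈ H := by
  obtain ⟨U, hU, hUH⟩ := isOpen_induced_iff.1 hH
  have h1 : (((1 : G ≃g G) : V → V), ((1 : G ≃g G).symm : V → V)) ∈ U := by
    change (1 : G ≃g G) ∈ (fun g : G ≃g G => ((g : V → V), (g.symm : V → V))) ⁻¹' U
    rw [hUH]
    exact H.one_mem
  obtain ⟨A, B, hA, hB, hA1, hB1, hAB⟩ := isOpen_prod_iff.1 hU _ _ h1
  obtain ⟨I, u, hu, hIA⟩ := isOpen_pi_iff.1 hA _ hA1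
  obtain ⟨J, w, hw, hJB⟩ := isOpen_pi_iff.1 hB _ hB1
  refine ⟨I ∪ J, fun g hg => ?_⟩
  change g ∈ (H : Set (G ≃g G))
  rw [← hUH]
  refine hAB ⟨hIA fun a ha => ?_, hJB fun a ha => ?_⟩
  · change g a ∈ u a
    rw [hg a (Finset.mem_union_left _ ha)]
    exact (hu a ha).2
  · change g.symm a ∈ w a
    have : g.symm a = a := by
      rw [RelIso.symm_apply_eq, hg a (Finset.mem_union_right _ ha)]
    rw [this]
    exact (hw a ha).2
end SimpleGraph

namespace SimpleGraph
variable {V : Type*} {G : SimpleGraph V} {n : ℕ}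

/-- A graph without cliques of size `n + 1`, in which finite partial isomorphisms extend to
automorphisms, and in which every one-vertex extension of a finite induced subgraph that creates no
clique of size `n + 1` is realized. -/
structure IsHenson (G : SimpleGraph V) (n : ℕ) : Prop where
  cliqueFree : G.CliqueFree (n + 1)
  exists_aut : ∀ (S : Finset V) (f : V → V), Set.InjOn f S →
    (∀ a ∈ S, ∀ b ∈ S, G.Adj (f a) (f b) ↔ G.Adj a b) → ∃ φ : G ≃g G, ∀ a ∈ S, φ a = f a
  exists_vertex : ∀ (E : Finset V) (N : Set V), G.CliqueFreeOn N n →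
    ∃ q, q ∉ E ∧ ∀ d ∈ E, G.Adj q d ↔ d ∈ N

theorem exists_aut_of_homogeneous
    (hhom : ∀ S T : Set V, S.Finite → T.Finite →
      ∀ e : G.induce S ≃g G.induce T, ∃ φ : G ≃g G, ∀ a : S, φ a = (e a : V))
    {S : Set V} (hS : S.Finite) (f : V → V) (hf : Set.InjOn f S)
    (hadj : ∀ a ∈ S, ∀ b ∈ S, G.Adj (f a) (f b) ↔ G.Adj a b) :
    ∃ φ : G ≃g G, ∀ a ∈ S, φ a = f a := by
  obtain ⟨φ, hφ⟩ := hhom S (f '' S) hS (hS.image f)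
    ⟨Equiv.Set.imageOfInjOn f S hf, @fun a b => hadj a a.2 b b.2⟩
  exact ⟨φ, fun a ha => hφ ⟨a, ha⟩⟩

open Classical in
theorem exists_vertex_of_universal
    (hhom : ∀ S T : Set V, S.Finite → T.Finite →
      ∀ e : G.induce S ≃g G.induce T, ∃ φ : G ≃g G, ∀ a : S, φ a = (e a : V))
    (hfree : G.CliqueFree (n + 1))
    (huniv : ∀ (W : Type) (_ : Fintype W) (H : SimpleGraph W),
      H.CliqueFree (n + 1) → Nonempty (H ↪g G))
    (E : Finset V) (N : Set V) (hN : G.CliqueFreeOn N n) :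
    ∃ q, q ∉ E ∧ ∀ d ∈ E, G.Adj q d ↔ d ∈ N := by
  let e : E ≃ Fin E.card := E.equivFin
  let H : SimpleGraph (Option (Fin E.card)) :=
    { Adj := fun a b => match a, b with
        | none, none => False
        | none, some i => (e.symm i : V) ∈ N
        | some i, none => (e.symm i : V) ∈ N
        | some i, some j => G.Adj (e.symm i) (e.symm j)
      symm := ⟨by
        rintro (_ | i) (_ | j) h
        · exact h
        · exact h
        · exact h
        · exact G.adj_symm h⟩
      loopless := ⟨by
        rintro (_ | i) h
        · exact h
        · exact G.irrefl h⟩ }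
  have hH : H.CliqueFree (n + 1) := by
    intro t ht
    let s : Finset V := t.eraseNone.image fun i => (e.symm i : V)
    have hinj : Function.Injective fun i => (e.symm i : V) :=
      Subtype.val_injective.comp e.symm.injective
    have hs : G.IsClique s := by
      intro a ha b hb hab
      simp only [s, Finset.coe_image, Set.mem_image, Finset.mem_coe, Finset.mem_eraseNone] at ha hb
      obtain ⟨i, hi, rfl⟩ := ha
      obtain ⟨j, hj, rfl⟩ := hb
      exact ht.isClique hi hj (by rintro h; apply hab; rw [Option.some_inj.1 h])
    have hcard : s.card = t.eraseNone.card := Finset.card_image_of_injective _ hinj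
    by_cases hnone : none ∈ t
    · refine hN (t := s) ?_ ⟨hs, ?_⟩
      · intro a ha
        simp only [s, Finset.coe_image, Set.mem_image, Finset.mem_coe,
          Finset.mem_eraseNone] at ha
        obtain ⟨i, hi, rfl⟩ := ha
        exact ht.isClique hnone hi (by simp)
      · rw [hcard, Finset.card_eraseNone_of_mem hnone, ht.card_eq]
        rfl
    · refine hfree s ⟨hs, ?_⟩
      rw [hcard, Finset.card_eraseNone_of_not_mem hnone, ht.card_eq]
  obtain ⟨j⟩ := huniv _ inferInstance H hH
  let ρ : V → V := fun a =>
    if h : ∃ d : E, j (some (e d)) = a then (h.choose : V) else a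
  have hρ : ∀ d : E, ρ (j (some (e d))) = d := by
    intro d
    have h : ∃ d' : E, j (some (e d')) = j (some (e d)) := ⟨d, rfl⟩
    simp only [ρ, dif_pos h]
    simp
  obtain ⟨φ, hφ⟩ := exists_aut_of_homogeneous hhom
    (S := Set.range fun d : E => j (some (e d))) (Set.finite_range _) ρ
    (by
      rintro _ ⟨d, rfl⟩ _ ⟨d', rfl⟩ h
      simp only [hρ] at h
      rw [Subtype.ext h])
    (by
      rintro _ ⟨d, rfl⟩ _ ⟨d', rfl⟩
      simp only [hρ, j.map_adj_iff]
      simp [H])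
  have hφ' : ∀ d : E, φ (j (some (e d))) = d := fun d => (hφ _ ⟨d, rfl⟩).trans (hρ d)
  refine ⟨φ (j none), ?_, ?_⟩
  · intro h
    have := hφ' ⟨_, h⟩
    simp at this
  · intro d hd
    have h : G.Adj (φ (j none)) d ↔ H.Adj none (some (e ⟨d, hd⟩)) := by
      rw [← j.map_adj_iff, ← φ.map_adj_iff (v := j none), hφ']
    rw [h]
    simp [H]

namespace IsHenson

theorem cliqueFreeOn_of_map (hG : G.IsHenson n) {N : Set V} (p : V) (ρ : V → V)
    (hinj : Set.InjOn ρ N) (hadj : ∀ a ∈ N, ∀ b ∈ N, G.Adj a b → G.Adj (ρ a) (ρ b))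
    (hp : ∀ a ∈ N, G.Adj p (ρ a)) : G.CliqueFreeOn N n := by
  classical
  intro t htN ht
  have hpt : p ∉ t.image ρ := by
    intro h
    obtain ⟨a, ha, hap⟩ := Finset.mem_image.1 h
    have := hp a (htN ha)
    rw [hap] at this
    exact G.irrefl this
  refine hG.cliqueFree (insert p (t.image ρ)) ⟨?_, ?_⟩
  · rw [Finset.coe_insert]
    refine IsClique.insert ?_ ?_
    · intro x hx y hy hxy
      simp only [Finset.coe_image, Set.mem_image, Finset.mem_coe] at hx hy
      obtain ⟨a, ha, rfl⟩ := hx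
      obtain ⟨b, hb, rfl⟩ := hy
      exact hadj a (htN ha) b (htN hb) (ht.isClique ha hb (by rintro rfl; exact hxy rfl))
    · intro b hb _
      simp only [Finset.coe_image, Set.mem_image, Finset.mem_coe] at hb
      obtain ⟨a, ha, rfl⟩ := hb
      exact hp a (htN ha)
  · rw [Finset.card_insert_of_notMem hpt,
      Finset.card_image_of_injOn (hinj.mono htN), ht.card_eq]

open Classical in
/-- A finite set can be moved freely away from `D` by an automorphism fixing `B` pointwise. -/
theorem exists_free_move (hG : G.IsHenson n) (B C D : Finset V) :
    ∃ k : G ≃g G, (∀ b ∈ B, k b = b) ∧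
      ∀ c ∈ C, c ∉ B → k c ∉ D ∧ ∀ d ∈ D, d ∉ B → ¬ G.Adj (k c) d := by
  induction C using Finset.induction_on with
  | empty => exact ⟨1, fun _ _ => rfl, by simp⟩
  | insert c C hc ih =>
    obtain ⟨k, hkB, hkC⟩ := ih
    by_cases hcB : c ∈ B
    · refine ⟨k, hkB, fun a ha haB => hkC a ?_ haB⟩
      rcases Finset.mem_insert.1 ha with rfl | ha
      · exact absurd hcB haB
      · exact ha
    let S := B ∪ C
    let N : Set V := {x | ∃ a ∈ S, G.Adj c a ∧ k a = x}
    obtain ⟨q, hqE, hq⟩ := hG.exists_vertex (S.image k ∪ D) N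
      (by
        refine hG.cliqueFreeOn_of_map c k.symm k.symm.injective.injOn
          (fun a _ b _ h => k.symm.map_adj_iff.2 h) ?_
        rintro a ⟨b, -, hb, rfl⟩
        simpa using hb)
    have hcS : c ∉ S := by simp [S, hcB, hc]
    have hqS : ∀ a ∈ S, G.Adj q (k a) ↔ G.Adj c a := by
      intro a ha
      rw [hq _ (Finset.mem_union_left _ (Finset.mem_image_of_mem _ ha))]
      simp [N, ha]
    have hqk : ∀ a ∈ S, q ≠ k a := by
      rintro a ha rfl
      exact hqE (Finset.mem_union_left _ (Finset.mem_image_of_mem _ ha))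
    obtain ⟨φ, hφ⟩ := hG.exists_aut (insert c S) (fun a => if a = c then q else k a)
      (by
        intro a ha b hb hab
        have hk := k.injective
        simp only [Finset.coe_insert, Set.mem_insert_iff, Finset.mem_coe] at ha hb
        grind)
      (by
        intro a ha b hb
        have hk : ∀ x y, G.Adj (k x) (k y) ↔ G.Adj x y := fun x y => k.map_adj_iff
        have := fun x y => G.adj_comm x y
        have := fun x => G.irrefl (v := x)
        grind)
    have hφS : ∀ a ∈ S, φ a = k a := by
      intro a ha
      rw [hφ a (Finset.mem_insert_of_mem ha), if_neg]
      rintro rfl; exact hcS ha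
    have hφc : φ c = q := by rw [hφ c (Finset.mem_insert_self _ _), if_pos rfl]
    refine ⟨φ, fun b hb => (hφS b (Finset.mem_union_left _ hb)).trans (hkB b hb), ?_⟩
    intro a ha haB
    rcases Finset.mem_insert.1 ha with rfl | ha
    · rw [hφc]
      refine ⟨fun h => hqE (Finset.mem_union_right _ h), fun d hd hdB h => ?_⟩
      rw [hq d (Finset.mem_union_right _ hd)] at h
      obtain ⟨b, hb, -, rfl⟩ := h
      rcases Finset.mem_union.1 hb with hb | hb
      · rw [hkB b hb] at hdB
        exact hdB hb
      · by_cases hbB : b ∈ B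
        · rw [hkB b hbB] at hdB
          exact hdB hbB
        · exact (hkC b hb hbB).1 hd
    · rw [hφS a (Finset.mem_union_right _ ha)]
      exact hkC a ha haB

open Classical in
/-- A subgroup containing the pointwise stabilizers of two finite sets contains the pointwise
stabilizer of their intersection. -/
theorem mem_of_fixes_inter (hG : G.IsHenson n) {H : Subgroup (G ≃g G)} {F₁ F₂ : Finset V}
    (h₁ : ∀ g : G ≃g G, (∀ a ∈ F₁, g a = a) → g ∈ H)
    (h₂ : ∀ g : G ≃g G, (∀ a ∈ F₂, g a = a) → g ∈ H)
    (g : G ≃g G) (hg : ∀ a ∈ F₁ ∩ F₂, g a = a) : g ∈ H := by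
  have hconj : ∀ {F : Finset V} {k : G ≃g G}, k ∈ H →
      (∀ g : G ≃g G, (∀ a ∈ F, g a = a) → g ∈ H) →
      ∀ g : G ≃g G, (∀ a ∈ F, g (k a) = k a) → g ∈ H := by
    intro F k hk hF g hg
    have : k⁻¹ * g * k ∈ H := hF _ fun a ha => by
      change k.symm (g (k a)) = a
      rw [hg a ha, RelIso.symm_apply_apply]
    have := H.mul_mem (H.mul_mem hk this) (H.inv_mem hk)
    simpa [mul_assoc] using this
  let D := F₁ ∪ F₁.image g
  obtain ⟨k₂, hk₂F, hk₂⟩ := hG.exists_free_move F₁ F₂ D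
  have hk₂H := h₁ k₂ hk₂F
  obtain ⟨k, hkF, hk⟩ := hG.exists_free_move (F₂.image k₂) F₁ D
  have hkH : k ∈ H := hconj hk₂H h₂ k fun a ha => hkF _ (Finset.mem_image_of_mem _ ha)
  have hstar := hconj hkH h₁
  have hF₀ : ∀ a, a ∈ F₁ → a ∈ F₂.image k₂ → a ∈ F₂ := by
    intro a ha ha'
    obtain ⟨b, hb, rfl⟩ := Finset.mem_image.1 ha'
    have : k₂ (k₂ b) = k₂ b := hk₂F _ ha
    rwa [k₂.injective this]
  have hF₀' : ∀ a, a ∈ F₁ → a ∈ F₂ → a ∈ F₂.image k₂ := fun a ha ha' =>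
    Finset.mem_image.2 ⟨a, ha', hk₂F a ha⟩
  have hD : ∀ d ∈ D, d ∈ F₂.image k₂ → d ∈ F₁ ∧ d ∈ F₂ := by
    intro d hd hd'
    obtain ⟨b, hb, rfl⟩ := Finset.mem_image.1 hd'
    by_cases hb₁ : b ∈ F₁
    · rw [hk₂F b hb₁]; exact ⟨hb₁, hb⟩
    · exact absurd hd (hk₂ b hb hb₁).1
  have hgF : ∀ a ∈ F₁, g a ∈ D := fun a ha =>
    Finset.mem_union_right _ (Finset.mem_image_of_mem _ ha)
  have hFD : ∀ a ∈ F₁, a ∈ D := fun a ha => Finset.mem_union_left _ ha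
  have hfix : ∀ a ∈ F₁, a ∈ F₂ → k a = a ∧ g a = a := fun a ha ha' =>
    ⟨hkF a (hF₀' a ha ha'), hg a (Finset.mem_inter.2 ⟨ha, ha'⟩)⟩
  have hfree : ∀ a ∈ F₁, a ∉ F₂ → k a ∉ D ∧ ∀ d ∈ D, d ∉ F₁ ∩ F₂ → ¬ G.Adj (k a) d := by
    intro a ha ha'
    obtain ⟨h, h'⟩ := hk a ha fun h => ha' (hF₀ a ha h)
    exact ⟨h, fun d hd hd' => h' d hd fun h => hd' (Finset.mem_inter.2 (hD d hd h))⟩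
  have hgD : ∀ a ∈ F₁, a ∉ F₂ → g a ∉ F₁ ∩ F₂ := by
    intro a ha ha' h
    have h' := hg _ h
    rw [g.injective h'] at h
    exact ha' (Finset.mem_inter.1 h).2
  obtain ⟨φ, hφ⟩ := hG.exists_aut (F₁ ∪ F₁.image k) (fun a => if a ∈ F₁ then g a else a)
    (by
      intro a ha b hb hab
      have hmixed : ∀ b ∈ F₁, ∀ a ∈ F₁ ∪ F₁.image k, a ∉ F₁ → a ≠ g b := by
        rintro b hb a ha ha₁ rfl
        obtain ⟨c, hc, hc'⟩ := Finset.mem_image.1 ((Finset.mem_union.1 ha).resolve_left ha₁)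
        by_cases hc₂ : c ∈ F₂
        · rw [(hfix c hc hc₂).1] at hc'
          exact ha₁ (hc' ▸ hc)
        · exact (hfree c hc hc₂).1 (hc' ▸ hgF b hb)
      by_cases ha₁ : a ∈ F₁ <;> by_cases hb₁ : b ∈ F₁ <;>
        simp only [ha₁, hb₁, if_true, if_false] at hab
      · exact g.injective hab
      · exact absurd hab.symm (hmixed a ha₁ b hb hb₁)
      · exact absurd hab (hmixed b hb₁ a ha ha₁)
      · exact hab)
    (by
      intro a ha b hb
      have hmixed : ∀ b ∈ F₁, ∀ a ∈ F₁ ∪ F₁.image k, a ∉ F₁ → (G.Adj a (g b) ↔ G.Adj a b) := by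
        intro b hb a ha ha₁
        obtain ⟨c, hc, rfl⟩ := Finset.mem_image.1 ((Finset.mem_union.1 ha).resolve_left ha₁)
        have hc₂ : c ∉ F₂ := fun hc₂ => ha₁ ((hfix c hc hc₂).1.symm ▸ hc)
        by_cases hb₂ : b ∈ F₂
        · rw [(hfix b hb hb₂).2]
        · have hc' := (hfree c hc hc₂).2
          exact iff_of_false (hc' _ (hgF b hb) (hgD b hb hb₂))
            (hc' _ (hFD b hb) fun h => hb₂ (Finset.mem_inter.1 h).2)
      by_cases ha₁ : a ∈ F₁ <;> by_cases hb₁ : b ∈ F₁ <;> simp only [ha₁, hb₁, if_true, if_false]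
      · exact g.map_adj_iff
      · rw [G.adj_comm, G.adj_comm a]
        exact hmixed a ha₁ b hb hb₁
      · exact hmixed b hb₁ a ha ha₁)
  have hφH : φ ∈ H := by
    refine hstar φ fun a ha => ?_
    rw [hφ _ (Finset.mem_union_right _ (Finset.mem_image_of_mem _ ha))]
    by_cases ha₁ : k a ∈ F₁
    · have ha₂ : a ∈ F₂ := by
        by_contra h
        exact (hfree a ha h).1 (hFD _ ha₁)
      simp [hfix a ha ha₂]
    · simp [ha₁]
  have hφg : φ⁻¹ * g ∈ H := h₁ _ fun a ha => by
    change φ.symm (g a) = a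
    rw [RelIso.symm_apply_eq, hφ a (Finset.mem_union_left _ ha), if_pos ha]
  simpa using H.mul_mem hφH hφg

end IsHenson
end SimpleGraph

/-- A countable family of dense requirements is met along some increasing sequence. -/
theorem exists_seq_of_dense {C ι : Type*} [Countable ι] {r : C → C → Prop} (hrefl : ∀ c, r c c)
    (htrans : ∀ a b c, r a b → r b c → r a c) (D : ι → C → Prop)
    (hD : ∀ i c, ∃ c', r c c' ∧ D i c') (c₀ : C) :
    ∃ s : ℕ → C, s 0 = c₀ ∧ (∀ i j, i ≤ j → r (s i) (s j)) ∧ ∀ i, ∃ j, D i (s j) := by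
  choose next hnext hnextD using hD
  rcases isEmpty_or_nonempty ι with hι | hι
  · exact ⟨fun _ => c₀, rfl, fun _ _ _ => hrefl _, fun i => hι.elim i⟩
  obtain ⟨e, he⟩ := exists_surjective_nat ι
  let s : ℕ → C := fun j => Nat.rec c₀ (fun j c => next (e j) c) j
  have hs : ∀ j, s (j + 1) = next (e j) (s j) := fun _ => rfl
  refine ⟨s, rfl, fun i j hij => ?_, fun i => ?_⟩
  · induction hij with
    | refl => exact hrefl _
    | step _ ih => exact htrans _ _ _ ih (hnext _ _)
  · obtain ⟨j, rfl⟩ := he i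
    exact ⟨j + 1, hnextD _ _⟩

namespace SimpleGraph
variable {V : Type*} {G : SimpleGraph V} {n : ℕ}

/-- An involutive automorphism whose only fixed point is `v` and which moves no vertex to one of its
neighbours. -/
structure IsFlip (v : V) (h : G ≃g G) : Prop where
  invol : ∀ p, h (h p) = p
  fix : h v = v
  eq_of_fix : ∀ p, h p = p → p = v
  not_adj : ∀ p, ¬ G.Adj p (h p)

/-- A finite approximation with support `K` of a flip at `v`. -/
structure IsPartialFlip (G : SimpleGraph V) (v : V) (k : V → V) (K : Finset V) : Prop where
  invol : ∀ p, k (k p) = p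
  off : ∀ p, p ∉ K → k p = p
  mem : v ∈ K
  fix : k v = v
  ne : ∀ p ∈ K, p ≠ v → k p ≠ p
  adj : ∀ p ∈ K, ∀ q ∈ K, G.Adj (k p) (k q) ↔ G.Adj p q
  not_adj : ∀ p, ¬ G.Adj p (k p)

namespace IsFlip
variable {v : V} {h : G ≃g G}

theorem adj_comm (hh : G.IsFlip v h) (p q : V) : G.Adj (h p) q ↔ G.Adj p (h q) := by
  conv_lhs => rw [← hh.invol q]
  exact h.map_adj_iff

theorem eq_comm (hh : G.IsFlip v h) (p q : V) : h p = q ↔ p = h q := by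
  constructor
  · rintro rfl
    rw [hh.invol]
  · rintro rfl
    rw [hh.invol]

end IsFlip

namespace IsPartialFlip
variable {v : V} {k : V → V} {K : Finset V}

theorem apply_mem (hk : G.IsPartialFlip v k K) {p : V} (hp : p ∈ K) : k p ∈ K := by
  by_contra h
  have h' := hk.off _ h
  rw [hk.invol] at h'
  exact h (h' ▸ hp)

theorem injective (hk : G.IsPartialFlip v k K) : Function.Injective k := fun a b hab => by
  rw [← hk.invol a, hab, hk.invol]

theorem of_commute (hk : G.IsPartialFlip v k K) {f : V → V} (hf : Function.Injective f)
    (hfv : f v = v) (hc : ∀ p, k (f p) = f (k p)) {p : V} (hp : p ∈ K) : f p ∈ K := by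
  by_cases hpv : p = v
  · rw [hpv, hfv]
    exact hk.mem
  · by_contra h
    have h' := hk.off _ h
    rw [hc] at h'
    exact hk.ne p hp hpv (hf h')

open Classical in
theorem singleton (G : SimpleGraph V) (v : V) : G.IsPartialFlip v id {v} where
  invol _ := rfl
  off _ _ := rfl
  mem := by simp
  fix := rfl
  ne := by simp
  adj _ _ _ _ := Iff.rfl
  not_adj _ := G.irrefl

/-- An increasing union of partial flips that exhausts the graph is a flip. -/
theorem exists_isFlip {k : ℕ → V → V} {K : ℕ → Finset V} (hk : ∀ i, G.IsPartialFlip v (k i) (K i))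
    (hmono : ∀ i j, i ≤ j → K i ⊆ K j) (hagree : ∀ i j, i ≤ j → ∀ p ∈ K i, k j p = k i p)
    (hcover : ∀ p, ∃ i, p ∈ K i) :
    ∃ h : G ≃g G, G.IsFlip v h ∧ ∀ i, ∀ p ∈ K i, h p = k i p := by
  choose N hN using hcover
  let f : V → V := fun p => k (N p) p
  have hf : ∀ i, ∀ p ∈ K i, f p = k i p := by
    intro i p hp
    rcases le_total i (N p) with h | h
    · exact hagree _ _ h p hp
    · exact (hagree _ _ h p (hN p)).symm
  have hff : ∀ p, f (f p) = p := by
    intro p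
    rw [hf _ p (hN p), hf _ _ ((hk _).apply_mem (hN p)), (hk _).invol]
  have hadj : ∀ p q, G.Adj (f p) (f q) ↔ G.Adj p q := by
    intro p q
    have hp : p ∈ K (max (N p) (N q)) := hmono _ _ (le_max_left _ _) (hN p)
    have hq : q ∈ K (max (N p) (N q)) := hmono _ _ (le_max_right _ _) (hN q)
    rw [hf _ p hp, hf _ q hq, (hk _).adj p hp q hq]
  refine ⟨⟨⟨f, f, hff, hff⟩, @fun a b => hadj a b⟩, ⟨hff, ?_, ?_, ?_⟩, hf⟩
  · exact (hk _).fix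
  · intro p hp
    by_contra hpv
    exact (hk (N p)).ne p (hN p) hpv hp
  · exact fun p => (hk (N p)).not_adj p

open Classical in
/-- A partial flip extends to a further vertex, with image chosen generically over `D`. -/
theorem extend (hG : G.IsHenson n) (hk : G.IsPartialFlip v k K) {p : V} (hp : p ∉ K)
    (D : Finset V) :
    ∃ k' K', G.IsPartialFlip v k' K' ∧ K ⊆ K' ∧ (∀ a ∈ K, k' a = k a) ∧ p ∈ K' ∧ k' p ∉ D ∧
      ∀ d ∈ D, d ∉ K → ¬ G.Adj (k' p) d := by
  obtain ⟨q, hqE, hq⟩ := hG.exists_vertex (insert p (K ∪ D)) {d | d ∈ K ∧ G.Adj p (k d)}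
    (hG.cliqueFreeOn_of_map p k hk.injective.injOn
      (fun a ha b hb => (hk.adj a ha.1 b hb.1).2) fun a ha => ha.2)
  simp only [Finset.mem_insert, Finset.mem_union, not_or, forall_eq_or_imp] at hqE hq
  obtain ⟨hqp, hqK, hqD⟩ := hqE
  obtain ⟨hqp', hq⟩ := hq
  replace hqp' : ¬ G.Adj q p := fun h => hp (hqp'.1 h).1
  have hqK' : ∀ a ∈ K, G.Adj q a ↔ G.Adj p (k a) := fun a ha => by simp [hq a (.inl ha), ha]
  have hqK'' : ∀ a ∈ K, G.Adj q (k a) ↔ G.Adj p a := fun a ha => by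
    rw [hqK' _ (hk.apply_mem ha), hk.invol]
  have hpv : v ≠ p := fun h => hp (h ▸ hk.mem)
  have hqv : v ≠ q := fun h => hqK (h ▸ hk.mem)
  let k' : V → V := fun a => if a = p then q else if a = q then p else k a
  have hk'p : k' p = q := by simp [k']
  have hk'q : k' q = p := by simp [k', hqp]
  have hk' : ∀ a, a ≠ p → a ≠ q → k' a = k a := fun a h h' => by simp [k', h, h']
  have hk'K : ∀ a ∈ K, k' a = k a := fun a ha =>
    hk' a (fun h => hp (h ▸ ha)) (fun h => hqK (h ▸ ha))
  refine ⟨k', insert p (insert q K), ⟨?_, ?_, by simp [hk.mem], ?_, ?_, ?_, ?_⟩, ?_, hk'K,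
    by simp, by rwa [hk'p], ?_⟩
  · intro a
    by_cases haK : a ∈ K
    · rw [hk'K a haK, hk'K _ (hk.apply_mem haK), hk.invol]
    · by_cases hap : a = p
      · rw [hap, hk'p, hk'q]
      · by_cases haq : a = q
        · rw [haq, hk'q, hk'p]
        · rw [hk' a hap haq, hk.off a haK, hk' a hap haq, hk.off a haK]
  · intro a ha
    simp only [Finset.mem_insert, not_or] at ha
    rw [hk' a ha.1 ha.2.1, hk.off a ha.2.2]
  · rw [hk' v hpv hqv, hk.fix]
  · intro a ha hav
    simp only [Finset.mem_insert] at ha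
    rcases ha with rfl | rfl | ha
    · rwa [hk'p]
    · rw [hk'q]
      exact Ne.symm hqp
    · rw [hk'K a ha]
      exact hk.ne a ha hav
  · have hsymm := fun a b => G.adj_comm a b
    intro a ha b hb
    simp only [Finset.mem_insert] at ha hb
    rcases ha with rfl | rfl | ha <;> rcases hb with rfl | rfl | hb
    · simp
    · rw [hk'p, hk'q, hsymm]
    · rw [hk'p, hk'K b hb, hqK'' b hb]
    · rw [hk'p, hk'q, hsymm]
    · simp
    · rw [hk'q, hk'K b hb, hqK' b hb]
    · rw [hk'p, hk'K a ha, hsymm, hqK'' a ha, hsymm]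
    · rw [hk'q, hk'K a ha, hsymm, hsymm a, hqK' a ha]
    · rw [hk'K a ha, hk'K b hb, hk.adj a ha b hb]
  · intro a
    by_cases hap : a = p
    · rw [hap, hk'p, G.adj_comm]
      exact hqp'
    · by_cases haq : a = q
      · rwa [haq, hk'q]
      · rw [hk' a hap haq]
        exact hk.not_adj a
  · intro a ha
    simp [ha]
  · intro d hd hdK
    rw [hk'p, hq d (.inr hd)]
    exact fun h => hdK h.1

end IsPartialFlip

/-- Every one-vertex type over a finite set is realized by a vertex with distinct nonadjacent images
under `h` and `k`. -/
def IsGeneric (G : SimpleGraph V) (n : ℕ) (h k : V → V) : Prop :=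
  ∀ (E : Finset V) (N : Set V), G.CliqueFreeOn N n →
    ∃ q, q ∉ E ∧ (∀ d ∈ E, G.Adj q d ↔ d ∈ N) ∧ h q ≠ k q ∧ ¬ G.Adj (h q) (k q)

theorem IsGeneric.symm {h k : V → V} (hhk : G.IsGeneric n h k) : G.IsGeneric n k h := by
  intro E N hN
  obtain ⟨q, hqE, hq, hne, hadj⟩ := hhk E N hN
  exact ⟨q, hqE, hq, hne.symm, fun h => hadj h.symm⟩

namespace IsHenson

open Classical in
theorem exists_isFlip_isGeneric [Countable V] (hG : G.IsHenson n) (v : V) (h : Bool → G ≃g G) :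
    ∃ k : G ≃g G, G.IsFlip v k ∧ ∀ b, G.IsGeneric n (h b) k := by
  let C := {c : (V → V) × Finset V // G.IsPartialFlip v c.1 c.2}
  let r : C → C → Prop := fun c c' => c.1.2 ⊆ c'.1.2 ∧ ∀ p ∈ c.1.2, c'.1.1 p = c.1.1 p
  let D : V ⊕ (Finset V × Finset V × Bool) → C → Prop := fun i c => match i with
    | .inl p => p ∈ c.1.2
    | .inr (E, N, b) => G.CliqueFreeOn N n → ∃ q ∈ c.1.2, q ∉ E ∧ (∀ d ∈ E, G.Adj q d ↔ d ∈ N) ∧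
        h b q ≠ c.1.1 q ∧ ¬ G.Adj (h b q) (c.1.1 q)
  obtain ⟨s, -, hs, hsD⟩ := exists_seq_of_dense (r := r) (fun c => ⟨subset_rfl, fun _ _ => rfl⟩)
    (fun a b c hab hbc => ⟨hab.1.trans hbc.1, fun p hp => by
      rw [hbc.2 p (hab.1 hp), hab.2 p hp]⟩) D
    (by
      rintro (p | ⟨E, N, b⟩) ⟨⟨k, K⟩, hk⟩
      · by_cases hp : p ∈ K
        · exact ⟨⟨(k, K), hk⟩, ⟨subset_rfl, fun _ _ => rfl⟩, hp⟩
        · obtain ⟨k', K', hk', hKK', hkk', hpK', -⟩ := hk.extend hG hp ∅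
          exact ⟨⟨(k', K'), hk'⟩, ⟨hKK', hkk'⟩, hpK'⟩
      · by_cases hN : G.CliqueFreeOn N n
        · obtain ⟨q, hqE, hq⟩ := hG.exists_vertex (E ∪ K ∪ K.image (h b).symm) N hN
          simp only [Finset.mem_union, Finset.mem_image, not_or, not_exists, not_and] at hqE
          obtain ⟨k', K', hk', hKK', hkk', hpK', hkq, hkq'⟩ := hk.extend hG hqE.1.2 {h b q}
          refine ⟨⟨(k', K'), hk'⟩, ⟨hKK', hkk'⟩, fun _ => ⟨q, hpK', hqE.1.1, ?_, ?_, ?_⟩⟩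
          · intro d hd
            simpa using hq d (by simp [hd])
          · intro h
            simp [h] at hkq
          · intro h'
            refine hkq' _ (Finset.mem_singleton_self _) (fun h'' => ?_) h'.symm
            exact hqE.2 _ h'' (by simp)
        · exact ⟨⟨(k, K), hk⟩, ⟨subset_rfl, fun _ _ => rfl⟩, fun h => absurd h hN⟩)
    ⟨(id, {v}), IsPartialFlip.singleton G v⟩
  obtain ⟨k, hk, hkk⟩ := IsPartialFlip.exists_isFlip (k := fun i => (s i).1.1)
    (K := fun i => (s i).1.2) (fun i => (s i).2) (fun i j hij => (hs i j hij).1)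
    (fun i j hij => (hs i j hij).2) (fun p => hsD (.inl p))
  refine ⟨k, hk, fun b E N hN => ?_⟩
  obtain ⟨i, hi⟩ := hsD (.inr (E, E.filter (· ∈ N), b))
  obtain ⟨q, hqK, hqE, hq, hne, hadj⟩ := hi (CliqueFreeOn.subset G (fun x hx =>
    (Finset.mem_filter.1 (Finset.mem_coe.1 hx)).2) hN)
  refine ⟨q, hqE, fun d hd => ?_, ?_, ?_⟩
  · rw [hq d hd]
    simp [hd]
  · rwa [hkk i q hqK]
  · rwa [hkk i q hqK]

open Classical in
/-- Any two flips at `v` are conjugate in the stabilizer of `v`. -/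
theorem exists_conj_of_isFlip [Countable V] (hG : G.IsHenson n) {v : V} {h k : G ≃g G}
    (hh : G.IsFlip v h) (hk : G.IsFlip v k) : ∃ u : G ≃g G, u v = v ∧ ∀ p, u (h p) = k (u p) := by
  let C := {c : (G ≃g G) × Finset V // v ∈ c.2 ∧ c.1 v = v ∧ (∀ p ∈ c.2, h p ∈ c.2) ∧
    ∀ p ∈ c.2, c.1 (h p) = k (c.1 p)}
  let r : C → C → Prop := fun c c' => c.1.2 ⊆ c'.1.2 ∧ ∀ p ∈ c.1.2, c'.1.1 p = c.1.1 p
  have hext : ∀ (c : C) (p : V), ∃ c', r c c' ∧ p ∈ c'.1.2 ∧ c'.1.1 p = c.1.1 p := by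
    rintro ⟨⟨u, S⟩, hvS, huv, hS, hu⟩ p
    dsimp only at hvS huv hS hu
    by_cases hp : p ∈ S
    · exact ⟨⟨⟨u, S⟩, hvS, huv, hS, hu⟩, ⟨subset_rfl, fun _ _ => rfl⟩, hp, rfl⟩
    have hpv : p ≠ v := fun h => hp (h ▸ hvS)
    have hhp : h p ≠ p := fun h' => hpv (hh.eq_of_fix p h')
    have hhpS : h p ∉ S := fun h' => hp (hh.invol p ▸ hS _ h')
    have hupv : u p ≠ v := fun h' => hpv (u.injective (h'.trans huv.symm))
    have hkup : k (u p) ≠ u p := fun h' => hupv (hk.eq_of_fix _ h')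
    let f : V → V := fun a => if a = h p then k (u p) else u a
    have hfp : f (h p) = k (u p) := by simp [f]
    have hf : ∀ a, a ≠ h p → f a = u a := fun a ha => by simp [f, ha]
    have hfS : ∀ a ∈ S, f a = u a := fun a ha => hf a fun h' => hhpS (h' ▸ ha)
    have hkuS : ∀ a ∈ S, k (u a) ≠ u p := fun a ha h' => by
      rw [← hu a ha] at h'
      exact hp (u.injective h' ▸ hS a ha)
    obtain ⟨φ, hφ⟩ := hG.exists_aut (insert (h p) (insert p S)) f
      (by
        have key : ∀ b ∈ insert p S, f b ≠ f (h p) := by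
          intro b hb h'
          rcases Finset.mem_insert.1 hb with rfl | hb
          · rw [hf _ hhp.symm, hfp] at h'
            exact hkup h'.symm
          · rw [hfS b hb, hfp, ← hk.eq_comm] at h'
            exact hkuS b hb h'
        intro a ha b hb hab
        simp only [Finset.coe_insert, Set.mem_insert_iff, Finset.mem_coe] at ha hb
        by_cases ha' : a = h p <;> by_cases hb' : b = h p
        · rw [ha', hb']
        · rw [ha'] at hab
          exact absurd hab.symm (key b (by simpa using hb.resolve_left hb'))
        · rw [hb'] at hab
          exact absurd hab (key a (by simpa using ha.resolve_left ha'))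
        · rw [hf a ha', hf b hb'] at hab
          exact u.injective hab)
      (by
        have key : ∀ b ∈ insert p S, G.Adj (f (h p)) (f b) ↔ G.Adj (h p) b := by
          intro b hb
          rw [hfp, hk.adj_comm, hh.adj_comm]
          rcases Finset.mem_insert.1 hb with rfl | hb
          · rw [hf _ hhp.symm]
            exact iff_of_false (hk.not_adj _) (hh.not_adj _)
          · rw [hfS b hb, ← hu b hb, u.map_adj_iff]
        intro a ha b hb
        simp only [Finset.mem_insert] at ha hb
        by_cases ha' : a = h p <;> by_cases hb' : b = h p
        · simp [ha', hb']
        · rw [ha']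
          exact key b (by simpa using hb.resolve_left hb')
        · rw [hb', G.adj_comm, G.adj_comm a]
          exact key a (by simpa using ha.resolve_left ha')
        · rw [hf a ha', hf b hb', u.map_adj_iff])
    have hφS : ∀ a ∈ S, φ a = u a := fun a ha => by rw [hφ a (by simp [ha]), hfS a ha]
    have hφp : φ p = u p := by rw [hφ p (by simp), hf p hhp.symm]
    have hφhp : φ (h p) = k (u p) := by rw [hφ _ (by simp), hfp]
    refine ⟨⟨⟨φ, insert (h p) (insert p S)⟩, by simp [hvS], (hφS v hvS).trans huv, ?_, ?_⟩,
      ⟨fun a ha => by simp [ha], hφS⟩, by simp, hφp⟩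
    · intro a ha
      simp only [Finset.mem_insert] at ha ⊢
      rcases ha with rfl | rfl | ha
      · exact .inr (.inl (hh.invol _))
      · exact .inl rfl
      · exact .inr (.inr (hS a ha))
    · intro a ha
      simp only [Finset.mem_insert] at ha
      rcases ha with rfl | rfl | ha
      · simp only [hh.invol, hφp, hφhp, hk.invol]
      · simp only [hφp, hφhp]
      · simp only [hφS a ha, hφS _ (hS a ha), hu a ha]
  let D : V ⊕ V → C → Prop := fun i c => match i with
    | .inl p => p ∈ c.1.2
    | .inr q => ∃ p ∈ c.1.2, c.1.1 p = q
  obtain ⟨s, -, hs, hsD⟩ := exists_seq_of_dense (r := r) (fun c => ⟨subset_rfl, fun _ _ => rfl⟩)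
    (fun a b c hab hbc => ⟨hab.1.trans hbc.1, fun p hp => by
      rw [hbc.2 p (hab.1 hp), hab.2 p hp]⟩) D
    (by
      rintro (p | q) c
      · obtain ⟨c', hc, hp, -⟩ := hext c p
        exact ⟨c', hc, hp⟩
      · obtain ⟨c', hc, hp, hp'⟩ := hext c (c.1.1.symm q)
        exact ⟨c', hc, _, hp, by rw [hp', RelIso.apply_symm_apply]⟩)
    ⟨(1, {v}), by simp, rfl, by simp [hh.fix], by simp [hh.fix, hk.fix]⟩
  choose N hN using fun p => hsD (.inl p)
  change ∀ p, p ∈ (s (N p)).1.2 at hN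
  let f : V → V := fun p => (s (N p)).1.1 p
  have hf : ∀ i, ∀ p ∈ (s i).1.2, f p = (s i).1.1 p := by
    intro i p hp
    rcases le_total i (N p) with h | h
    · exact (hs _ _ h).2 p hp
    · exact ((hs _ _ h).2 p (hN p)).symm
  have hpair : ∀ p q, ∃ u : G ≃g G, f p = u p ∧ f q = u q := by
    intro p q
    exact ⟨(s (max (N p) (N q))).1.1, hf _ _ ((hs _ _ (le_max_left _ _)).1 (hN p)),
      hf _ _ ((hs _ _ (le_max_right _ _)).1 (hN q))⟩
  have hbij : Function.Bijective f := by
    constructor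
    · intro p q hpq
      obtain ⟨u, hp, hq⟩ := hpair p q
      rw [hp, hq] at hpq
      exact u.injective hpq
    · intro q
      obtain ⟨i, p, hp, hpq⟩ := hsD (.inr q)
      exact ⟨p, (hf i p hp).trans hpq⟩
  refine ⟨⟨Equiv.ofBijective f hbij, @fun p q => ?_⟩, ?_, fun p => ?_⟩
  · obtain ⟨u, hp, hq⟩ := hpair p q
    change G.Adj (f p) (f q) ↔ _
    rw [hp, hq, u.map_adj_iff]
  · exact (s (N v)).2.2.1
  · change f (h p) = k (f p)
    obtain ⟨-, -, hS, hu⟩ := (s (N p)).2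
    rw [hf _ _ (hS p (hN p)), hf _ p (hN p), hu p (hN p)]

end IsHenson
end SimpleGraph

namespace SimpleGraph
variable {V : Type*} {G : SimpleGraph V} {n : ℕ}

/-- The map `f` carries `P` to an `h`-equivariant copy of `P` outside `D`, whose adjacencies to `D`
are prescribed by the partial flip `x` of `X`, and which is far from its image under `h'`. -/
structure IsGenericCopy (G : SimpleGraph V) (h h' x : V → V) (X D P : Finset V) (f : V → V) :
    Prop where
  inj : ∀ p ∈ P, ∀ p' ∈ P, f p = f p' → p = p'
  comm : ∀ p ∈ P, f (h p) = h (f p)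
  notMem : ∀ p ∈ P, f p ∉ D
  adj_base : ∀ p ∈ P, ∀ d ∈ D, G.Adj (f p) d ↔ d ∈ X ∧ G.Adj p (x d)
  adj : ∀ p ∈ P, ∀ p' ∈ P, G.Adj (f p) (f p') ↔ G.Adj p p'
  ne : ∀ p ∈ P, ∀ p' ∈ P, h' (f p) ≠ f p'
  not_adj : ∀ p ∈ P, ∀ p' ∈ P, ¬ G.Adj (h' (f p)) (f p')

variable {v : V} {h h' : G ≃g G} {x : V → V} {X : Finset V}

namespace IsGenericCopy

open Classical in
theorem cliqueFreeOn (hG : G.IsHenson n) (hx : G.IsPartialFlip v x X) {D P : Finset V} {f : V → V}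
    (hXD : X ⊆ D) (hPX : ∀ p ∈ P, p ∉ X) (hf : G.IsGenericCopy h h' x X D P f) (p : V) :
    G.CliqueFreeOn {d | d ∈ X ∧ G.Adj p (x d) ∨ ∃ a ∈ P, f a = d ∧ G.Adj p a} n := by
  have hfX : ∀ a ∈ P, f a ∉ X := fun a ha h' => hf.notMem a ha (hXD h')
  have hinj : Set.InjOn f P := fun a ha b hb hab => hf.inj a ha b hb hab
  let ρ : V → V := fun d => if d ∈ X then x d else if hd : ∃ a ∈ P, f a = d then hd.choose else d
  have hρX : ∀ d ∈ X, ρ d = x d := fun d hd => by simp [ρ, hd]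
  have hρP : ∀ a ∈ P, ρ (f a) = a := by
    intro a ha
    have hex : ∃ b ∈ P, f b = f a := ⟨a, ha, rfl⟩
    simp only [ρ, hfX a ha, if_false, dif_pos hex]
    exact hf.inj _ hex.choose_spec.1 a ha hex.choose_spec.2
  refine hG.cliqueFreeOn_of_map p ρ ?_ ?_ ?_
  · rintro a (⟨ha, -⟩ | ⟨a, ha, rfl, -⟩) b (⟨hb, -⟩ | ⟨b, hb, rfl, -⟩) hab
    · rw [hρX a ha, hρX b hb] at hab
      exact hx.injective hab
    · rw [hρX a ha, hρP b hb] at hab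
      exact absurd (hab ▸ hx.apply_mem ha) (hPX b hb)
    · rw [hρP a ha, hρX b hb] at hab
      exact absurd (hab.symm ▸ hx.apply_mem hb) (hPX a ha)
    · rw [hρP a ha, hρP b hb] at hab
      rw [hab]
  · rintro a (⟨ha, -⟩ | ⟨a, ha, rfl, -⟩) b (⟨hb, -⟩ | ⟨b, hb, rfl, -⟩) hab
    · rw [hρX a ha, hρX b hb]
      exact (hx.adj a ha b hb).2 hab
    · rw [hρX a ha, hρP b hb]
      exact ((hf.adj_base b hb a (hXD ha)).1 hab.symm).2.symm
    · rw [hρP a ha, hρX b hb]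
      exact ((hf.adj_base a ha b (hXD hb)).1 hab).2
    · rw [hρP a ha, hρP b hb]
      exact (hf.adj a ha b hb).1 hab
  · rintro a (⟨ha, ha'⟩ | ⟨a, ha, rfl, ha'⟩)
    · rwa [hρX a ha]
    · rwa [hρP a ha]

open Classical in
theorem extend (hG : G.IsHenson n) (hh : G.IsFlip v h) (hh' : G.IsFlip v h')
    (hgen : G.IsGeneric n h h') (hx : G.IsPartialFlip v x X) (hxh : ∀ p, x (h p) = h (x p))
    {D P : Finset V} {f : V → V} (hXD : X ⊆ D) (hXD' : ∀ p ∈ X, h' p ∈ D)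
    (hPX : ∀ p ∈ P, p ∉ X) (hPh : ∀ p ∈ P, h p ∈ P) (hf : G.IsGenericCopy h h' x X D P f)
    {p : V} (hpX : p ∉ X) (hpP : p ∉ P) :
    ∃ f', G.IsGenericCopy h h' x X D (insert p (insert (h p) P)) f' := by
  let E := D ∪ P.image f ∪ P.image fun a => h' (f a)
  obtain ⟨q, hqE, hq, hne, hnadj⟩ := hgen (E ∪ E.image h) _ (hf.cliqueFreeOn hG hx hXD hPX p)
  have hXh : ∀ a ∈ X, h a ∈ X := fun a ha => hx.of_commute h.injective hh.fix hxh ha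
  have hDE : ∀ d ∈ D, d ∈ E := fun d hd => by simp [E, hd]
  have hfE : ∀ a ∈ P, f a ∈ E := fun a ha => by
    simp only [E, Finset.mem_union, Finset.mem_image]
    exact .inl (.inr ⟨a, ha, rfl⟩)
  have hfE' : ∀ a ∈ P, h' (f a) ∈ E := fun a ha => by
    simp only [E, Finset.mem_union, Finset.mem_image]
    exact .inr ⟨a, ha, rfl⟩
  have hqE' : ∀ d ∈ E, q ≠ d ∧ h q ≠ d := by
    intro d hd
    refine ⟨?_, ?_⟩
    · rintro rfl
      exact hqE (Finset.mem_union_left _ hd)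
    · intro h'
      rw [hh.eq_comm] at h'
      exact hqE (Finset.mem_union_right _ (h' ▸ Finset.mem_image_of_mem _ hd))
  have hmem : ∀ d ∈ E, d ∈ E ∪ E.image h ∧ h d ∈ E ∪ E.image h := fun d hd =>
    ⟨Finset.mem_union_left _ hd, Finset.mem_union_right _ (Finset.mem_image_of_mem _ hd)⟩
  have hfX : ∀ a ∈ P, f a ∉ X := fun a ha h' => hf.notMem a ha (hXD h')
  have hvX := hx.mem
  have hpv : p ≠ v := fun h => hpX (h ▸ hvX)
  have hqv : q ≠ v := (hqE' v (hDE v (hXD hvX))).1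
  have hhp : h p ≠ p := fun h' => hpv (hh.eq_of_fix _ h')
  have hhq : h q ≠ q := fun h' => hqv (hh.eq_of_fix _ h')
  have hhpP : h p ∉ P := fun h' => hpP (hh.invol p ▸ hPh _ h')
  have hqD : ∀ d ∈ D, G.Adj q d ↔ d ∈ X ∧ G.Adj p (x d) := by
    intro d hd
    rw [hq d (hmem d (hDE d hd)).1]
    refine ⟨?_, .inl⟩
    rintro (h' | ⟨a, ha, rfl, -⟩)
    · exact h'
    · exact absurd hd (hf.notMem a ha)
  have hqD' : ∀ d ∈ D, G.Adj (h q) d ↔ d ∈ X ∧ G.Adj (h p) (x d) := by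
    intro d hd
    rw [hh.adj_comm, hq _ (hmem d (hDE d hd)).2, hh.adj_comm, ← hxh]
    refine ⟨?_, fun h' => .inl ⟨hXh d h'.1, h'.2⟩⟩
    rintro (h' | ⟨a, ha, ha', -⟩)
    · exact ⟨hh.invol d ▸ hXh _ h'.1, h'.2⟩
    · rw [← hh.eq_comm, ← hf.comm a ha] at ha'
      exact absurd hd (ha' ▸ hf.notMem _ (hPh a ha))
  have hqf : ∀ a ∈ P, G.Adj q (f a) ↔ G.Adj p a := by
    intro a ha
    rw [hq _ (hmem _ (hfE a ha)).1]
    refine ⟨?_, fun h' => .inr ⟨a, ha, rfl, h'⟩⟩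
    rintro (h' | ⟨b, hb, hab, h'⟩)
    · exact absurd h'.1 (hfX a ha)
    · rwa [← hf.inj b hb a ha hab]
  have hqf' : ∀ a ∈ P, G.Adj (h q) (f a) ↔ G.Adj (h p) a := by
    intro a ha
    rw [hh.adj_comm, hh.adj_comm, ← hf.comm a ha, hqf _ (hPh a ha)]
  have hfar : ∀ a ∈ P, ¬ G.Adj q (h' (f a)) := by
    intro a ha
    rw [hq _ (hmem _ (hfE' a ha)).1]
    rintro (h'' | ⟨b, hb, hab, -⟩)
    · exact hf.notMem a ha (hh'.invol (f a) ▸ hXD' _ h''.1)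
    · exact hf.ne a ha b hb hab.symm
  have hfar' : ∀ a ∈ P, ¬ G.Adj (h q) (h' (f a)) := by
    intro a ha
    rw [hh.adj_comm, hq _ (hmem _ (hfE' a ha)).2]
    rintro (h'' | ⟨b, hb, hab, -⟩)
    · have := hXh _ h''.1
      rw [hh.invol] at this
      exact hf.notMem a ha (hh'.invol (f a) ▸ hXD' _ this)
    · rw [← hh.eq_comm, ← hf.comm b hb] at hab
      exact hf.ne a ha _ (hPh b hb) hab.symm
  let f' : V → V := fun a => if a = p then q else if a = h p then h q else f a
  have hf'p : f' p = q := by simp [f']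
  have hf'hp : f' (h p) = h q := by simp [f', hhp]
  have hf' : ∀ a ∈ P, f' a = f a := fun a ha => by
    have h₁ : a ≠ p := fun h' => hpP (h' ▸ ha)
    have h₂ : a ≠ h p := fun h' => hhpP (h' ▸ ha)
    simp [f', h₁, h₂]
  refine ⟨f', ?_, ?_, ?_, ?_, ?_, ?_, ?_⟩
  · intro a ha b hb hab
    simp only [Finset.mem_insert] at ha hb
    rcases ha with rfl | rfl | ha <;> rcases hb with rfl | rfl | hb
    · rfl
    · rw [hf'p, hf'hp] at hab
      exact absurd hab.symm hhq
    · rw [hf'p, hf' b hb] at hab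
      exact absurd hab (hqE' _ (hfE b hb)).1
    · rw [hf'p, hf'hp] at hab
      exact absurd hab hhq
    · rfl
    · rw [hf'hp, hf' b hb] at hab
      exact absurd hab (hqE' _ (hfE b hb)).2
    · rw [hf'p, hf' a ha] at hab
      exact absurd hab.symm (hqE' _ (hfE a ha)).1
    · rw [hf'hp, hf' a ha] at hab
      exact absurd hab.symm (hqE' _ (hfE a ha)).2
    · rw [hf' a ha, hf' b hb] at hab
      exact hf.inj a ha b hb hab
  · intro a ha
    simp only [Finset.mem_insert] at ha
    rcases ha with rfl | rfl | ha
    · rw [hf'p, hf'hp]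
    · rw [hh.invol, hf'p, hf'hp, hh.invol]
    · rw [hf' a ha, hf' _ (hPh a ha), hf.comm a ha]
  · intro a ha
    simp only [Finset.mem_insert] at ha
    rcases ha with rfl | rfl | ha
    · rw [hf'p]
      exact fun hd => (hqE' _ (hDE _ hd)).1 rfl
    · rw [hf'hp]
      exact fun hd => (hqE' _ (hDE _ hd)).2 rfl
    · rw [hf' a ha]
      exact hf.notMem a ha
  · intro a ha d hd
    simp only [Finset.mem_insert] at ha
    rcases ha with rfl | rfl | ha
    · rw [hf'p, hqD d hd]
    · rw [hf'hp, hqD' d hd]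
    · rw [hf' a ha, hf.adj_base a ha d hd]
  · intro a ha b hb
    simp only [Finset.mem_insert] at ha hb
    rcases ha with rfl | rfl | ha <;> rcases hb with rfl | rfl | hb
    · simp
    · rw [hf'p, hf'hp]
      exact iff_of_false (hh.not_adj _) (hh.not_adj _)
    · rw [hf'p, hf' b hb, hqf b hb]
    · rw [hf'p, hf'hp, G.adj_comm, G.adj_comm (h b)]
      exact iff_of_false (hh.not_adj _) (hh.not_adj _)
    · simp
    · rw [hf'hp, hf' b hb, hqf' b hb]
    · rw [hf'p, hf' a ha, G.adj_comm, hqf a ha, G.adj_comm]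
    · rw [hf'hp, hf' a ha, G.adj_comm, hqf' a ha, G.adj_comm]
    · rw [hf' a ha, hf' b hb, hf.adj a ha b hb]
  · intro a ha b hb hab
    simp only [Finset.mem_insert] at ha hb
    rcases ha with rfl | rfl | ha <;> rcases hb with rfl | rfl | hb
    · rw [hf'p] at hab
      exact hqv (hh'.eq_of_fix _ hab)
    · rw [hf'p, hf'hp] at hab
      exact hne hab.symm
    · rw [hf'p, hf' b hb, hh'.eq_comm] at hab
      exact (hqE' _ (hfE' b hb)).1 hab
    · rw [hf'p, hf'hp, hh'.eq_comm] at hab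
      exact hne hab
    · rw [hf'hp] at hab
      have := hh'.eq_of_fix _ hab
      rw [hh.eq_comm, hh.fix] at this
      exact hqv this
    · rw [hf'hp, hf' b hb, hh'.eq_comm] at hab
      exact (hqE' _ (hfE' b hb)).2 hab
    · rw [hf'p, hf' a ha] at hab
      exact (hqE' _ (hfE' a ha)).1 hab.symm
    · rw [hf'hp, hf' a ha] at hab
      exact (hqE' _ (hfE' a ha)).2 hab.symm
    · rw [hf' a ha, hf' b hb] at hab
      exact hf.ne a ha b hb hab
  · intro a ha b hb hab
    simp only [Finset.mem_insert] at ha hb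
    rcases ha with rfl | rfl | ha <;> rcases hb with rfl | rfl | hb
    · exact hh'.not_adj _ hab.symm
    · rw [hf'p, hf'hp] at hab
      exact hnadj hab.symm
    · rw [hf'p, hf' b hb, hh'.adj_comm] at hab
      exact hfar b hb hab
    · rw [hf'p, hf'hp, hh'.adj_comm] at hab
      exact hnadj hab
    · exact hh'.not_adj _ hab.symm
    · rw [hf'hp, hf' b hb, hh'.adj_comm] at hab
      exact hfar' b hb hab
    · rw [hf'p, hf' a ha] at hab
      exact hfar a ha hab.symm
    · rw [hf'hp, hf' a ha] at hab
      exact hfar' a ha hab.symm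
    · rw [hf' a ha, hf' b hb] at hab
      exact hf.not_adj a ha b hb hab

open Classical in
theorem exists_of_invariant (hG : G.IsHenson n) (hh : G.IsFlip v h) (hh' : G.IsFlip v h')
    (hgen : G.IsGeneric n h h') (hx : G.IsPartialFlip v x X) (hxh : ∀ p, x (h p) = h (x p))
    {D : Finset V} (hXD : X ⊆ D) (hXD' : ∀ p ∈ X, h' p ∈ D) (P : Finset V)
    (hPX : ∀ p ∈ P, p ∉ X) (hPh : ∀ p ∈ P, h p ∈ P) :
    ∃ f, G.IsGenericCopy h h' x X D P f := by
  induction P using Finset.strongInduction with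
  | H P ih =>
    rcases P.eq_empty_or_nonempty with rfl | ⟨p, hp⟩
    · exact ⟨id, by constructor <;> simp⟩
    let P' := (P.erase p).erase (h p)
    have hP' : insert p (insert (h p) P') = P := by
      ext a
      simp only [P', Finset.mem_insert, Finset.mem_erase]
      constructor
      · rintro (rfl | rfl | h')
        · exact hp
        · exact hPh p hp
        · exact h'.2.2
      · tauto
    have hP'X : ∀ a ∈ P', a ∉ X := fun a ha =>
      hPX a (Finset.mem_of_mem_erase (Finset.mem_of_mem_erase ha))
    have hP'h : ∀ a ∈ P', h a ∈ P' := by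
      intro a ha
      simp only [P', Finset.mem_erase] at ha ⊢
      refine ⟨fun h' => ha.2.1 (h.injective h'), ?_, hPh a ha.2.2⟩
      rw [Ne, hh.eq_comm]
      exact ha.1
    obtain ⟨f, hf⟩ := ih P'
      (Finset.ssubset_of_subset_of_ssubset (Finset.erase_subset _ _) (Finset.erase_ssubset hp))
      hP'X hP'h
    rw [← hP']
    exact hf.extend hG hh hh' hgen hx hxh hXD hXD' hP'X hP'h (hPX p hp) (by simp [P'])

end IsGenericCopy
end SimpleGraph

namespace SimpleGraph
variable {V : Type*} {G : SimpleGraph V} {n : ℕ}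

/-- Commuting partial flips `x` and `z`, which commute with `h` and with `h'` respectively. -/
structure IsLink (G : SimpleGraph V) (v : V) (h h' : G ≃g G) (x : V → V) (X : Finset V)
    (z : V → V) (Z : Finset V) : Prop where
  left : G.IsPartialFlip v x X
  right : G.IsPartialFlip v z Z
  comm : ∀ p, x (z p) = z (x p)
  comm_left : ∀ p, x (h p) = h (x p)
  comm_right : ∀ p, z (h' p) = h' (z p)

variable {v : V} {h h' : G ≃g G} {x z : V → V} {X Z : Finset V}

namespace IsLink

theorem symm (hl : G.IsLink v h h' x X z Z) : G.IsLink v h' h z Z x X :=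
  ⟨hl.right, hl.left, fun p => (hl.comm p).symm, hl.comm_right, hl.comm_left⟩

open Classical in
/-- Both sides of a link extend so that the domain of the left one contains a given vertex. -/
theorem extend (hG : G.IsHenson n) (hh : G.IsFlip v h) (hh' : G.IsFlip v h')
    (hgen : G.IsGeneric n h h') (hl : G.IsLink v h h' x X z Z) (p : V) :
    ∃ x' X' z' Z', G.IsLink v h h' x' X' z' Z' ∧ (X ⊆ X' ∧ ∀ a ∈ X, x' a = x a) ∧
      (Z ⊆ Z' ∧ ∀ a ∈ Z, z' a = z a) ∧ p ∈ X' := by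
  obtain ⟨hx, hz, hxz, hxh, hzh⟩ := hl
  have hvX := hx.mem
  have hXh : ∀ a ∈ X, h a ∈ X := fun a ha => hx.of_commute h.injective hh.fix hxh ha
  have hXz : ∀ a ∈ X, z a ∈ X := fun a ha => hx.of_commute hz.injective hz.fix hxz ha
  have hZx : ∀ a ∈ Z, x a ∈ Z := fun a ha =>
    hz.of_commute hx.injective hx.fix (fun p => (hxz p).symm) ha
  have hZh : ∀ a ∈ Z, h' a ∈ Z := fun a ha => hz.of_commute h'.injective hh'.fix hzh ha
  let P := (Z ∪ Z.image h ∪ {p, h p}) \ X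
  have hPX : ∀ a ∈ P, a ∉ X := fun a ha => (Finset.mem_sdiff.1 ha).2
  have hPh : ∀ a ∈ P, h a ∈ P := by
    intro a ha
    simp only [P, Finset.mem_sdiff, Finset.mem_union, Finset.mem_image, Finset.mem_insert,
      Finset.mem_singleton] at ha ⊢
    obtain ⟨ha, haX⟩ := ha
    refine ⟨?_, fun h' => haX (hh.invol a ▸ hXh _ h')⟩
    rcases ha with (ha | ⟨b, hb, rfl⟩) | (rfl | rfl)
    · exact .inl (.inr ⟨a, ha, rfl⟩)
    · rw [hh.invol]
      exact .inl (.inl hb)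
    · exact .inr (.inr rfl)
    · rw [hh.invol]
      exact .inr (.inl rfl)
  have hZP : ∀ a ∈ Z, a ∉ X → a ∈ P := fun a ha haX => by simp [P, ha, haX]
  have hPz : ∀ a ∈ P, z a ∈ P := by
    intro a ha
    by_cases haZ : a ∈ Z
    · exact hZP _ (hz.apply_mem haZ) fun h' => hPX a ha (hz.invol a ▸ hXz _ h')
    · rwa [hz.off a haZ]
  let D₀ := X ∪ Z ∪ P
  let D := D₀ ∪ D₀.image h'
  have hXD₀ : ∀ a ∈ X, a ∈ D₀ := fun a ha => by simp [D₀, ha]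
  have hZD₀ : ∀ a ∈ Z, a ∈ D₀ := fun a ha => by simp [D₀, ha]
  have hPD₀ : ∀ a ∈ P, a ∈ D₀ := fun a ha => by simp [D₀, ha]
  have hD₀D : ∀ a ∈ D₀, a ∈ D := fun a ha => Finset.mem_union_left _ ha
  have hD₀D' : ∀ a ∈ D₀, h' a ∈ D := fun a ha =>
    Finset.mem_union_right _ (Finset.mem_image_of_mem _ ha)
  obtain ⟨f, hf⟩ := IsGenericCopy.exists_of_invariant hG hh hh' hgen hx hxh (D := D)
    (fun a ha => hD₀D a (hXD₀ a ha)) (fun a ha => hD₀D' a (hXD₀ a ha)) P hPX hPh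
  have hfD : ∀ a ∈ P, ∀ d ∈ D₀, f a ≠ d := fun a ha d hd h' =>
    hf.notMem a ha (h' ▸ hD₀D d hd)
  have hfD' : ∀ a ∈ P, ∀ d ∈ D₀, h' (f a) ≠ d := fun a ha d hd h'' => by
    rw [hh'.eq_comm] at h''
    exact hf.notMem a ha (h'' ▸ hD₀D' d hd)
  have hfar : ∀ a ∈ P, ∀ b ∈ P, f a ≠ h' (f b) := fun a ha b hb h' => hf.ne b hb a ha h'.symm
  obtain ⟨x', hx'X, hx'P, hx'f, hx'off⟩ : ∃ x' : V → V, (∀ a ∈ X, x' a = x a) ∧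
      (∀ a ∈ P, x' a = f a) ∧ (∀ a ∈ P, x' (f a) = a) ∧
      ∀ a, a ∉ X → a ∉ P → (∀ b ∈ P, a ≠ f b) → x' a = a := by
    refine ⟨fun a => if a ∈ X then x a else if a ∈ P then f a else
      if hb : ∃ b ∈ P, a = f b then hb.choose else a, ?_, ?_, ?_, ?_⟩
    · intro a ha
      simp [ha]
    · intro a ha
      simp [ha, hPX a ha]
    · intro a ha
      have h₁ : f a ∉ X := fun h' => hfD a ha _ (hXD₀ _ h') rfl
      have h₂ : f a ∉ P := fun h' => hfD a ha _ (hPD₀ _ h') rfl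
      have hb : ∃ b ∈ P, f a = f b := ⟨a, ha, rfl⟩
      simp only [h₁, h₂, if_false, dif_pos hb]
      exact (hf.inj a ha _ hb.choose_spec.1 hb.choose_spec.2).symm
    · intro a haX haP ha
      have hb : ¬ ∃ b ∈ P, a = f b := fun ⟨b, hb, hab⟩ => ha b hb hab
      simp only [haX, haP, if_false, dif_neg hb]
  obtain ⟨z', hz'f, hz'h, hz'off⟩ : ∃ z' : V → V, (∀ a ∈ P, z' (f a) = f (z a)) ∧
      (∀ a ∈ P, z' (h' (f a)) = h' (f (z a))) ∧
      ∀ a, (∀ b ∈ P, a ≠ f b) → (∀ b ∈ P, a ≠ h' (f b)) → z' a = z a := by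
    refine ⟨fun a => if hb : ∃ b ∈ P, a = f b then f (z hb.choose) else
      if hb : ∃ b ∈ P, a = h' (f b) then h' (f (z hb.choose)) else z a, ?_, ?_, ?_⟩
    · intro a ha
      have hb : ∃ b ∈ P, f a = f b := ⟨a, ha, rfl⟩
      simp only [dif_pos hb]
      rw [← hf.inj a ha _ hb.choose_spec.1 hb.choose_spec.2]
    · intro a ha
      have hb : ¬ ∃ b ∈ P, h' (f a) = f b := fun ⟨b, hb, hab⟩ => hf.ne a ha b hb hab
      have hb' : ∃ b ∈ P, h' (f a) = h' (f b) := ⟨a, ha, rfl⟩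
      simp only [dif_neg hb, dif_pos hb']
      rw [← hf.inj a ha _ hb'.choose_spec.1 (h'.injective hb'.choose_spec.2)]
    · intro a ha ha'
      have hb : ¬ ∃ b ∈ P, a = f b := fun ⟨b, hb, hab⟩ => ha b hb hab
      have hb' : ¬ ∃ b ∈ P, a = h' (f b) := fun ⟨b, hb, hab⟩ => ha' b hb hab
      simp only [dif_neg hb, dif_neg hb']
  have hz'D : ∀ a ∈ D₀, z' a = z a := fun a ha =>
    hz'off a (fun b hb h' => hfD b hb a ha h'.symm) (fun b hb h' => hfD' b hb a ha h'.symm)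
  have hx'h : ∀ a ∈ P, x' (h' (f a)) = h' (f a) := fun a ha =>
    hx'off _ (fun h'' => hfD' a ha _ (hXD₀ _ h'') rfl) (fun h'' => hfD' a ha _ (hPD₀ _ h'') rfl)
      fun b hb => hf.ne a ha b hb
  -- Every vertex lies in one of the five regions on which `x'` and `z'` are described.
  have hcases : ∀ a, a ∈ X ∨ a ∈ P ∨ (∃ b ∈ P, a = f b) ∨ (∃ b ∈ P, a = h' (f b)) ∨
      (a ∉ X ∧ a ∉ P ∧ (∀ b ∈ P, a ≠ f b) ∧ ∀ b ∈ P, a ≠ h' (f b)) := by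
    intro a
    by_cases h₁ : a ∈ X
    · exact .inl h₁
    by_cases h₂ : a ∈ P
    · exact .inr (.inl h₂)
    by_cases h₃ : ∃ b ∈ P, a = f b
    · exact .inr (.inr (.inl h₃))
    by_cases h₄ : ∃ b ∈ P, a = h' (f b)
    · exact .inr (.inr (.inr (.inl h₄)))
    · push Not at h₃ h₄
      exact .inr (.inr (.inr (.inr ⟨h₁, h₂, h₃, h₄⟩)))
  have hxf : ∀ a ∈ X, ∀ b ∈ P, G.Adj (x a) (f b) ↔ G.Adj a b := by
    intro a ha b hb
    rw [G.adj_comm, hf.adj_base b hb _ (hD₀D _ (hXD₀ _ (hx.apply_mem ha))), hx.invol, G.adj_comm]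
    exact and_iff_right (hx.apply_mem ha)
  have hxf' : ∀ a ∈ X, ∀ b ∈ P, G.Adj (x a) b ↔ G.Adj a (f b) := by
    intro a ha b hb
    rw [← hxf _ (hx.apply_mem ha) b hb, hx.invol]
  have hff : ∀ a ∈ P, ∀ b ∈ P, ¬ G.Adj (f a) b := fun a ha b hb h' =>
    hPX b hb ((hf.adj_base a ha b (hD₀D _ (hPD₀ b hb))).1 h').1
  have hleft : G.IsPartialFlip v x' (X ∪ P ∪ P.image f) := by
    refine ⟨?_, ?_, by simp [hvX], by rw [hx'X v hvX, hx.fix], ?_, ?_, ?_⟩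
    · intro a
      rcases hcases a with ha | ha | ⟨b, hb, rfl⟩ | ⟨b, hb, rfl⟩ | ⟨ha₁, ha₂, ha₃, -⟩
      · rw [hx'X a ha, hx'X _ (hx.apply_mem ha), hx.invol]
      · rw [hx'P a ha, hx'f a ha]
      · rw [hx'f b hb, hx'P b hb]
      · rw [hx'h b hb, hx'h b hb]
      · rw [hx'off a ha₁ ha₂ ha₃, hx'off a ha₁ ha₂ ha₃]
    · intro a ha
      simp only [Finset.mem_union, Finset.mem_image, not_or, not_exists, not_and] at ha
      exact hx'off a ha.1.1 ha.1.2 fun b hb h' => ha.2 b hb h'.symm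
    · intro a ha hav
      simp only [Finset.mem_union, Finset.mem_image] at ha
      rcases ha with (ha | ha) | ⟨b, hb, rfl⟩
      · rw [hx'X a ha]
        exact hx.ne a ha hav
      · rw [hx'P a ha]
        exact hfD a ha a (hPD₀ a ha)
      · rw [hx'f b hb]
        exact (hfD b hb b (hPD₀ b hb)).symm
    · intro a ha b hb
      simp only [Finset.mem_union, Finset.mem_image] at ha hb
      rcases ha with (ha | ha) | ⟨a, ha, rfl⟩ <;> rcases hb with (hb | hb) | ⟨b, hb, rfl⟩
      · rw [hx'X a ha, hx'X b hb, hx.adj a ha b hb]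
      · rw [hx'X a ha, hx'P b hb, hxf a ha b hb]
      · rw [hx'X a ha, hx'f b hb, hxf' a ha b hb]
      · rw [hx'P a ha, hx'X b hb, G.adj_comm, hxf b hb a ha, G.adj_comm]
      · rw [hx'P a ha, hx'P b hb, hf.adj a ha b hb]
      · rw [hx'P a ha, hx'f b hb, G.adj_comm a]
        exact iff_of_false (hff a ha b hb) (hff b hb a ha)
      · rw [hx'f a ha, hx'X b hb, G.adj_comm, hxf' b hb a ha, G.adj_comm]
      · rw [hx'f a ha, hx'P b hb, G.adj_comm a]
        exact iff_of_false (hff b hb a ha) (hff a ha b hb)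
      · rw [hx'f a ha, hx'f b hb, hf.adj a ha b hb]
    · intro a
      rcases hcases a with ha | ha | ⟨b, hb, rfl⟩ | ⟨b, hb, rfl⟩ | ⟨ha₁, ha₂, ha₃, -⟩
      · rw [hx'X a ha]
        exact hx.not_adj a
      · rw [hx'P a ha, G.adj_comm]
        exact hff a ha a ha
      · rw [hx'f b hb]
        exact hff b hb b hb
      · rw [hx'h b hb]
        exact G.irrefl
      · rw [hx'off a ha₁ ha₂ ha₃]
        exact G.irrefl
  have hzadj : ∀ a ∈ Z, ∀ b ∈ P, b ∈ Z → (G.Adj (z a) (f (z b)) ↔ G.Adj a (f b)) := by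
    intro a ha b hb hbZ
    rw [G.adj_comm, hf.adj_base _ (hPz b hb) _ (hD₀D _ (hZD₀ _ (hz.apply_mem ha))), G.adj_comm a,
      hf.adj_base b hb a (hD₀D _ (hZD₀ _ ha)), hxz, hz.adj b hbZ _ (hZx a ha)]
    exact and_congr_left' ⟨fun h' => hz.invol a ▸ hXz _ h', hXz a⟩
  have hzadj' : ∀ a ∈ Z, ∀ b ∈ P, b ∈ Z → (G.Adj (z a) (h' (f (z b))) ↔ G.Adj a (h' (f b))) := by
    intro a ha b hb hbZ
    rw [← hh'.adj_comm, ← hh'.adj_comm, ← hzh, hzadj _ (hZh a ha) b hb hbZ]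
  have hfz : ∀ a ∈ P, a ∈ Z → ∀ b ∈ P, b ∈ Z → (G.Adj (f (z a)) (f (z b)) ↔ G.Adj (f a) (f b)) := by
    intro a ha haZ b hb hbZ
    rw [hf.adj _ (hPz a ha) _ (hPz b hb), hz.adj a haZ b hbZ, hf.adj a ha b hb]
  let Q := (P ∩ Z).image f
  have hright : G.IsPartialFlip v z' (Z ∪ Q ∪ Q.image h') := by
    have hmem : ∀ a, a ∈ Z ∪ Q ∪ Q.image h' ↔
        a ∈ Z ∨ (∃ b ∈ P, b ∈ Z ∧ a = f b) ∨ ∃ b ∈ P, b ∈ Z ∧ a = h' (f b) := by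
      intro a
      simp only [Q, Finset.mem_union, Finset.mem_image, Finset.mem_inter]
      constructor
      · rintro ((ha | ⟨b, hb, rfl⟩) | ⟨_, ⟨b, hb, rfl⟩, rfl⟩)
        · exact .inl ha
        · exact .inr (.inl ⟨b, hb.1, hb.2, rfl⟩)
        · exact .inr (.inr ⟨b, hb.1, hb.2, rfl⟩)
      · rintro (ha | ⟨b, hb, hb', rfl⟩ | ⟨b, hb, hb', rfl⟩)
        · exact .inl (.inl ha)
        · exact .inl (.inr ⟨b, ⟨hb, hb'⟩, rfl⟩)
        · exact .inr ⟨_, ⟨b, ⟨hb, hb'⟩, rfl⟩, rfl⟩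
    have hregion : ∀ a, a ∈ D₀ ∨ (∃ b ∈ P, a = f b) ∨ (∃ b ∈ P, a = h' (f b)) ∨
        (a ∉ Z ∧ z' a = a) := by
      intro a
      rcases hcases a with ha | ha | ha | ha | ⟨ha₁, ha₂, ha₃, ha₄⟩
      · exact .inl (hXD₀ a ha)
      · exact .inl (hPD₀ a ha)
      · exact .inr (.inl ha)
      · exact .inr (.inr (.inl ha))
      · have haZ : a ∉ Z := fun h' => ha₂ (hZP a h' ha₁)
        exact .inr (.inr (.inr ⟨haZ, by rw [hz'off a ha₃ ha₄, hz.off a haZ]⟩))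
    have hD₀z : ∀ a ∈ D₀, z a ∈ D₀ := by
      intro a ha
      simp only [D₀, Finset.mem_union] at ha ⊢
      rcases ha with (ha | ha) | ha
      · exact .inl (.inl (hXz a ha))
      · exact .inl (.inr (hz.apply_mem ha))
      · exact .inr (hPz a ha)
    refine ⟨?_, ?_, by simp [hz.mem], by rw [hz'D v (hXD₀ v hvX), hz.fix], ?_, ?_, ?_⟩
    · intro a
      rcases hregion a with ha | ⟨b, hb, rfl⟩ | ⟨b, hb, rfl⟩ | ⟨-, ha⟩
      · rw [hz'D a ha, hz'D _ (hD₀z a ha), hz.invol]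
      · rw [hz'f b hb, hz'f _ (hPz b hb), hz.invol]
      · rw [hz'h b hb, hz'h _ (hPz b hb), hz.invol]
      · rw [ha, ha]
    · intro a ha
      rw [hmem] at ha
      push Not at ha
      rcases hregion a with ha' | ⟨b, hb, rfl⟩ | ⟨b, hb, rfl⟩ | ⟨-, ha'⟩
      · rw [hz'D a ha', hz.off a ha.1]
      · rw [hz'f b hb, hz.off b fun hbZ => ha.2.1 b hb hbZ rfl]
      · rw [hz'h b hb, hz.off b fun hbZ => ha.2.2 b hb hbZ rfl]
      · exact ha'
    · have hPv : ∀ b ∈ P, b ∈ Z → z b ≠ b := fun b hb hbZ =>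
        hz.ne b hbZ fun h' => hPX b hb (h' ▸ hvX)
      intro a ha hav
      rw [hmem] at ha
      rcases ha with ha | ⟨b, hb, hbZ, rfl⟩ | ⟨b, hb, hbZ, rfl⟩
      · rw [hz'D a (hZD₀ a ha)]
        exact hz.ne a ha hav
      · rw [hz'f b hb]
        exact fun h' => hPv b hb hbZ (hf.inj _ (hPz b hb) b hb h')
      · rw [hz'h b hb]
        exact fun h'' => hPv b hb hbZ (hf.inj _ (hPz b hb) b hb (h'.injective h''))
    · have hfh : ∀ a ∈ P, ∀ b ∈ P, ¬ G.Adj (f a) (h' (f b)) := fun a ha b hb h' =>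
        hf.not_adj b hb a ha h'.symm
      intro a ha b hb
      rw [hmem] at ha hb
      rcases ha with ha | ⟨a, ha, haZ, rfl⟩ | ⟨a, ha, haZ, rfl⟩ <;>
        rcases hb with hb | ⟨b, hb, hbZ, rfl⟩ | ⟨b, hb, hbZ, rfl⟩
      · rw [hz'D a (hZD₀ a ha), hz'D b (hZD₀ b hb), hz.adj a ha b hb]
      · rw [hz'D a (hZD₀ a ha), hz'f b hb, hzadj a ha b hb hbZ]
      · rw [hz'D a (hZD₀ a ha), hz'h b hb, hzadj' a ha b hb hbZ]
      · rw [hz'f a ha, hz'D b (hZD₀ b hb), G.adj_comm, hzadj b hb a ha haZ, G.adj_comm]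
      · rw [hz'f a ha, hz'f b hb, hfz a ha haZ b hb hbZ]
      · rw [hz'f a ha, hz'h b hb]
        exact iff_of_false (hfh _ (hPz a ha) _ (hPz b hb)) (hfh a ha b hb)
      · rw [hz'h a ha, hz'D b (hZD₀ b hb), G.adj_comm, hzadj' b hb a ha haZ, G.adj_comm]
      · rw [hz'h a ha, hz'f b hb]
        exact iff_of_false (hf.not_adj _ (hPz a ha) _ (hPz b hb)) (hf.not_adj a ha b hb)
      · rw [hz'h a ha, hz'h b hb, h'.map_adj_iff, h'.map_adj_iff, hfz a ha haZ b hb hbZ]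
    · intro a
      rcases hregion a with ha | ⟨b, hb, rfl⟩ | ⟨b, hb, rfl⟩ | ⟨-, ha⟩
      · rw [hz'D a ha]
        exact hz.not_adj a
      · rw [hz'f b hb, hf.adj b hb _ (hPz b hb)]
        exact hz.not_adj b
      · rw [hz'h b hb, h'.map_adj_iff, hf.adj b hb _ (hPz b hb)]
        exact hz.not_adj b
      · rw [ha]
        exact G.irrefl
  refine ⟨x', _, z', _, ⟨hleft, hright, ?_, ?_, ?_⟩, ⟨?_, hx'X⟩,
    ⟨?_, fun a ha => hz'D a (hZD₀ a ha)⟩, ?_⟩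
  · intro a
    rcases hcases a with ha | ha | ⟨b, hb, rfl⟩ | ⟨b, hb, rfl⟩ | ⟨ha₁, ha₂, ha₃, ha₄⟩
    · rw [hz'D a (hXD₀ a ha), hx'X a ha, hx'X _ (hXz a ha),
        hz'D _ (hXD₀ _ (hx.apply_mem ha)), hxz]
    · rw [hz'D a (hPD₀ a ha), hx'P a ha, hx'P _ (hPz a ha), hz'f a ha]
    · rw [hz'f b hb, hx'f _ (hPz b hb), hx'f b hb, hz'D b (hPD₀ b hb)]
    · rw [hz'h b hb, hx'h _ (hPz b hb), hx'h b hb, hz'h b hb]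
    · have haz : z' a = a := by
        rw [hz'off a ha₃ ha₄, hz.off a fun h' => ha₂ (hZP a h' ha₁)]
      rw [haz, hx'off a ha₁ ha₂ ha₃, haz]
  · intro a
    rcases hcases a with ha | ha | ⟨b, hb, rfl⟩ | ha
    · rw [hx'X a ha, hx'X _ (hXh a ha), hxh]
    · rw [hx'P a ha, hx'P _ (hPh a ha), hf.comm a ha]
    · rw [← hf.comm b hb, hx'f _ (hPh b hb), hx'f b hb]
    · have ha' : a ∉ X ∧ a ∉ P ∧ ∀ b ∈ P, a ≠ f b := by
        rcases ha with ⟨b, hb, rfl⟩ | ⟨ha₁, ha₂, ha₃, -⟩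
        · exact ⟨fun h'' => hfD' b hb _ (hXD₀ _ h'') rfl, fun h'' => hfD' b hb _ (hPD₀ _ h'') rfl,
            hf.ne b hb⟩
        · exact ⟨ha₁, ha₂, ha₃⟩
      obtain ⟨ha₁, ha₂, ha₃⟩ := ha'
      rw [hx'off a ha₁ ha₂ ha₃, hx'off _ (fun h' => ha₁ (hh.invol a ▸ hXh _ h'))
        (fun h' => ha₂ (hh.invol a ▸ hPh _ h'))]
      intro b hb h''
      rw [hh.eq_comm, ← hf.comm b hb] at h''
      exact ha₃ _ (hPh b hb) h''
  · intro a
    by_cases h₁ : ∃ b ∈ P, a = f b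
    · obtain ⟨b, hb, rfl⟩ := h₁
      rw [hz'h b hb, hz'f b hb]
    by_cases h₂ : ∃ b ∈ P, a = h' (f b)
    · obtain ⟨b, hb, rfl⟩ := h₂
      rw [hz'h b hb, hh'.invol, hh'.invol, hz'f b hb]
    push Not at h₁ h₂
    rw [hz'off a h₁ h₂, hz'off, hzh]
    · intro b hb h''
      rw [hh'.eq_comm] at h''
      exact h₂ b hb h''
    · exact fun b hb h'' => h₁ b hb (h'.injective h'')
  · exact fun a ha => by simp [ha]
  · exact fun a ha => by simp [ha]
  · by_cases hp : p ∈ X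
    · simp [hp]
    · simp [P, hp]

end IsLink

/-- Generic pairs of flips at `v` are linked by two flips at `v`. -/
theorem IsHenson.exists_link [Countable V] (hG : G.IsHenson n) (hh : G.IsFlip v h)
    (hh' : G.IsFlip v h') (hgen : G.IsGeneric n h h') :
    ∃ x z : G ≃g G, G.IsFlip v x ∧ G.IsFlip v z ∧ Commute h x ∧ Commute x z ∧ Commute z h' := by
  let C := {c : ((V → V) × Finset V) × (V → V) × Finset V //
    G.IsLink v h h' c.1.1 c.1.2 c.2.1 c.2.2}
  let r : C → C → Prop := fun c c' =>
    (c.1.1.2 ⊆ c'.1.1.2 ∧ ∀ p ∈ c.1.1.2, c'.1.1.1 p = c.1.1.1 p) ∧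
    (c.1.2.2 ⊆ c'.1.2.2 ∧ ∀ p ∈ c.1.2.2, c'.1.2.1 p = c.1.2.1 p)
  let D : V ⊕ V → C → Prop := fun i c => match i with
    | .inl p => p ∈ c.1.1.2
    | .inr p => p ∈ c.1.2.2
  obtain ⟨s, -, hs, hsD⟩ := exists_seq_of_dense (r := r)
    (fun c => ⟨⟨subset_rfl, fun _ _ => rfl⟩, ⟨subset_rfl, fun _ _ => rfl⟩⟩)
    (fun a b c hab hbc => ⟨⟨hab.1.1.trans hbc.1.1, fun p hp => by
      rw [hbc.1.2 p (hab.1.1 hp), hab.1.2 p hp]⟩, ⟨hab.2.1.trans hbc.2.1, fun p hp => by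
      rw [hbc.2.2 p (hab.2.1 hp), hab.2.2 p hp]⟩⟩) D
    (by
      rintro (p | p) ⟨⟨⟨x, X⟩, z, Z⟩, hl⟩
      · obtain ⟨x', X', z', Z', hl', hX, hZ, hp⟩ := hl.extend hG hh hh' hgen p
        exact ⟨⟨⟨⟨x', X'⟩, z', Z'⟩, hl'⟩, ⟨hX, hZ⟩, hp⟩
      · obtain ⟨z', Z', x', X', hl', hZ, hX, hp⟩ := hl.symm.extend hG hh' hh hgen.symm p
        exact ⟨⟨⟨⟨x', X'⟩, z', Z'⟩, hl'.symm⟩, ⟨hX, hZ⟩, hp⟩)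
    ⟨⟨⟨id, {v}⟩, id, {v}⟩, IsPartialFlip.singleton G v, IsPartialFlip.singleton G v,
      fun _ => rfl, fun _ => rfl, fun _ => rfl⟩
  have hX : ∀ p, ∃ i, p ∈ (s i).1.1.2 := fun p => hsD (.inl p)
  have hZ : ∀ p, ∃ i, p ∈ (s i).1.2.2 := fun p => hsD (.inr p)
  obtain ⟨x, hx, hxs⟩ := IsPartialFlip.exists_isFlip (fun i => (s i).2.left)
    (fun i j hij => (hs i j hij).1.1) (fun i j hij => (hs i j hij).1.2) hX
  obtain ⟨z, hz, hzs⟩ := IsPartialFlip.exists_isFlip (fun i => (s i).2.right)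
    (fun i j hij => (hs i j hij).2.1) (fun i j hij => (hs i j hij).2.2) hZ
  choose I hI using hX
  choose J hJ using hZ
  have hxs' : ∀ p, ∀ i, I p ≤ i → x p = (s i).1.1.1 p := fun p i hi =>
    hxs i p ((hs _ _ hi).1.1 (hI p))
  have hzs' : ∀ p, ∀ i, J p ≤ i → z p = (s i).1.2.1 p := fun p i hi =>
    hzs i p ((hs _ _ hi).2.1 (hJ p))
  refine ⟨x, z, hx, hz, ?_, ?_, ?_⟩
  · ext p
    change h (x p) = x (h p)
    let i := max (I p) (I (h p))
    rw [hxs' p i (le_max_left _ _), hxs' (h p) i (le_max_right _ _), (s i).2.comm_left]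
  · ext p
    change x (z p) = z (x p)
    let i := max (max (I p) (I (z p))) (max (J p) (J (x p)))
    rw [hxs' (z p) i (by simp [i]), hzs' (x p) i (by simp [i]), hxs' p i (by simp [i]),
      hzs' p i (by simp [i]), (s i).2.comm]
  · ext p
    change z (h' p) = h' (z p)
    let i := max (J p) (J (h' p))
    rw [hzs' p i (le_max_left _ _), hzs' (h' p) i (le_max_right _ _), (s i).2.comm_right]

end SimpleGraph

/-- The elements `u` for which the conjugate of `h` by `u` can be reached from `h` by six steps
between commuting conjugates of `h`. -/
def linkedSet {Γ : Type*} [Group Γ] (h : Γ) : Set Γ :=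
  {u | ∃ a b c d e : Γ, Commute (1 * h * 1⁻¹) (a * h * a⁻¹) ∧
    Commute (a * h * a⁻¹) (b * h * b⁻¹) ∧ Commute (b * h * b⁻¹) (c * h * c⁻¹) ∧
    Commute (c * h * c⁻¹) (d * h * d⁻¹) ∧ Commute (d * h * d⁻¹) (e * h * e⁻¹) ∧
    Commute (e * h * e⁻¹) (u * h * u⁻¹)}

theorem map_mem_linkedSet {Γ : Type*} [Group Γ] (α : MulAut Γ) {h u : Γ} (hu : u ∈ linkedSet h) :
    α u ∈ linkedSet (α h) := by
  obtain ⟨a, b, c, d, e, h₁, h₂, h₃, h₄, h₅, h₆⟩ := hu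
  refine ⟨α a, α b, α c, α d, α e, ?_⟩
  have key : ∀ {y w : Γ}, Commute (y * h * y⁻¹) (w * h * w⁻¹) →
      Commute (α y * α h * (α y)⁻¹) (α w * α h * (α w)⁻¹) := fun hc => by
    simpa using hc.map α
  exact ⟨by simpa using key h₁, key h₂, key h₃, key h₄, key h₅, key h₆⟩

theorem analyticSet_linkedSet {Γ : Type*} [Group Γ] [TopologicalSpace Γ] [IsTopologicalGroup Γ]
    [PolishSpace Γ] (h : Γ) : AnalyticSet (linkedSet h) := by
  let S : Set (Γ × Γ × Γ × Γ × Γ × Γ) := {p | Commute (1 * h * 1⁻¹) (p.2.1 * h * p.2.1⁻¹) ∧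
    Commute (p.2.1 * h * p.2.1⁻¹) (p.2.2.1 * h * p.2.2.1⁻¹) ∧
    Commute (p.2.2.1 * h * p.2.2.1⁻¹) (p.2.2.2.1 * h * p.2.2.2.1⁻¹) ∧
    Commute (p.2.2.2.1 * h * p.2.2.2.1⁻¹) (p.2.2.2.2.1 * h * p.2.2.2.2.1⁻¹) ∧
    Commute (p.2.2.2.2.1 * h * p.2.2.2.2.1⁻¹) (p.2.2.2.2.2 * h * p.2.2.2.2.2⁻¹) ∧
    Commute (p.2.2.2.2.2 * h * p.2.2.2.2.2⁻¹) (p.1 * h * p.1⁻¹)}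
  have key : ∀ {f g : Γ × Γ × Γ × Γ × Γ × Γ → Γ}, Continuous f → Continuous g →
      IsClosed {p | Commute (f p * h * (f p)⁻¹) (g p * h * (g p)⁻¹)} := fun hf hg =>
    isClosed_eq (by fun_prop) (by fun_prop)
  have hS : IsClosed S :=
    (key continuous_const (by fun_prop)).inter <| (key (by fun_prop) (by fun_prop)).inter <|
      (key (by fun_prop) (by fun_prop)).inter <| (key (by fun_prop) (by fun_prop)).inter <|
      (key (by fun_prop) (by fun_prop)).inter (key (by fun_prop) (by fun_prop))
  have himage : linkedSet h = Prod.fst '' S := by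
    ext u
    constructor
    · rintro ⟨a, b, c, d, e, hu⟩
      exact ⟨(u, a, b, c, d, e), hu, rfl⟩
    · rintro ⟨⟨u, a, b, c, d, e⟩, hu, rfl⟩
      exact ⟨a, b, c, d, e, hu⟩
  rw [himage]
  exact hS.analyticSet.image_of_continuous continuous_fst

namespace SimpleGraph
variable {V : Type*} {G : SimpleGraph V} {n : ℕ} {v : V} {h h' : G ≃g G}

theorem IsFlip.conj (hh : G.IsFlip v h) (u : G ≃g G) : G.IsFlip (u v) (u * h * u⁻¹) := by
  have hu : ∀ p, (u * h * u⁻¹) p = u (h (u.symm p)) := fun _ => rfl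
  refine ⟨fun p => ?_, ?_, fun p hp => ?_, fun p => ?_⟩
  · simp [hu, hh.invol]
  · simp [hu, hh.fix]
  · rw [hu, ← RelIso.eq_symm_apply] at hp
    rw [← hh.eq_of_fix _ hp, RelIso.apply_symm_apply]
  · obtain ⟨p, rfl⟩ := u.surjective p
    rw [hu, RelIso.symm_apply_apply, u.map_adj_iff]
    exact hh.not_adj p

theorem IsFlip.eq_of_commute {w : V} (hh : G.IsFlip v h) (hh' : G.IsFlip w h')
    (hc : Commute h h') : v = w := by
  refine hh'.eq_of_fix v (hh.eq_of_fix _ ?_)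
  have : h (h' v) = h' (h v) := DFunLike.congr_fun hc.eq v
  rw [this, hh.fix]

/-- The stabilizer of a vertex. -/
def vertexStabilizer (G : SimpleGraph V) (v : V) : Subgroup (G ≃g G) where
  carrier := {g | g v = v}
  mul_mem' {a b} ha hb := by
    change a (b v) = v
    rw [show b v = v from hb, show a v = v from ha]
  one_mem' := rfl
  inv_mem' {a} ha := by
    change a.symm v = v
    rw [RelIso.symm_apply_eq]
    exact Eq.symm ha

namespace IsHenson

theorem mem_linkedSet_iff [Countable V] (hG : G.IsHenson n) (hh : G.IsFlip v h) (u : G ≃g G) :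
    u ∈ linkedSet h ↔ u v = v := by
  constructor
  · rintro ⟨a, b, c, d, e, h₁, h₂, h₃, h₄, h₅, h₆⟩
    rw [← (hh.conj e).eq_of_commute (hh.conj u) h₆, ← (hh.conj d).eq_of_commute (hh.conj e) h₅,
      ← (hh.conj c).eq_of_commute (hh.conj d) h₄, ← (hh.conj b).eq_of_commute (hh.conj c) h₃,
      ← (hh.conj a).eq_of_commute (hh.conj b) h₂, ← (hh.conj 1).eq_of_commute (hh.conj a) h₁]
    rfl
  · intro hu
    have hhu : G.IsFlip v (u * h * u⁻¹) := by simpa only [hu] using hh.conj u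
    obtain ⟨k, hk, hgen⟩ := hG.exists_isFlip_isGeneric v fun b => if b then h else u * h * u⁻¹
    obtain ⟨x, z, hx, hz, h₁, h₂, h₃⟩ := hG.exists_link hh hk (hgen true)
    obtain ⟨x', z', hx', hz', h₄, h₅, h₆⟩ := hG.exists_link hk hhu (hgen false).symm
    have hconj : ∀ {y : G ≃g G}, G.IsFlip v y → ∃ w : G ≃g G, y = w * h * w⁻¹ := by
      intro y hy
      obtain ⟨w, -, hw⟩ := hG.exists_conj_of_isFlip hh hy
      refine ⟨w, ?_⟩
      rw [eq_mul_inv_iff_mul_eq]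
      ext p
      exact (hw p).symm
    obtain ⟨a, rfl⟩ := hconj hx
    obtain ⟨b, rfl⟩ := hconj hz
    obtain ⟨c, rfl⟩ := hconj hk
    obtain ⟨d, rfl⟩ := hconj hx'
    obtain ⟨e, rfl⟩ := hconj hz'
    exact ⟨a, b, c, d, e, by simpa using h₁, h₂, h₃, h₄, h₅, h₆⟩

/-- Images of vertex stabilizers under abstract automorphisms are open. -/
theorem exists_finset_of_mulAut [Countable V] (hG : G.IsHenson n) (α : MulAut (G ≃g G)) (v : V) :
    ∃ F : Finset V, ∀ g : G ≃g G, (∀ a ∈ F, g a = a) → α⁻¹ g v = v := by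
  classical
  let _ : TopologicalSpace V := ⊥
  have : DiscreteTopology V := ⟨rfl⟩
  let H := (G.vertexStabilizer v).comap (α⁻¹).toMonoidHom
  have hmem : ∀ g, g ∈ H ↔ α⁻¹ g v = v := fun _ => Iff.rfl
  have : Countable ((G ≃g G) ⧸ H) := by
    refine Function.Injective.countable (f := fun q : (G ≃g G) ⧸ H => α⁻¹ q.out v) ?_
    intro q q' hqq
    rw [← QuotientGroup.out_eq' q, ← QuotientGroup.out_eq' q', QuotientGroup.eq, hmem, map_mul,
      map_inv]
    change (α⁻¹ q.out).symm (α⁻¹ q'.out v) = v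
    rw [RelIso.symm_apply_eq]
    exact hqq.symm
  obtain ⟨h, hh, -⟩ := hG.exists_isFlip_isGeneric v fun _ => 1
  have hH : (H : Set (G ≃g G)) = linkedSet (α h) := by
    ext g
    rw [SetLike.mem_coe, hmem, ← hG.mem_linkedSet_iff hh]
    constructor
    · intro hg
      simpa using map_mem_linkedSet α hg
    · intro hg
      simpa using map_mem_linkedSet α⁻¹ hg
  exact exists_finset_of_isOpen (H.isOpen_of_analyticSet (hH ▸ analyticSet_linkedSet _))

theorem eq_of_vertexStabilizer_le (hG : G.IsHenson n) {w : V}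
    (hle : ∀ g : G ≃g G, g v = v → g w = w) : v = w := by
  by_contra hvw
  obtain ⟨k, hk, hk'⟩ := hG.exists_free_move {v} {w} {w}
  exact (hk' w (by simp) (by simpa using Ne.symm hvw)).1 (by simp [hle k (hk v (by simp))])

theorem mem_of_fixes_image {H : Subgroup (G ≃g G)} {F : Finset V} [DecidableEq V]
    (hF : ∀ g : G ≃g G, (∀ a ∈ F, g a = a) → g ∈ H) {t : G ≃g G}
    (ht : ∀ g ∈ H, t * g * t⁻¹ ∈ H) (g : G ≃g G) (hg : ∀ a ∈ F.image t, g a = a) : g ∈ H := by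
  have : t⁻¹ * g * t ∈ H := hF _ fun a ha => by
    change t.symm (g (t a)) = a
    rw [hg _ (Finset.mem_image_of_mem _ ha), RelIso.symm_apply_apply]
  simpa [mul_assoc] using ht _ this

/-- An abstract automorphism maps vertex stabilizers into vertex stabilizers. -/
theorem exists_vertexStabilizer_le [Countable V] (hG : G.IsHenson n) (α : MulAut (G ≃g G)) (v : V) :
    ∃ w, ∀ g : G ≃g G, g v = v → α g w = w := by
  classical
  let H := (G.vertexStabilizer v).comap (α⁻¹).toMonoidHom
  have hmem : ∀ g, g ∈ H ↔ α⁻¹ g v = v := fun _ => Iff.rfl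
  have hαmem : ∀ g : G ≃g G, g v = v → α g ∈ H := fun g hg => by
    rw [hmem, MulAut.inv_apply_self, hg]
  obtain ⟨F, hF, hmin⟩ : ∃ F : Finset V, (∀ g : G ≃g G, (∀ a ∈ F, g a = a) → g ∈ H) ∧
      ∀ F' : Finset V, (∀ g : G ≃g G, (∀ a ∈ F', g a = a) → g ∈ H) → F.card ≤ F'.card := by
    have hex : ∃ i, ∃ F : Finset V, F.card = i ∧ ∀ g : G ≃g G, (∀ a ∈ F, g a = a) → g ∈ H := by
      obtain ⟨F, hF⟩ := hG.exists_finset_of_mulAut α v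
      exact ⟨_, F, rfl, hF⟩
    obtain ⟨F, hFc, hF⟩ := Nat.find_spec hex
    exact ⟨F, hF, fun F' hF' => hFc.trans_le (Nat.find_min' hex ⟨F', rfl, hF'⟩)⟩
  have hFimage : ∀ g ∈ H, F ⊆ F.image g := by
    intro g hg
    have himage : ∀ y : G ≃g G, (∀ a ∈ F.image g, y a = a) → y ∈ H :=
      mem_of_fixes_image hF fun y hy => H.mul_mem (H.mul_mem hg hy) (H.inv_mem hg)
    have hinter := hmin (F ∩ F.image g) (hG.mem_of_fixes_inter hF himage)
    exact Finset.inter_eq_left.1 (Finset.eq_of_subset_of_card_le Finset.inter_subset_left hinter)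
  have hFinv : ∀ g ∈ H, ∀ a ∈ F, g a ∈ F := by
    intro g hg a ha
    obtain ⟨b, hb, hba⟩ := Finset.mem_image.1 (hFimage _ (H.inv_mem hg) ha)
    rw [← hba]
    change g (g.symm b) ∈ F
    rwa [RelIso.apply_symm_apply]
  obtain ⟨w, hw⟩ : F.Nonempty := by
    rw [Finset.nonempty_iff_ne_empty]
    rintro rfl
    obtain ⟨k, -, hk⟩ := hG.exists_free_move ∅ {v} {v}
    have := hF (α k) (by simp)
    rw [hmem, MulAut.inv_apply_self] at this
    exact (hk v (by simp) (by simp)).1 (by simp [this])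
  let K : Subgroup (G ≃g G) := G.vertexStabilizer v ⊓
    (⨅ a : F, G.vertexStabilizer (a : V)).comap α.toMonoidHom
  have hK : ∀ g, g ∈ K ↔ g v = v ∧ ∀ a ∈ F, α g a = a := by
    intro g
    simp only [K, Subgroup.mem_inf, Subgroup.mem_comap, Subgroup.mem_iInf, Subtype.forall]
    exact Iff.rfl
  have hnormal : ∀ t : G ≃g G, t v = v → ∀ g ∈ K, t * g * t⁻¹ ∈ K := by
    intro t ht g hg
    rw [hK] at hg
    have ht' : t.symm v = v := by
      rw [RelIso.symm_apply_eq]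
      exact ht.symm
    refine (hK _).2 ⟨?_, fun a ha => ?_⟩
    · change t (g (t.symm v)) = v
      rw [ht', hg.1, ht]
    · rw [map_mul, map_mul, map_inv]
      change α t (α g ((α t)⁻¹ a)) = a
      rw [hg.2 _ (hFinv _ (H.inv_mem (hαmem t ht)) a ha)]
      exact (α t).apply_symm_apply a
  choose E hE using fun a => hG.exists_finset_of_mulAut α⁻¹ a
  let F₁ := insert v (F.biUnion E)
  have hF₁ : ∀ g : G ≃g G, (∀ a ∈ F₁, g a = a) → g ∈ K := by
    intro g hg
    refine (hK g).2 ⟨hg v (by simp [F₁]), fun a ha => ?_⟩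
    have := hE a g fun b hb => hg b (by
      simp only [F₁, Finset.mem_insert, Finset.mem_biUnion]
      exact .inr ⟨a, ha, hb⟩)
    rwa [inv_inv] at this
  obtain ⟨t, ht, ht'⟩ := hG.exists_free_move {v} F₁ F₁
  have htv := ht v (by simp)
  refine ⟨w, fun g hg => ((hK g).1 ?_).2 w hw⟩
  refine hG.mem_of_fixes_inter hF₁ (mem_of_fixes_image hF₁ (hnormal t htv)) g fun a ha => ?_
  obtain ⟨ha₁, ha₂⟩ := Finset.mem_inter.1 ha
  obtain ⟨b, hb, rfl⟩ := Finset.mem_image.1 ha₂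
  by_cases hbv : b = v
  · rw [hbv, htv, hg]
  · exact absurd ha₁ (ht' b hb (by simpa using hbv)).1

theorem exists_isIndepSet (hG : G.IsHenson n) (hn : n ≠ 0) (k : ℕ) :
    ∃ t : Finset V, t.card = k ∧ ∀ a ∈ t, ∀ b ∈ t, ¬ G.Adj a b := by
  classical
  induction k with
  | zero => exact ⟨∅, by simp⟩
  | succ k ih =>
    obtain ⟨t, ht, hind⟩ := ih
    obtain ⟨q, hq, hqt⟩ := hG.exists_vertex t ∅ (by simpa using hn)
    refine ⟨insert q t, by rw [Finset.card_insert_of_notMem hq, ht], ?_⟩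
    intro a ha b hb hab
    rcases Finset.mem_insert.1 ha with rfl | ha' <;>
      rcases Finset.mem_insert.1 hb with rfl | hb'
    · exact G.irrefl hab
    · exact (hqt b hb').1 hab
    · exact (hqt a ha').1 hab.symm
    · exact hind a ha' b hb' hab

theorem adj_of_adj_equivariant (hG : G.IsHenson n) (hn : n ≠ 0) (α : MulAut (G ≃g G)) {σ : V → V}
    (hσ : Function.Injective σ) (hequiv : ∀ g v, α g (σ v) = σ (g v)) {v w : V}
    (hadj : G.Adj (σ v) (σ w)) : G.Adj v w := by
  classical
  by_contra hvw
  have hne : v ≠ w := by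
    rintro rfl
    exact G.irrefl hadj
  have hall : ∀ a b, a ≠ b → ¬ G.Adj a b → G.Adj (σ a) (σ b) := by
    intro a b hab hab'
    obtain ⟨g, hg⟩ := hG.exists_aut {v, w} (fun p => if p = v then a else b)
      (by
        intro p hp q hq hpq
        simp only [Finset.coe_insert, Finset.coe_singleton, Set.mem_insert_iff,
          Set.mem_singleton_iff] at hp hq
        rcases hp with rfl | rfl <;> rcases hq with rfl | rfl
        · rfl
        · simp [hne.symm, hab] at hpq
        · simp [hne.symm, hab.symm] at hpq
        · rfl)
      (by
        intro p hp q hq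
        simp only [Finset.mem_insert, Finset.mem_singleton] at hp hq
        rcases hp with rfl | rfl <;> rcases hq with rfl | rfl
        · simp
        · simp [hne.symm, hab', hvw]
        · simp only [hne.symm, if_true, if_false]
          exact iff_of_false (fun h' => hab' h'.symm) (fun h' => hvw h'.symm)
        · simp)
    have hgv : g v = a := by simpa using hg v (by simp)
    have hgw : g w = b := by simpa [hne.symm] using hg w (by simp)
    rw [← hgv, ← hgw, ← hequiv, ← hequiv, (α g).map_adj_iff]
    exact hadj
  obtain ⟨t, ht, hind⟩ := hG.exists_isIndepSet hn (n + 1)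
  refine hG.cliqueFree (t.image σ) ⟨?_, by rw [Finset.card_image_of_injective _ hσ, ht]⟩
  intro a ha b hb hab
  simp only [Finset.coe_image, Set.mem_image, Finset.mem_coe] at ha hb
  obtain ⟨a, ha, rfl⟩ := ha
  obtain ⟨b, hb, rfl⟩ := hb
  exact hall a b (fun h' => hab (h' ▸ rfl)) (hind a ha b hb)

/-- Every abstract automorphism of the automorphism group of a Henson graph is inner. -/
theorem exists_eq_conj [Countable V] (hG : G.IsHenson n) (hn : n ≠ 0) (α : MulAut (G ≃g G)) :
    ∃ g : G ≃g G, α = MulAut.conj g := by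
  choose σ hσ using fun (β : MulAut (G ≃g G)) => hG.exists_vertexStabilizer_le β
  have hinv : ∀ β v, σ β⁻¹ (σ β v) = v := fun β v => Eq.symm <|
    hG.eq_of_vertexStabilizer_le fun g hg => by
      simpa using hσ β⁻¹ (σ β v) (β g) (hσ β v g hg)
  have hinv' : ∀ β v, σ β (σ β⁻¹ v) = v := fun β v => by simpa using hinv β⁻¹ v
  have huniq : ∀ β v w, (∀ g : G ≃g G, g v = v → β g w = w) → σ β v = w := by
    intro β v w hw
    refine hG.eq_of_vertexStabilizer_le fun g hg => ?_
    have := hw (β⁻¹ g) (by simpa [hinv] using hσ β⁻¹ (σ β v) g hg)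
    simpa using this
  have hequiv : ∀ β (g : G ≃g G) v, β g (σ β v) = σ β (g v) := by
    intro β g v
    refine (huniq β (g v) _ fun y hy => ?_).symm
    have := hσ β v (g⁻¹ * y * g) (by
      change g.symm (y (g v)) = v
      rw [hy, RelIso.symm_apply_apply])
    rw [map_mul, map_mul, map_inv] at this
    change (β g).symm (β y (β g (σ β v))) = σ β v at this
    rwa [RelIso.symm_apply_eq] at this
  have hadj : ∀ β v w, G.Adj (σ β v) (σ β w) → G.Adj v w := fun β v w =>
    hG.adj_of_adj_equivariant hn β (Function.LeftInverse.injective (hinv β)) (hequiv β)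
  let g : G ≃g G := ⟨⟨σ α, σ α⁻¹, hinv α, hinv' α⟩, @fun v w => ⟨hadj α v w, fun hvw =>
    hadj α⁻¹ _ _ (by simpa [hinv] using hvw)⟩⟩
  refine ⟨g, MulEquiv.ext fun y => ?_⟩
  rw [MulAut.conj_apply, eq_mul_inv_iff_mul_eq]
  ext v
  exact hequiv α y v

end IsHenson
end SimpleGraph

/-- For `m ≥ 3`, the `K_m`-free random graph `R(K_m)` (the Henson graph,
i.e. the countable universal homogeneous `K_m`-free graph) satisfies
`Out(Aut(R(K_m))) ≅ {e}`: every abstract group automorphism of its automorphism group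
is inner. -/
theorem stmt_6 (m : ℕ) (hm : 3 ≤ m) (V : Type*) [Countable V] [Infinite V]
    (G : SimpleGraph V) (hfree : G.CliqueFree m)
    (hhom : ∀ S T : Set V, S.Finite → T.Finite →
      ∀ e : G.induce S ≃g G.induce T, ∃ φ : G ≃g G, ∀ a : S, φ a = (e a : V))
    (huniv : ∀ (W : Type) (_ : Fintype W) (H : SimpleGraph W),
      H.CliqueFree m → Nonempty (H ↪g G)) :
    ∀ α : MulAut (G ≃g G), ∃ g : G ≃g G, α = MulAut.conj g := by
  obtain ⟨n, rfl⟩ : ∃ n, m = n + 1 := ⟨m - 1, by omega⟩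
  have hG : G.IsHenson n := ⟨hfree,
    fun S f => SimpleGraph.exists_aut_of_homogeneous hhom S.finite_toSet f,
    SimpleGraph.exists_vertex_of_universal hhom hfree huniv⟩
  exact hG.exists_eq_conj (by omega)
end

section
/- For k ≥ 2, the k-colored random graph R_k satisfies Out(Aut(R_k)) ≅ Sym(k), the symmetric group on the k colors. -/
/-- The automorphism group of an edge-colored complete graph `(V, c)`: permutations of the
vertices preserving the color of every edge. -/
def ColoredGraph.aut {V : Type*} {k : ℕ} (c : V → V → Fin k) : Subgroup (Equiv.Perm V) where
  carrier := {σ | ∀ u v : V, u ≠ v → c (σ u) (σ v) = c u v}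
  one_mem' := by intro u v _; simp
  mul_mem' := by
    intro σ τ hσ hτ u v huv
    have h1 : τ u ≠ τ v := fun h => huv (τ.injective h)
    have := hσ (τ u) (τ v) h1
    simpa [this] using hτ u v huv
  inv_mem' := by
    intro σ hσ u v huv
    have h1 : σ⁻¹ u ≠ σ⁻¹ v := fun h => huv (σ⁻¹.injective h)
    have := hσ (σ⁻¹ u) (σ⁻¹ v) h1
    simpa using this.symm

/-- A complete edge coloring that is symmetric, homogeneous (finite partial isomorphisms extend to
automorphisms) and realizes every one-point extension of a finite set of vertices. -/
structure ColoredGraph.IsRandom {V : Type*} {k : ℕ} (c : V → V → Fin k) : Prop where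
  symm : ∀ u v, c u v = c v u
  hom : ∀ (s : Finset V) (f : V → V), Set.InjOn f s →
    (∀ x ∈ s, ∀ y ∈ s, x ≠ y → c (f x) (f y) = c x y) →
      ∃ σ : ColoredGraph.aut c, ∀ x ∈ s, σ • x = f x
  ext : ∀ (s : Finset V) (τ : V → Fin k), ∃ z ∉ s, ∀ x ∈ s, c z x = τ x

namespace ColoredGraph

open scoped Classical

variable {V : Type*} {k : ℕ} {c : V → V → Fin k}

theorem aut_color (g : aut c) {u v : V} (h : u ≠ v) : c (g • u) (g • v) = c u v :=
  g.2 u v h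

theorem aut_ext {g h : aut c} (H : ∀ v : V, g • v = h • v) : g = h :=
  Subtype.ext (Equiv.ext H)

theorem isRandom_of_homogeneous_of_universal [NeZero k] (hsymm : ∀ u v : V, c u v = c v u)
    (hhom : ∀ S T : Set V, S.Finite → T.Finite → ∀ e : S ≃ T,
      (∀ u v : S, u ≠ v → c (e u : V) (e v : V) = c (u : V) (v : V)) →
        ∃ σ ∈ aut c, ∀ a : S, σ (a : V) = (e a : V))
    (huniv : ∀ (W : Type) (_ : Fintype W) (d : W → W → Fin k),
      (∀ u v : W, d u v = d v u) →
        ∃ f : W ↪ V, ∀ u v : W, u ≠ v → c (f u) (f v) = d u v) : IsRandom c := by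
  have hom : ∀ (s : Finset V) (f : V → V), Set.InjOn f s →
      (∀ x ∈ s, ∀ y ∈ s, x ≠ y → c (f x) (f y) = c x y) →
      ∃ σ : aut c, ∀ x ∈ s, σ • x = f x := by
    intro s f hf hc
    obtain ⟨σ, hσ, h⟩ := hhom s (f '' s) s.finite_toSet (s.finite_toSet.image f)
      (Equiv.Set.imageOfInjOn f s hf)
      (fun u v huv => hc u u.2 v v.2 (fun h => huv (Subtype.ext h)))
    exact ⟨⟨σ, hσ⟩, fun x hx => h ⟨x, hx⟩⟩
  refine ⟨hsymm, hom, fun s τ => ?_⟩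
  let i : s ≃ Fin s.card := s.equivFin
  let d : Option (Fin s.card) → Option (Fin s.card) → Fin k
    | none, none => 0
    | none, some b => τ (i.symm b)
    | some a, none => τ (i.symm a)
    | some a, some b => c (i.symm a) (i.symm b)
  obtain ⟨f, hf⟩ := huniv (Option (Fin s.card)) inferInstance d
    (by rintro (_ | a) (_ | b) <;> simp [d, hsymm])
  let f' : V → V := fun x => if hx : x ∈ s then f (some (i ⟨x, hx⟩)) else x
  have hf' : ∀ x (hx : x ∈ s), f' x = f (some (i ⟨x, hx⟩)) := fun x hx => dif_pos hx
  obtain ⟨σ, hσ⟩ := hom s f'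
    (by
      intro x hx y hy hxy
      rw [hf' x hx, hf' y hy] at hxy
      simpa using hxy)
    (by
      intro x hx y hy hxy
      rw [hf' x hx, hf' y hy, hf _ _ (by simpa using hxy)]
      simp [d])
  refine ⟨σ⁻¹ • f none, fun hz => ?_, fun x hx => ?_⟩
  · have h := hσ _ hz
    rw [smul_inv_smul, hf' _ hz] at h
    simpa using f.injective h
  · have hne : f none ≠ f (some (i ⟨x, hx⟩)) := by simp
    have hx' : x = σ⁻¹ • f (some (i ⟨x, hx⟩)) := by
      rw [← hf' x hx, ← hσ x hx, inv_smul_smul]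
    conv_lhs => rw [hx']
    rw [aut_color σ⁻¹ hne, hf _ _ (by simp)]
    simp [d]

namespace IsRandom

/-- A finite partial embedding into a random coloring extends to an embedding. -/
theorem exists_embedding [NeZero k] (hc : IsRandom c) {B : Type*} [Finite B] (d : B → B → Fin k)
    (hd : ∀ x y, d x y = d y x) (s : Set B) (f : B → V) (hf : Set.InjOn f s)
    (hfd : ∀ x ∈ s, ∀ y ∈ s, x ≠ y → c (f x) (f y) = d x y) :
    ∃ f' : B → V, Function.Injective f' ∧ (∀ x y, x ≠ y → c (f' x) (f' y) = d x y) ∧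
      ∀ x ∈ s, f' x = f x := by
  have := Fintype.ofFinite B
  have key : ∀ t : Finset B, ∃ f' : B → V, Set.InjOn f' (s ∪ t) ∧
      (∀ x ∈ s ∪ t, ∀ y ∈ s ∪ t, x ≠ y → c (f' x) (f' y) = d x y) ∧ ∀ x ∈ s, f' x = f x := by
    intro t
    induction t using Finset.induction_on with
    | empty => exact ⟨f, by simpa using hf, by simpa using hfd, fun _ _ => rfl⟩
    | insert b t _ ih =>
      obtain ⟨f', h1, h2, h3⟩ := ih
      by_cases hb : b ∈ s ∪ (t : Set B)
      · have : s ∪ ((insert b t : Finset B) : Set B) = s ∪ t := by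
          rw [Finset.coe_insert, Set.union_insert, Set.insert_eq_of_mem hb]
        rw [this]
        exact ⟨f', h1, h2, h3⟩
      · let τ : V → Fin k := fun v =>
          if h : ∃ x ∈ s ∪ (t : Set B), f' x = v then d b h.choose else 0
        have hτ : ∀ x ∈ s ∪ (t : Set B), τ (f' x) = d b x := by
          intro x hx
          have h : ∃ y ∈ s ∪ (t : Set B), f' y = f' x := ⟨x, hx, rfl⟩
          have : h.choose = x := h1 h.choose_spec.1 hx h.choose_spec.2
          simp only [τ, dif_pos h, this]
        obtain ⟨z, hz, hzc⟩ := hc.ext ((s ∪ (t : Set B)).toFinite.toFinset.image f') τ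
        have hz' : ∀ x ∈ s ∪ (t : Set B), f' x ≠ z := by
          intro x hx h
          exact hz (Finset.mem_image.2 ⟨x, by simpa using hx, h⟩)
        have hzc' : ∀ x ∈ s ∪ (t : Set B), c z (f' x) = d b x := by
          intro x hx
          rw [← hτ x hx]
          exact hzc _ (Finset.mem_image.2 ⟨x, by simpa using hx, rfl⟩)
        have hne : ∀ x ∈ s ∪ (t : Set B), x ≠ b := fun x hx h => hb (h ▸ hx)
        have hup : ∀ x ∈ s ∪ (t : Set B), Function.update f' b z x = f' x :=
          fun x hx => Function.update_of_ne (hne x hx) _ _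
        refine ⟨Function.update f' b z, ?_, ?_, ?_⟩
        · rw [Finset.coe_insert, Set.union_insert]
          rintro x (rfl | hx) y (rfl | hy) hxy
          · rfl
          · rw [Function.update_self, hup y hy] at hxy
            exact (hz' y hy hxy.symm).elim
          · rw [Function.update_self, hup x hx] at hxy
            exact (hz' x hx hxy).elim
          · rw [hup x hx, hup y hy] at hxy
            exact h1 hx hy hxy
        · rw [Finset.coe_insert, Set.union_insert]
          rintro x (rfl | hx) y (rfl | hy) hxy
          · exact (hxy rfl).elim
          · rw [Function.update_self, hup y hy, hzc' y hy]
          · rw [Function.update_self, hup x hx, hc.symm, hzc' x hx, hd]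
          · rw [hup x hx, hup y hy, h2 x hx y hy hxy]
        · intro x hx
          rw [hup x (Or.inl hx), h3 x hx]
  obtain ⟨f', h1, h2, h3⟩ := key Finset.univ
  refine ⟨f', fun x y h => h1 (by simp) (by simp) h, fun x y h => h2 x (by simp) y (by simp) h, h3⟩

/-- Isomorphisms between finite subsets, given by two embeddings of a finite type with the same
induced colors, are induced by automorphisms. -/
theorem exists_smul_eq (hc : IsRandom c) {B : Type*} [Finite B] (f f' : B → V)
    (hf : Function.Injective f) (hf' : Function.Injective f')
    (h : ∀ x y, x ≠ y → c (f x) (f y) = c (f' x) (f' y)) : ∃ σ : aut c, ∀ x, σ • f x = f' x := by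
  have := Fintype.ofFinite B
  obtain ⟨σ, hσ⟩ := hc.hom (Finset.univ.image f) (Function.extend f f' id)
    (by
      intro x hx y hy hxy
      simp only [Finset.coe_image, Finset.coe_univ, Set.image_univ, Set.mem_range] at hx hy
      obtain ⟨x, rfl⟩ := hx
      obtain ⟨y, rfl⟩ := hy
      rw [hf.extend_apply, hf.extend_apply] at hxy
      rw [hf' hxy])
    (by
      intro x hx y hy hxy
      simp only [Finset.mem_image, Finset.mem_univ, true_and] at hx hy
      obtain ⟨x, rfl⟩ := hx
      obtain ⟨y, rfl⟩ := hy
      rw [hf.extend_apply, hf.extend_apply, h x y fun e => hxy (e ▸ rfl)])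
  exact ⟨σ, fun x => by rw [hσ _ (by simp), hf.extend_apply]⟩

end IsRandom

/-- The extension property for partial automorphisms: every finite set `A` is contained in a
finite set `B` such that all partial automorphisms inside `A` are restrictions of automorphisms
preserving `B`. The vertices of `B` are pairs of a vertex of `A` and a valuation on `A`. -/
theorem IsRandom.exists_finset_extending [NeZero k] [Countable V] (hc : IsRandom c)
    (A : Finset V) : ∃ B : Finset V, A ⊆ B ∧ ∀ (g : aut c) (D : Finset V), D ⊆ A →
      (∀ x ∈ D, g • x ∈ A) → ∃ g' : aut c, (∀ b ∈ B, g' • b ∈ B) ∧ ∀ x ∈ D, g' • x = g • x := by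
  obtain ⟨enc, henc⟩ := exists_injective_nat V
  let val : A → A → Fin k := fun v w => if enc w < enc v then c v w else 0
  have hval : ∀ v w : A, v ≠ w → val v w + val w v = c v w := by
    intro v w hvw
    rcases lt_trichotomy (enc v) (enc w) with h | h | h
    · simp [val, h, h.not_gt, hc.symm]
    · exact (hvw (Subtype.ext (henc h))).elim
    · simp [val, h, h.not_gt]
  let d : A × (A → Fin k) → A × (A → Fin k) → Fin k := fun p q =>
    if p.1 = q.1 then 0 else p.2 q.1 + q.2 p.1
  let ι : A → A × (A → Fin k) := fun v => (v, val v)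
  obtain ⟨f, hfinj, hfd, hfι⟩ := hc.exists_embedding d
    (fun p q => by simp only [d, eq_comm (a := p.1), add_comm (p.2 q.1)])
    (Set.range ι) (fun p => (p.1 : V))
    (by
      rintro _ ⟨v, rfl⟩ _ ⟨w, rfl⟩ h
      rw [show v = w from Subtype.ext h])
    (by
      rintro _ ⟨v, rfl⟩ _ ⟨w, rfl⟩ h
      have hvw : v ≠ w := fun e => h (e ▸ rfl)
      simp only [ι, d, if_neg hvw, hval v w hvw])
  have hfι' : ∀ v : A, f (ι v) = v := fun v => hfι _ ⟨v, rfl⟩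
  refine ⟨Finset.univ.image f, fun v hv => ?_, fun g D hDA hgD => ?_⟩
  · exact Finset.mem_image.2 ⟨ι ⟨v, hv⟩, by simp, hfι' _⟩
  obtain ⟨π, hπ⟩ := Equiv.Perm.exists_extending_pair (α := D) (β := A)
    (fun x => ⟨x, hDA x.2⟩) (fun x => ⟨g • (x : V), hgD x x.2⟩)
    (fun x y h => Subtype.ext (congrArg (fun a : A => (a : V)) h))
    (fun x y h => Subtype.ext (smul_left_cancel g (congrArg (fun a : A => (a : V)) h)))
  have hπ' : ∀ v : A, (v : V) ∈ D → (π v : V) = g • (v : V) := fun v hv =>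
    congrArg (fun a : A => (a : V)) (hπ ⟨v, hv⟩)
  let tw : A → A → Fin k := fun v w =>
    if (v : V) ∈ D then val (π v) (π w) - val v w
    else if (w : V) ∈ D then -(val (π w) (π v) - val w v) else 0
  have htw : ∀ v w : A, v ≠ w → tw v w + tw w v = 0 := by
    intro v w hvw
    by_cases hv : (v : V) ∈ D <;> by_cases hw : (w : V) ∈ D
    · have h1 := hval (π v) (π w) (fun e => hvw (π.injective e))
      rw [hπ' v hv, hπ' w hw, aut_color g (fun e => hvw (Subtype.ext e)), ← hval v w hvw] at h1
      simp only [tw, if_pos hv, if_pos hw]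
      rw [sub_add_sub_comm, h1, sub_self]
    · simp [tw, hv, hw]
    · simp [tw, hv, hw]
    · simp [tw, hv, hw]
  let Θ : A × (A → Fin k) → A × (A → Fin k) := fun p =>
    (π p.1, fun u => p.2 (π.symm u) + tw p.1 (π.symm u))
  have hΘ : Function.Injective Θ := by
    rintro ⟨v, χ⟩ ⟨w, ψ⟩ h
    obtain ⟨h1, h2⟩ := Prod.mk.inj h
    obtain rfl := π.injective h1
    refine Prod.ext rfl (funext fun u => ?_)
    simpa using congrFun h2 (π u)
  have hΘd : ∀ p q, d (Θ p) (Θ q) = d p q := by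
    rintro ⟨v, χ⟩ ⟨w, ψ⟩
    by_cases hvw : v = w
    · simp [d, Θ, hvw]
    · have h := htw v w hvw
      simp only [d, Θ, π.injective.eq_iff, if_neg hvw, Equiv.symm_apply_apply]
      rw [add_add_add_comm, h, add_zero]
  obtain ⟨g', hg'⟩ := hc.exists_smul_eq f (f ∘ Θ) hfinj (hfinj.comp hΘ) (fun p q hpq => by
    rw [hfd p q hpq, Function.comp, Function.comp, hfd _ _ (hΘ.ne hpq), hΘd])
  refine ⟨g', ?_, fun x hx => ?_⟩
  · intro b hb
    obtain ⟨p, -, rfl⟩ := Finset.mem_image.1 hb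
    exact Finset.mem_image.2 ⟨Θ p, by simp, (hg' p).symm⟩
  · have hΘι : Θ (ι ⟨x, hDA hx⟩) = ι (π ⟨x, hDA hx⟩) := by
      refine Prod.ext rfl (funext fun u => ?_)
      simp [Θ, ι, tw, hx]
    have h := hg' (ι ⟨x, hDA hx⟩)
    rw [Function.comp, hΘι, hfι', hfι', hπ' _ hx] at h
    exact h

/-- Back-and-forth: a sufficiently generic filter of approximations to a permutation defines
a permutation. -/
theorem exists_perm_of_cofinal {P κ : Type*} [Countable V] [Preorder P] [Countable κ]
    (A : P → Set V) (f : P → V → V) (hA : ∀ p q, p ≤ q → A p ⊆ A q)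
    (hf : ∀ p q, p ≤ q → ∀ x ∈ A p, f q x = f p x) (hinj : ∀ p, Set.InjOn (f p) (A p))
    (hdom : ∀ x p, ∃ q ≥ p, x ∈ A q) (hran : ∀ y p, ∃ q ≥ p, ∃ x ∈ A q, f q x = y)
    (D : κ → Set P) (hD : ∀ i p, ∃ q ≥ p, q ∈ D i) (p₀ : P) :
    ∃ (σ : Equiv.Perm V) (I : Set P), p₀ ∈ I ∧ DirectedOn (· ≤ ·) I ∧
      (∀ p ∈ I, ∀ x ∈ A p, σ x = f p x) ∧ (∀ x, ∃ p ∈ I, x ∈ A p) ∧ ∀ i, ∃ p ∈ I, p ∈ D i := by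
  have := Encodable.ofCountable (V ⊕ V ⊕ κ)
  let S : V ⊕ V ⊕ κ → Set P := Sum.elim (fun x => {q | x ∈ A q})
    (Sum.elim (fun y => {q | ∃ x ∈ A q, f q x = y}) D)
  have hS : ∀ i, IsCofinal (S i) := by
    rintro (x | y | i) p
    · obtain ⟨q, h, h'⟩ := hdom x p
      exact ⟨q, h', h⟩
    · obtain ⟨q, h, h'⟩ := hran y p
      exact ⟨q, h', h⟩
    · obtain ⟨q, h, h'⟩ := hD i p
      exact ⟨q, h', h⟩
  let 𝒟 : V ⊕ V ⊕ κ → Order.Cofinal P := fun i => ⟨S i, hS i⟩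
  let I := Order.idealOfCofinals p₀ 𝒟
  have hmeet : ∀ i, ∃ p ∈ I, p ∈ S i := fun i => by
    obtain ⟨p, hp, hp'⟩ := Order.cofinal_meets_idealOfCofinals p₀ 𝒟 i
    exact ⟨p, hp', hp⟩
  have hdir : DirectedOn (· ≤ ·) (I : Set P) := I.directed
  choose e heI heA using fun x => hmeet (Sum.inl x)
  choose r hrI hrA using fun y => hmeet (Sum.inr (Sum.inl y))
  choose i hiA hir using hrA
  have hcompat : ∀ p ∈ I, ∀ q ∈ I, ∀ x, x ∈ A p → x ∈ A q → f p x = f q x := by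
    intro p hp q hq x hxp hxq
    obtain ⟨s, -, hps, hqs⟩ := hdir p hp q hq
    rw [← hf p s hps x hxp, hf q s hqs x hxq]
  let σ : V → V := fun x => f (e x) x
  have hσ : ∀ p ∈ I, ∀ x ∈ A p, σ x = f p x := fun p hp x hx =>
    hcompat _ (heI x) p hp x (heA x) hx
  have hσinj : Function.Injective σ := by
    intro x y hxy
    obtain ⟨s, hs, h1, h2⟩ := hdir _ (heI x) _ (heI y)
    have hx := hA _ _ h1 (heA x)
    have hy := hA _ _ h2 (heA y)
    rw [hσ s hs x hx, hσ s hs y hy] at hxy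
    exact hinj s hx hy hxy
  have hσsurj : Function.Surjective σ := fun y => ⟨i y, by rw [hσ _ (hrI y) _ (hiA y), hir]⟩
  exact ⟨Equiv.ofBijective σ ⟨hσinj, hσsurj⟩, I, Order.mem_idealOfCofinals p₀ 𝒟, hdir, hσ,
    fun x => ⟨e x, heI x, heA x⟩, fun i => hmeet (Sum.inr (Sum.inr i))⟩

/-- The topology of pointwise convergence on the automorphism group. -/
instance autTopology : TopologicalSpace (aut c) where
  IsOpen U := ∀ g ∈ U, ∃ F : Finset V, ∀ h : aut c, (∀ x ∈ F, h • x = g • x) → h ∈ U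
  isOpen_univ := fun _ _ => ⟨∅, fun _ _ => trivial⟩
  isOpen_inter := by
    rintro U W hU hW g ⟨hgU, hgW⟩
    obtain ⟨F, hF⟩ := hU g hgU
    obtain ⟨F', hF'⟩ := hW g hgW
    exact ⟨F ∪ F', fun h hh => ⟨hF h fun x hx => hh x (Finset.mem_union_left _ hx),
      hF' h fun x hx => hh x (Finset.mem_union_right _ hx)⟩⟩
  isOpen_sUnion := by
    rintro 𝒰 h𝒰 g ⟨U, hU, hg⟩
    obtain ⟨F, hF⟩ := h𝒰 U hU g hg
    exact ⟨F, fun h hh => ⟨U, hU, hF h hh⟩⟩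

theorem isOpen_aut_iff {U : Set (aut c)} : IsOpen U ↔
    ∀ g ∈ U, ∃ F : Finset V, ∀ h : aut c, (∀ x ∈ F, h • x = g • x) → h ∈ U :=
  Iff.rfl

theorem isOpen_agree (g : aut c) (F : Finset V) : IsOpen {h : aut c | ∀ x ∈ F, h • x = g • x} :=
  fun _ hh => ⟨F, fun _ hh' x hx => (hh' x hx).trans (hh x hx)⟩

theorem dense_aut_iff {U : Set (aut c)} : Dense U ↔
    ∀ (g : aut c) (F : Finset V), ∃ h ∈ U, ∀ x ∈ F, h • x = g • x := by
  rw [dense_iff_inter_open]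
  constructor
  · intro h g F
    obtain ⟨u, hu, huU⟩ := h _ (isOpen_agree g F) ⟨g, fun _ _ => rfl⟩
    exact ⟨u, huU, hu⟩
  · rintro h W hW ⟨g, hg⟩
    obtain ⟨F, hF⟩ := isOpen_aut_iff.1 hW g hg
    obtain ⟨u, hu, hu'⟩ := h g F
    exact ⟨u, hF u hu', hu⟩

instance : ContinuousConstSMul (aut c) (aut c) where
  continuous_const_smul a := ⟨fun U hU g hg => by
    obtain ⟨F, hF⟩ := isOpen_aut_iff.1 hU _ hg
    exact ⟨F, fun h hh => hF _ fun x hx => by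
      simp only [smul_eq_mul, mul_smul, hh x hx]⟩⟩

theorem continuous_mul_right_aut (a : aut c) : Continuous fun g : aut c => g * a :=
  ⟨fun U hU g hg => by
    obtain ⟨F, hF⟩ := isOpen_aut_iff.1 hU _ hg
    exact ⟨F.image (a • ·), fun h hh => hF _ fun x hx => by
      simp only [mul_smul, hh _ (Finset.mem_image_of_mem _ hx)]⟩⟩

theorem mul_left_preimage_mem_residual (a : aut c) {D : Set (aut c)} (hD : D ∈ residual (aut c)) :
    {g | a * g ∈ D} ∈ residual (aut c) := by
  have h := (Homeomorph.smul a : aut c ≃ₜ aut c).residual_map_eq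
  rw [← h] at hD
  exact hD

theorem mul_right_preimage_mem_residual (a : aut c) {D : Set (aut c)}
    (hD : D ∈ residual (aut c)) : {g | g * a ∈ D} ∈ residual (aut c) := by
  let e : aut c ≃ₜ aut c :=
    { toEquiv := Equiv.mulRight a
      continuous_toFun := continuous_mul_right_aut a
      continuous_invFun := continuous_mul_right_aut a⁻¹ }
  rw [← e.residual_map_eq] at hD
  exact hD

/-- Finite approximations to automorphisms. -/
structure Approx (c : V → V → Fin k) where
  /-- The automorphism realizing the approximation. -/
  map : aut c
  /-- The finite set on which the approximation is fixed. -/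
  dom : Finset V

instance : Preorder (Approx c) where
  le p q := p.dom ⊆ q.dom ∧ ∀ x ∈ p.dom, q.map • x = p.map • x
  le_refl p := ⟨subset_rfl, fun _ _ => rfl⟩
  le_trans p q r h h' := ⟨h.1.trans h'.1, fun x hx => (h'.2 x (h.1 hx)).trans (h.2 x hx)⟩

instance [Countable V] : BaireSpace (aut c) where
  baire_property U hU hUd := by
    rw [dense_aut_iff]
    intro g₀ F₀
    have hle : ∀ p q : Approx c, p ≤ q → p.dom ⊆ q.dom ∧ ∀ x ∈ p.dom, q.map • x = p.map • x :=
      fun _ _ h => h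
    obtain ⟨σ, I, h0, hdir, hσ, hcov, hmeet⟩ := exists_perm_of_cofinal
      (P := Approx c) (fun p => (p.dom : Set V)) (fun p x => p.map • x)
      (fun p q h => (hle p q h).1) (fun p q h => (hle p q h).2)
      (fun p x _ y _ h => smul_left_cancel p.map h)
      (fun x p => ⟨⟨p.map, insert x p.dom⟩, ⟨Finset.subset_insert _ _, fun _ _ => rfl⟩, by simp⟩)
      (fun y p => ⟨⟨p.map, insert (p.map⁻¹ • y) p.dom⟩,
        ⟨Finset.subset_insert _ _, fun _ _ => rfl⟩, p.map⁻¹ • y, by simp, by simp⟩)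
      (fun n => {p : Approx c | ∀ h : aut c, (∀ x ∈ p.dom, h • x = p.map • x) → h ∈ U n})
      (fun n p => by
        obtain ⟨g, hg, hgp⟩ := dense_aut_iff.1 (hUd n) p.map p.dom
        obtain ⟨F, hF⟩ := isOpen_aut_iff.1 (hU n) g hg
        exact ⟨⟨g, p.dom ∪ F⟩, ⟨Finset.subset_union_left, hgp⟩,
          fun h hh => hF h fun x hx => hh x (Finset.mem_union_right _ hx)⟩)
      ⟨g₀, F₀⟩
    have hmem : σ ∈ aut c := by
      intro u v huv
      obtain ⟨p, hp, hu⟩ := hcov u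
      obtain ⟨q, hq, hv⟩ := hcov v
      obtain ⟨r, hr, hpr, hqr⟩ := hdir p hp q hq
      rw [hσ r hr u (hpr.1 hu), hσ r hr v (hqr.1 hv), aut_color r.map huv]
    refine ⟨⟨σ, hmem⟩, Set.mem_iInter.2 fun n => ?_, fun x hx => hσ _ h0 x hx⟩
    obtain ⟨p, hp, hpn⟩ := hmeet n
    exact hpn _ fun x hx => hσ p hp x hx

theorem mem_of_smul_mem {u : aut c} {A : Finset V} (h : ∀ a ∈ A, u • a ∈ A) {x : V}
    (hx : u • x ∈ A) : x ∈ A := by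
  have himg : A.image (u • ·) = A :=
    Finset.eq_of_subset_of_card_le (Finset.image_subset_iff.2 h)
      (Finset.card_image_of_injective _ (MulAction.injective u)).ge
  rw [← himg] at hx
  obtain ⟨a, ha, hax⟩ := Finset.mem_image.1 hx
  rwa [← smul_left_cancel u hax]

/-- Any finite set can be moved, fixing a subset `A`, into free position over `A` relative to
another finite set. -/
theorem IsRandom.exists_free_position [NeZero k] (hc : IsRandom c) {A A' B : Finset V}
    (hAA' : A ⊆ A') (hAB : A ⊆ B) : ∃ σ : aut c, (∀ a ∈ A, σ • a = a) ∧
      ∀ b ∈ B, b ∉ A → σ • b ∉ A' ∧ ∀ a ∈ A', a ∉ A → c a (σ • b) = 0 := by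
  let d : A' ⊕ (B \ A : Finset V) → A' ⊕ (B \ A : Finset V) → Fin k := fun p q =>
    match p, q with
    | .inl a, .inl b => c a b
    | .inr a, .inr b => c a b
    | .inl a, .inr b => if (a : V) ∈ A then c a b else 0
    | .inr b, .inl a => if (a : V) ∈ A then c a b else 0
  obtain ⟨f, hfinj, hfd, hf⟩ := hc.exists_embedding d
    (by rintro (a | a) (b | b) <;> simp [d, hc.symm])
    (Set.range Sum.inl) (Sum.elim (fun a => (a : V)) (fun b => (b : V)))
    (by
      rintro _ ⟨a, rfl⟩ _ ⟨b, rfl⟩ h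
      exact congrArg _ (Subtype.ext h))
    (by
      rintro _ ⟨a, rfl⟩ _ ⟨b, rfl⟩ h
      rfl)
  have hf' : ∀ a : A', f (.inl a) = a := fun a => hf _ ⟨a, rfl⟩
  let m : V → V := fun x => if h : x ∈ B \ A then f (.inr ⟨x, h⟩) else x
  have hm : ∀ x (h : x ∈ B \ A), m x = f (.inr ⟨x, h⟩) := fun x h => dif_pos h
  have hmA : ∀ x (h : x ∈ A), m x = f (.inl ⟨x, hAA' h⟩) := fun x h => by
    rw [hf']
    exact dif_neg fun h' => (Finset.mem_sdiff.1 h').2 h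
  have hcases : ∀ x ∈ B, x ∈ A ∨ x ∈ B \ A := fun x hx => by
    by_cases h : x ∈ A
    · exact Or.inl h
    · exact Or.inr (Finset.mem_sdiff.2 ⟨hx, h⟩)
  obtain ⟨σ, hσ⟩ := hc.hom B m
    (by
      intro x hx y hy hxy
      rcases hcases x hx with hx | hx <;> rcases hcases y hy with hy | hy <;>
        simp only [hm, hmA, hx, hy] at hxy <;> simpa using hfinj hxy)
    (by
      intro x hx y hy hxy
      rcases hcases x hx with hx | hx <;> rcases hcases y hy with hy | hy <;>
        simp only [hm, hmA, hx, hy] <;> rw [hfd _ _ (by simp [hxy])] <;>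
        simp [d, hx, hy, hc.symm])
  refine ⟨σ, fun a ha => ?_, fun b hb hbA => ⟨fun h => ?_, fun a ha haA => ?_⟩⟩
  · rw [hσ a (hAB ha), hmA a ha, hf']
  · rw [hσ b hb, hm b (Finset.mem_sdiff.2 ⟨hb, hbA⟩)] at h
    have h' := hf' ⟨_, h⟩
    simpa using hfinj h'
  · rw [hσ b hb, hm b (Finset.mem_sdiff.2 ⟨hb, hbA⟩)]
    have hcol := hfd (.inl ⟨a, ha⟩) (.inr ⟨b, Finset.mem_sdiff.2 ⟨hb, hbA⟩⟩) (by simp)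
    rw [hf'] at hcol
    simpa [d, haA] using hcol

/-- Automorphisms preserving two finite sets in free position glue. -/
theorem IsRandom.exists_glue [NeZero k] (hc : IsRandom c) {A A' C : Finset V}
    (hA : A' ∩ C = A) (hfree : ∀ x ∈ A', x ∉ A → ∀ y ∈ C, y ∉ A → c x y = 0)
    {u v : aut c} (huA : ∀ x ∈ A, u • x ∈ A) (huv : ∀ x ∈ A, u • x = v • x)
    (hu : ∀ x ∈ A', u • x ∈ A') (hv : ∀ x ∈ C, v • x ∈ C) :
    ∃ f : aut c, (∀ x ∈ A', f • x = u • x) ∧ ∀ x ∈ C, f • x = v • x := by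
  have hA' : ∀ x, x ∈ A ↔ x ∈ A' ∧ x ∈ C := fun x => by rw [← hA, Finset.mem_inter]
  have hvA : ∀ x ∈ A, v • x ∈ A := fun x hx => huv x hx ▸ huA x hx
  let m : V → V := fun x => if x ∈ A' then u • x else v • x
  have hmA' : ∀ x ∈ A', m x = u • x := fun x hx => if_pos hx
  have hmC : ∀ x ∈ C, m x = v • x := fun x hx => by
    by_cases h : x ∈ A'
    · rw [hmA' x h, huv x ((hA' x).2 ⟨h, hx⟩)]
    · exact if_neg h
  have hcases : ∀ x ∈ A' ∪ C, ∀ y ∈ A' ∪ C, (x ∈ A' ∧ y ∈ A') ∨ (x ∈ C ∧ y ∈ C) ∨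
      (x ∈ A' ∧ x ∉ A ∧ y ∈ C ∧ y ∉ A) ∨ (y ∈ A' ∧ y ∉ A ∧ x ∈ C ∧ x ∉ A) := by
    intro x hx y hy
    rw [Finset.mem_union] at hx hy
    rw [hA', hA']
    clear * - hx hy
    grind
  have hcross : ∀ x y, x ∈ A' → x ∉ A → y ∈ C → y ∉ A → m x ≠ m y ∧ c (m x) (m y) = 0 := by
    intro x y hx hxA hy hyA
    have hux : u • x ∉ A := fun h => hxA (mem_of_smul_mem huA h)
    have hvy : v • y ∉ A := fun h => hyA (mem_of_smul_mem hvA h)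
    rw [hmA' x hx, hmC y hy]
    exact ⟨fun h => hux ((hA' _).2 ⟨hu x hx, h ▸ hv y hy⟩), hfree _ (hu x hx) hux _ (hv y hy) hvy⟩
  obtain ⟨f, hf⟩ := hc.hom (A' ∪ C) m
    (by
      intro x hx y hy hxy
      rcases hcases x hx y hy with ⟨h1, h2⟩ | ⟨h1, h2⟩ | ⟨h1, h2, h3, h4⟩ | ⟨h1, h2, h3, h4⟩
      · rw [hmA' x h1, hmA' y h2] at hxy
        exact smul_left_cancel u hxy
      · rw [hmC x h1, hmC y h2] at hxy
        exact smul_left_cancel v hxy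
      · exact ((hcross x y h1 h2 h3 h4).1 hxy).elim
      · exact ((hcross y x h1 h2 h3 h4).1 hxy.symm).elim)
    (by
      intro x hx y hy hxy
      rcases hcases x hx y hy with ⟨h1, h2⟩ | ⟨h1, h2⟩ | ⟨h1, h2, h3, h4⟩ | ⟨h1, h2, h3, h4⟩
      · rw [hmA' x h1, hmA' y h2, aut_color u hxy]
      · rw [hmC x h1, hmC y h2, aut_color v hxy]
      · rw [(hcross x y h1 h2 h3 h4).2, hfree x h1 h2 y h3 h4]
      · rw [hc.symm, (hcross y x h1 h2 h3 h4).2, hc.symm, hfree y h1 h2 x h3 h4])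
  exact ⟨f, fun x hx => by rw [hf x (Finset.mem_union_left _ hx), hmA' x hx],
    fun x hx => by rw [hf x (Finset.mem_union_right _ hx), hmC x hx]⟩

/-- A family of automorphisms is generic if finite sets have finite closures under it and every
finite extension of its action on a finite invariant set is realized. -/
structure IsGenericFamily {J : Type*} (L : Finset J) (g : J → aut c) : Prop where
  exists_invariant : ∀ F : Finset V, ∃ A, F ⊆ A ∧ ∀ j ∈ L, ∀ a ∈ A, g j • a ∈ A
  extension : ∀ A B : Finset V, A ⊆ B → ∀ f : J → aut c, (∀ j ∈ L, ∀ a ∈ A, f j • a ∈ A) →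
    (∀ j ∈ L, ∀ b ∈ B, f j • b ∈ B) → (∀ j ∈ L, ∀ a ∈ A, f j • a = g j • a) →
      ∃ σ : aut c, (∀ a ∈ A, σ • a = a) ∧ ∀ j ∈ L, ∀ b ∈ B, σ • f j • b = g j • σ • b

theorem isGenericFamily_empty {J : Type*} (g : J → aut c) : IsGenericFamily ∅ g :=
  ⟨fun F => ⟨F, subset_rfl, by simp⟩, fun _ _ _ _ _ _ _ => ⟨1, by simp, by simp⟩⟩

/-- The automorphism group is separable. -/
theorem exists_countable_approximating [Countable V] (c : V → V → Fin k) :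
    ∃ e : (Σ F : Finset V, (F → V)) → aut c,
      ∀ (g : aut c) (F : Finset V), ∃ i, ∀ x ∈ F, e i • x = g • x := by
  refine ⟨fun i => if h : ∃ g : aut c, ∀ x : i.1, g • (x : V) = i.2 x then h.choose else 1,
    fun g F => ⟨⟨F, fun x => g • (x : V)⟩, fun x hx => ?_⟩⟩
  have h : ∃ h : aut c, ∀ x : F, h • (x : V) = g • (x : V) := ⟨g, fun _ => rfl⟩
  dsimp only
  rw [dif_pos h]
  exact h.choose_spec ⟨x, hx⟩

section Generic

variable [NeZero k] [Countable V] {J : Type*} {L : Finset J} {g : J → aut c}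

theorem IsGenericFamily.exists_invariant_agree (hc : IsRandom c) (hL : IsGenericFamily L g)
    (x₀ : aut c) (F F' : Finset V) : ∃ x : aut c, (∀ y ∈ F, x • y = x₀ • y) ∧
      ∃ A, F' ⊆ A ∧ (∀ j ∈ L, ∀ a ∈ A, g j • a ∈ A) ∧ ∀ a ∈ A, x • a ∈ A := by
  obtain ⟨A, hFA, hA⟩ := hL.exists_invariant (F ∪ F.image (x₀ • ·) ∪ F')
  obtain ⟨B, hAB, hB⟩ := hc.exists_finset_extending A
  have hF : F ⊆ A := fun y hy => hFA (by simp [hy])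
  have hxF : ∀ y ∈ F, x₀ • y ∈ A := fun y hy =>
    hFA (Finset.mem_union_left _ (Finset.mem_union_right _ (Finset.mem_image_of_mem _ hy)))
  have hg : ∀ j, ∃ f : aut c, j ∈ L → (∀ b ∈ B, f • b ∈ B) ∧ ∀ a ∈ A, f • a = g j • a := by
    intro j
    by_cases hj : j ∈ L
    · obtain ⟨f, hf⟩ := hB (g j) A subset_rfl (hA j hj)
      exact ⟨f, fun _ => hf⟩
    · exact ⟨1, fun h => (hj h).elim⟩
  choose f hf using hg
  obtain ⟨w, hwB, hwF⟩ := hB x₀ F hF hxF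
  obtain ⟨τ, hτA, hτ⟩ := hL.extension A B hAB f
    (fun j hj a ha => by rw [(hf j hj).2 a ha]; exact hA j hj a ha)
    (fun j hj => (hf j hj).1) (fun j hj => (hf j hj).2)
  refine ⟨τ * w * τ⁻¹, fun y hy => ?_, B.image (τ • ·), fun y hy => ?_, fun j hj a ha => ?_,
    fun a ha => ?_⟩
  · have h1 : τ⁻¹ • y = y := by rw [inv_smul_eq_iff, hτA y (hF hy)]
    rw [mul_smul, mul_smul, h1, hwF y hy, hτA _ (hxF y hy)]
  · have hyA : y ∈ A := hFA (Finset.mem_union_right _ hy)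
    exact Finset.mem_image.2 ⟨y, hAB hyA, hτA y hyA⟩
  · obtain ⟨b, hb, rfl⟩ := Finset.mem_image.1 ha
    exact Finset.mem_image.2 ⟨f j • b, (hf j hj).1 b hb, hτ j hj b hb⟩
  · obtain ⟨b, hb, rfl⟩ := Finset.mem_image.1 ha
    refine Finset.mem_image.2 ⟨w • b, hwB b hb, ?_⟩
    simp [mul_smul]

theorem IsGenericFamily.exists_extension_agree (hc : IsRandom c) (hL : IsGenericFamily L g)
    {A B : Finset V} (hAB : A ⊆ B) {f : J → aut c} {w : aut c}
    (hfA : ∀ j ∈ L, ∀ a ∈ A, f j • a ∈ A) (hfB : ∀ j ∈ L, ∀ b ∈ B, f j • b ∈ B)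
    (hfg : ∀ j ∈ L, ∀ a ∈ A, f j • a = g j • a) (hwA : ∀ a ∈ A, w • a ∈ A)
    (hwB : ∀ b ∈ B, w • b ∈ B) (x₀ : aut c) (F : Finset V) :
    ∃ x : aut c, (∀ y ∈ F, x • y = x₀ • y) ∧ ((∀ a ∈ A, w • a = x • a) →
      ∃ σ : aut c, (∀ a ∈ A, σ • a = a) ∧ (∀ j ∈ L, ∀ b ∈ B, σ • f j • b = g j • σ • b) ∧
        ∀ b ∈ B, σ • w • b = x • σ • b) := by
  obtain ⟨x₁, hx₁F, A', hFA', hgA', hxA'⟩ := hL.exists_invariant_agree hc x₀ F (F ∪ A)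
  by_cases hwx : ∀ a ∈ A, w • a = x₁ • a
  swap
  · exact ⟨x₁, hx₁F, fun h => (hwx h).elim⟩
  have hAA' : A ⊆ A' := Finset.subset_union_right.trans hFA'
  have hF : F ⊆ A' := Finset.subset_union_left.trans hFA'
  obtain ⟨σ, hσA, hσ⟩ := hc.exists_free_position hAA' hAB
  have hinter : A' ∩ B.image (σ • ·) = A := by
    ext y
    rw [Finset.mem_inter, Finset.mem_image]
    constructor
    · rintro ⟨hy, b, hb, rfl⟩
      by_cases hbA : b ∈ A
      · rwa [hσA b hbA]
      · exact ((hσ b hb hbA).1 hy).elim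
    · exact fun hy => ⟨hAA' hy, y, hAB hy, hσA y hy⟩
  have hfree : ∀ x ∈ A', x ∉ A → ∀ y ∈ B.image (σ • ·), y ∉ A → c x y = 0 := by
    intro x hx hxA y hy hyA
    obtain ⟨b, hb, rfl⟩ := Finset.mem_image.1 hy
    exact (hσ b hb fun h => hyA (by rwa [hσA b h])).2 x hx hxA
  have hglue : ∀ u v : aut c, (∀ a ∈ A, v • a ∈ A) → (∀ b ∈ B, v • b ∈ B) →
      (∀ a ∈ A, v • a = u • a) → (∀ a ∈ A', u • a ∈ A') →
      ∃ f' : aut c, (∀ a ∈ A', f' • a = u • a) ∧ ∀ b ∈ B, f' • σ • b = σ • v • b := by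
    intro u v hvA hvB hvu hu
    obtain ⟨f', h1, h2⟩ := hc.exists_glue (u := u) (v := σ * v * σ⁻¹) hinter hfree
      (fun a ha => hvu a ha ▸ hvA a ha)
      (fun a ha => by
        have h : σ⁻¹ • a = a := by rw [inv_smul_eq_iff, hσA a ha]
        rw [mul_smul, mul_smul, h, hσA _ (hvA a ha), hvu a ha])
      hu
      (fun y hy => by
        obtain ⟨b, hb, rfl⟩ := Finset.mem_image.1 hy
        exact Finset.mem_image.2 ⟨v • b, hvB b hb, by simp [mul_smul]⟩)
    refine ⟨f', h1, fun b hb => ?_⟩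
    rw [h2 _ (Finset.mem_image_of_mem _ hb)]
    simp [mul_smul]
  have hf' : ∀ j, ∃ f' : aut c, j ∈ L → (∀ a ∈ A', f' • a = g j • a) ∧
      ∀ b ∈ B, f' • σ • b = σ • f j • b := by
    intro j
    by_cases hj : j ∈ L
    · obtain ⟨f', h⟩ := hglue (g j) (f j) (hfA j hj) (hfB j hj) (hfg j hj) (hgA' j hj)
      exact ⟨f', fun _ => h⟩
    · exact ⟨1, fun h => (hj h).elim⟩
  choose f' hf' using hf'
  obtain ⟨w', hglueA, hglueB⟩ := hglue x₁ w hwA hwB hwx hxA'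
  obtain ⟨τ, hτA, hτ⟩ := hL.extension A' (A' ∪ B.image (σ • ·)) Finset.subset_union_left f'
    (fun j hj a ha => by rw [(hf' j hj).1 a ha]; exact hgA' j hj a ha)
    (fun j hj y hy => by
      rcases Finset.mem_union.1 hy with hy | hy
      · rw [(hf' j hj).1 y hy]
        exact Finset.mem_union_left _ (hgA' j hj y hy)
      · obtain ⟨b, hb, rfl⟩ := Finset.mem_image.1 hy
        rw [(hf' j hj).2 b hb]
        exact Finset.mem_union_right _ (Finset.mem_image_of_mem _ (hfB j hj b hb)))
    (fun j hj => (hf' j hj).1)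
  refine ⟨τ * w' * τ⁻¹, fun y hy => ?_, fun _ => ⟨τ * σ, fun a ha => ?_, fun j hj b hb => ?_,
    fun b hb => ?_⟩⟩
  · have h : τ⁻¹ • y = y := by rw [inv_smul_eq_iff, hτA y (hF hy)]
    rw [mul_smul, mul_smul, h, hglueA y (hF hy), hτA _ (hxA' y (hF hy)), hx₁F y hy]
  · rw [mul_smul, hσA a ha, hτA a (hAA' ha)]
  · rw [mul_smul, mul_smul, ← hτ j hj _ (Finset.mem_union_right _ (Finset.mem_image_of_mem _ hb)),
      (hf' j hj).2 b hb]
  · rw [mul_smul, mul_smul, mul_smul, mul_smul, inv_smul_smul, hglueB b hb]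

/-- Over a generic family, a comeager set of automorphisms is generic. -/
theorem IsGenericFamily.eventually_insert [DecidableEq J] (hc : IsRandom c)
    (hL : IsGenericFamily L g) :
    ∀ᶠ x in residual (aut c), ∀ j, g j = x → IsGenericFamily (insert j L) g := by
  obtain ⟨e, he⟩ := exists_countable_approximating c
  have h1 : ∀ᶠ x in residual (aut c), ∀ F : Finset V,
      ∃ A, F ⊆ A ∧ (∀ j ∈ L, ∀ a ∈ A, g j • a ∈ A) ∧ ∀ a ∈ A, x • a ∈ A := by
    rw [eventually_countable_forall]
    intro F
    refine residual_of_dense_open (isOpen_aut_iff.2 ?_) (dense_aut_iff.2 fun x₀ F₀ => ?_)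
    · rintro x ⟨A, hFA, hgA, hxA⟩
      exact ⟨A, fun y hy => ⟨A, hFA, hgA, fun a ha => hy a ha ▸ hxA a ha⟩⟩
    · obtain ⟨x, hx, hA⟩ := hL.exists_invariant_agree hc x₀ F₀ F
      exact ⟨x, hA, hx⟩
  let ext : (L → Σ F : Finset V, (F → V)) → J → aut c := fun q j =>
    if h : j ∈ L then e (q ⟨j, h⟩) else 1
  have h2 : ∀ᶠ x in residual (aut c), ∀ (A B : Finset V) (q : L → Σ F : Finset V, (F → V))
      (i : Σ F : Finset V, (F → V)), A ⊆ B → (∀ j ∈ L, ∀ a ∈ A, ext q j • a ∈ A) →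
      (∀ j ∈ L, ∀ b ∈ B, ext q j • b ∈ B) → (∀ j ∈ L, ∀ a ∈ A, ext q j • a = g j • a) →
      (∀ a ∈ A, e i • a ∈ A) → (∀ b ∈ B, e i • b ∈ B) → (∀ a ∈ A, e i • a = x • a) →
      ∃ σ : aut c, (∀ a ∈ A, σ • a = a) ∧ (∀ j ∈ L, ∀ b ∈ B, σ • ext q j • b = g j • σ • b) ∧
        ∀ b ∈ B, σ • e i • b = x • σ • b := by
    simp only [eventually_countable_forall]
    intro A B q i hAB hfA hfB hfg hwA hwB
    refine residual_of_dense_open (isOpen_aut_iff.2 ?_) (dense_aut_iff.2 fun x₀ F₀ => ?_)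
    · intro x hx
      refine ⟨A ∪ B.image fun b => (if h : ∃ σ : aut c, (∀ a ∈ A, σ • a = a) ∧
        (∀ j ∈ L, ∀ b ∈ B, σ • ext q j • b = g j • σ • b) ∧
        ∀ b ∈ B, σ • e i • b = x • σ • b then h.choose else 1) • b, fun y hy hyA => ?_⟩
      have h := hx fun a ha => by rw [hyA a ha, hy a (Finset.mem_union_left _ ha)]
      rw [dif_pos h] at hy
      refine ⟨h.choose, h.choose_spec.1, h.choose_spec.2.1, fun b hb => ?_⟩
      rw [h.choose_spec.2.2 b hb,
        hy _ (Finset.mem_union_right _ (Finset.mem_image_of_mem (fun b => h.choose • b) hb))]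
    · obtain ⟨x, hx, hA⟩ := hL.exists_extension_agree hc hAB hfA hfB hfg hwA hwB x₀ F₀
      exact ⟨x, hA, hx⟩
  filter_upwards [h1, h2] with x hx1 hx2 j hj
  refine ⟨fun F => ?_, fun A B hAB f hfA hfB hfg => ?_⟩
  · obtain ⟨A, hFA, hgA, hxA⟩ := hx1 F
    refine ⟨A, hFA, fun i hi => ?_⟩
    rcases Finset.mem_insert.1 hi with rfl | hi
    · rwa [hj]
    · exact hgA i hi
  · choose q hq using fun i : L => he (f i) B
    obtain ⟨i, hi⟩ := he (f j) B
    have hjL := Finset.mem_insert_self j L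
    have hL' : ∀ l ∈ L, l ∈ insert j L := fun l hl => Finset.mem_insert_of_mem hl
    have hext : ∀ l ∈ L, ∀ b ∈ B, ext q l • b = f l • b := fun l hl b hb => by
      simp only [ext, dif_pos hl]
      exact hq ⟨l, hl⟩ b hb
    obtain ⟨σ, hσA, hσL, hσ⟩ := hx2 A B q i hAB
      (fun l hl a ha => by rw [hext l hl a (hAB ha)]; exact hfA l (hL' l hl) a ha)
      (fun l hl b hb => by rw [hext l hl b hb]; exact hfB l (hL' l hl) b hb)
      (fun l hl a ha => by rw [hext l hl a (hAB ha)]; exact hfg l (hL' l hl) a ha)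
      (fun a ha => by rw [hi a (hAB ha)]; exact hfA j hjL a ha)
      (fun b hb => by rw [hi b hb]; exact hfB j hjL b hb)
      (fun a ha => by rw [hi a (hAB ha), hfg j hjL a ha, hj])
    refine ⟨σ, hσA, fun l hl b hb => ?_⟩
    rcases Finset.mem_insert.1 hl with rfl | hl
    · rw [hj, ← hσ b hb, hi b hb]
    · rw [← hσL l hl b hb, hext l hl b hb]

end Generic

/-- A finite approximation to an automorphism conjugating one generic family to another. -/
structure ConjApprox (c : V → V → Fin k) where
  /-- The pairs of automorphisms to be conjugated. -/
  pairs : Finset (aut c × aut c)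
  /-- The finite set on which the approximation is fixed. -/
  dom : Finset V
  /-- The automorphism realizing the approximation. -/
  map : aut c
  generic_fst : IsGenericFamily pairs Prod.fst
  generic_snd : IsGenericFamily pairs Prod.snd
  invariant : ∀ j ∈ pairs, ∀ a ∈ dom, j.1 • a ∈ dom
  conj : ∀ j ∈ pairs, ∀ a ∈ dom, map • j.1 • a = j.2 • map • a

instance : Preorder (ConjApprox c) where
  le p q := p.pairs ⊆ q.pairs ∧ p.dom ⊆ q.dom ∧ ∀ x ∈ p.dom, q.map • x = p.map • x
  le_refl p := ⟨subset_rfl, subset_rfl, fun _ _ => rfl⟩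
  le_trans p q r h h' := ⟨h.1.trans h'.1, h.2.1.trans h'.2.1,
    fun x hx => (h'.2.2 x (h.2.1 hx)).trans (h.2.2 x hx)⟩

namespace ConjApprox

theorem exists_extend (p : ConjApprox c) {A : Finset V} (hA : p.dom ⊆ A)
    (hinv : ∀ j ∈ p.pairs, ∀ a ∈ A, j.1 • a ∈ A) :
    ∃ q ≥ p, q.pairs = p.pairs ∧ q.dom = A := by
  obtain ⟨τ, hτ, hτ'⟩ := p.generic_snd.extension (p.dom.image (p.map • ·)) (A.image (p.map • ·))
    (Finset.image_subset_image hA) (fun j => p.map * j.1 * p.map⁻¹)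
    (fun j hj y hy => by
      obtain ⟨a, ha, rfl⟩ := Finset.mem_image.1 hy
      exact Finset.mem_image.2 ⟨_, p.invariant j hj a ha, by simp [mul_smul]⟩)
    (fun j hj y hy => by
      obtain ⟨a, ha, rfl⟩ := Finset.mem_image.1 hy
      exact Finset.mem_image.2 ⟨_, hinv j hj a ha, by simp [mul_smul]⟩)
    (fun j hj y hy => by
      obtain ⟨a, ha, rfl⟩ := Finset.mem_image.1 hy
      simp [mul_smul, p.conj j hj a ha])
  refine ⟨⟨p.pairs, A, τ * p.map, p.generic_fst, p.generic_snd, hinv, fun j hj a ha => ?_⟩,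
    ⟨subset_rfl, hA, fun x hx => ?_⟩, rfl, rfl⟩
  · have := hτ' j hj _ (Finset.mem_image_of_mem _ ha)
    simpa [mul_smul] using this
  · rw [mul_smul]
    exact hτ _ (Finset.mem_image_of_mem _ hx)

theorem exists_mem_dom (p : ConjApprox c) (x : V) : ∃ q ≥ p, x ∈ q.dom := by
  obtain ⟨A, hA, hinv⟩ := p.generic_fst.exists_invariant (insert x p.dom)
  obtain ⟨q, hq, -, rfl⟩ := p.exists_extend ((Finset.subset_insert _ _).trans hA) hinv
  exact ⟨q, hq, hA (Finset.mem_insert_self _ _)⟩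

theorem exists_mem_range (p : ConjApprox c) (y : V) : ∃ q ≥ p, ∃ x ∈ q.dom, q.map • x = y := by
  obtain ⟨B, hB, hinv⟩ := p.generic_snd.exists_invariant (insert y (p.dom.image (p.map • ·)))
  have hB' : p.dom ⊆ B.image (p.map⁻¹ • ·) := fun a ha => Finset.mem_image.2
    ⟨p.map • a, hB (Finset.mem_insert_of_mem (Finset.mem_image_of_mem _ ha)), by simp⟩
  have hf : ∀ j ∈ p.pairs, ∀ a ∈ p.dom, (p.map⁻¹ * j.2 * p.map) • a = j.1 • a := by
    intro j hj a ha
    rw [mul_smul, mul_smul, ← p.conj j hj a ha, inv_smul_smul]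
  obtain ⟨τ, hτ, hτ'⟩ := p.generic_fst.extension p.dom (B.image (p.map⁻¹ • ·)) hB'
    (fun j => p.map⁻¹ * j.2 * p.map)
    (fun j hj a ha => by rw [hf j hj a ha]; exact p.invariant j hj a ha)
    (fun j hj x hx => by
      obtain ⟨b, hb, rfl⟩ := Finset.mem_image.1 hx
      exact Finset.mem_image.2 ⟨_, hinv j hj b hb, by simp [mul_smul]⟩)
    hf
  have hτB : ∀ j ∈ p.pairs, ∀ b ∈ B, τ • p.map⁻¹ • j.2 • b = j.1 • τ • p.map⁻¹ • b := by
    intro j hj b hb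
    have := hτ' j hj _ (Finset.mem_image_of_mem _ hb)
    simpa [mul_smul] using this
  refine ⟨⟨p.pairs, B.image fun b => τ • p.map⁻¹ • b, p.map * τ⁻¹, p.generic_fst, p.generic_snd,
    fun j hj x hx => ?_, fun j hj x hx => ?_⟩, ⟨subset_rfl, fun a ha => ?_, fun a ha => ?_⟩,
    τ • p.map⁻¹ • y, Finset.mem_image_of_mem _ (hB (Finset.mem_insert_self _ _)), ?_⟩
  · obtain ⟨b, hb, rfl⟩ := Finset.mem_image.1 hx
    exact Finset.mem_image.2 ⟨_, hinv j hj b hb, hτB j hj b hb⟩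
  · obtain ⟨b, hb, rfl⟩ := Finset.mem_image.1 hx
    rw [← hτB j hj b hb]
    simp [mul_smul]
  · obtain ⟨b, hb, hba⟩ := Finset.mem_image.1 (hB' ha)
    exact Finset.mem_image.2 ⟨b, hb, by rw [show p.map⁻¹ • b = a from hba, hτ a ha]⟩
  · have h : τ⁻¹ • a = a := by rw [inv_smul_eq_iff, hτ a ha]
    simp only [mul_smul, h]
  · simp [mul_smul]

end ConjApprox

section SmallIndex

variable [Countable V] {H : Subgroup (aut c)} {ι : Type*} [Countable ι] {r : ι → aut c}

theorem exists_mem_subgroup_of_residual (hr : ∀ y, ∃ i, (r i)⁻¹ * y ∈ H) {D : Set (aut c)}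
    (hD : D ∈ residual (aut c)) : ∃ x ∈ D, x ∈ H := by
  have h : ∀ᶠ y in residual (aut c), ∀ i, (r i)⁻¹ * y ∈ D :=
    eventually_countable_forall.2 fun i => mul_left_preimage_mem_residual _ hD
  obtain ⟨y, hy, -⟩ := dense_aut_iff.1 (dense_of_mem_residual h) 1 ∅
  obtain ⟨i, hi⟩ := hr y
  exact ⟨_, hy i, hi⟩

theorem exists_notMem_conj_of_residual
    (hH : ¬ ∃ F : Finset V, ∀ g : aut c, (∀ x ∈ F, g • x = x) → g ∈ H) {D : Set (aut c)}
    (hD : D ∈ residual (aut c)) (s x₀ : aut c) (F : Finset V) :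
    ∃ y ∈ D, (∀ x ∈ F, y • x = x₀ • x) ∧ s⁻¹ * y * s ∉ H := by
  by_contra! hcon
  refine hH ⟨F.image (s⁻¹ • ·), fun g hg => ?_⟩
  have hu : ∀ x ∈ F, (s * g * s⁻¹) • x = x := by
    intro x hx
    have := hg _ (Finset.mem_image_of_mem _ hx)
    rw [mul_smul, mul_smul, this, smul_inv_smul]
  obtain ⟨y, ⟨hy, hyu⟩, hyF⟩ := dense_aut_iff.1 (dense_of_mem_residual
    (Filter.inter_mem hD (mul_right_preimage_mem_residual (s * g * s⁻¹) hD))) x₀ F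
  have h1 := hcon y hy hyF
  have h2 := hcon _ hyu fun x hx => by rw [mul_smul, hu x hx, hyF x hx]
  have h3 := H.mul_mem (H.inv_mem h1) h2
  have h4 : (s⁻¹ * y * s)⁻¹ * (s⁻¹ * (y * (s * g * s⁻¹)) * s) = g := by group
  rwa [h4] at h3

/-- The small index property: a subgroup of countable index contains the pointwise stabilizer of
a finite set. -/
theorem IsRandom.exists_stabilizer_le [NeZero k] (hc : IsRandom c)
    (hr : ∀ y, ∃ i, (r i)⁻¹ * y ∈ H) :
    ∃ F : Finset V, ∀ g : aut c, (∀ x ∈ F, g • x = x) → g ∈ H := by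
  by_contra hH
  have hle : ∀ p q : ConjApprox c, p ≤ q →
      p.pairs ⊆ q.pairs ∧ p.dom ⊆ q.dom ∧ ∀ x ∈ p.dom, q.map • x = p.map • x := fun _ _ h => h
  obtain ⟨σ, I, -, hdir, hσ, hcov, hmeet⟩ := exists_perm_of_cofinal
    (P := ConjApprox c) (fun p => (p.dom : Set V)) (fun p x => p.map • x)
    (fun p q h => (hle p q h).2.1) (fun p q h => (hle p q h).2.2)
    (fun p x _ y _ h => smul_left_cancel p.map h) (fun x p => p.exists_mem_dom x)
    (fun y p => p.exists_mem_range y)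
    (fun i => {p : ConjApprox c | ∃ j ∈ p.pairs, j.1 ∈ H ∧ (r i)⁻¹ * j.2 * r i ∉ H})
    (fun i p => by
      obtain ⟨x, hx, hxH⟩ := exists_mem_subgroup_of_residual hr
        (p.generic_fst.eventually_insert hc)
      obtain ⟨A, hpA, hA⟩ := (hx (x, 1) rfl).exists_invariant p.dom
      obtain ⟨q, hpq, hq, rfl⟩ := p.exists_extend hpA
        fun j hj => hA j (Finset.mem_insert_of_mem hj)
      obtain ⟨y, hy, hyA, hyH⟩ := exists_notMem_conj_of_residual hH
        (q.generic_snd.eventually_insert hc) (r i) (q.map * x * q.map⁻¹)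
        (q.dom.image (q.map • ·))
      refine ⟨⟨insert (x, y) q.pairs, q.dom, q.map, hq ▸ hx (x, y) rfl, hy (x, y) rfl, ?_, ?_⟩,
        le_trans hpq ⟨Finset.subset_insert _ _, subset_rfl, fun _ _ => rfl⟩,
        (x, y), Finset.mem_insert_self _ _, hxH, hyH⟩
      · intro j hj
        rcases Finset.mem_insert.1 hj with rfl | hj
        · exact hA (x, 1) (Finset.mem_insert_self _ _)
        · exact q.invariant j hj
      · intro j hj a ha
        rcases Finset.mem_insert.1 hj with rfl | hj
        · have := hyA _ (Finset.mem_image_of_mem _ ha)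
          simp only [this, mul_smul, inv_smul_smul]
        · exact q.conj j hj a ha)
    ⟨∅, ∅, 1, isGenericFamily_empty _, isGenericFamily_empty _, by simp, by simp⟩
  have hmem : σ ∈ aut c := by
    intro u v huv
    obtain ⟨p, hp, hu⟩ := hcov u
    obtain ⟨q, hq, hv⟩ := hcov v
    obtain ⟨s, hs, hps, hqs⟩ := hdir p hp q hq
    rw [hσ s hs u (hps.2.1 hu), hσ s hs v (hqs.2.1 hv), aut_color s.map huv]
  have hconj : ∀ p ∈ I, ∀ j ∈ p.pairs, (⟨σ, hmem⟩ : aut c) * j.1 = j.2 * ⟨σ, hmem⟩ := by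
    intro p hp j hj
    refine aut_ext fun v => ?_
    obtain ⟨q, hq, hv⟩ := hcov v
    obtain ⟨s, hs, hps, hqs⟩ := hdir p hp q hq
    have hjs := hps.1 hj
    have hvs := hqs.2.1 hv
    rw [mul_smul, mul_smul]
    change σ (j.1 • v) = j.2 • σ v
    rw [hσ s hs v hvs, hσ s hs _ (s.invariant j hjs v hvs), s.conj j hjs v hvs]
  obtain ⟨i, hi⟩ := hr ⟨σ, hmem⟩
  obtain ⟨p, hp, j, hj, hjH, hjH'⟩ := hmeet i
  refine hjH' ?_
  have h := H.mul_mem (H.mul_mem hi hjH) (H.inv_mem hi)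
  rwa [mul_assoc (r i)⁻¹, hconj p hp j hj,
    show (r i)⁻¹ * (j.2 * ⟨σ, hmem⟩) * ((r i)⁻¹ * ⟨σ, hmem⟩)⁻¹ = (r i)⁻¹ * j.2 * r i by group] at h

end SmallIndex

section OpenSubgroup

variable [NeZero k] {H : Subgroup (aut c)}

theorem IsRandom.mem_of_stabilizers_le_of_disjoint (hc : IsRandom c) {A B : Finset V}
    (hA : ∀ g : aut c, (∀ x ∈ A, g • x = x) → g ∈ H)
    (hB : ∀ g : aut c, (∀ x ∈ B, g • x = x) → g ∈ H) {g : aut c}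
    (hg : ∀ x ∈ A ∩ B, g • x = x) (hgA : ∀ x ∈ A, x ∉ B → g • x ∉ A) : g ∈ H := by
  let A' := A ∪ A.image (g • ·)
  have hAA' : ∀ a ∈ A, a ∈ A' := fun a ha => Finset.mem_union_left _ ha
  have hgA' : ∀ a ∈ A, g • a ∈ A' := fun a ha =>
    Finset.mem_union_right _ (Finset.mem_image_of_mem _ ha)
  let t : V → V := fun x => if x ∈ A then x else g⁻¹ • x
  have htA : ∀ a ∈ A, t a = a := fun a ha => if_pos ha
  have htg : ∀ a ∈ A, t (g • a) = a := fun a ha => by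
    by_cases hb : a ∈ B
    · rw [hg a (Finset.mem_inter.2 ⟨ha, hb⟩), htA a ha]
    · simp only [t, if_neg (hgA a ha hb), inv_smul_smul]
  let d : A' ⊕ (B \ A : Finset V) → A' ⊕ (B \ A : Finset V) → Fin k := fun p q =>
    match p, q with
    | .inl a, .inl b => c a b
    | .inr a, .inr b => c a b
    | .inl a, .inr b => c (t a) b
    | .inr b, .inl a => c (t a) b
  obtain ⟨f, hfinj, hfd, hf⟩ := hc.exists_embedding d
    (by rintro (a | a) (b | b) <;> simp [d, hc.symm])
    (Set.range Sum.inl) (Sum.elim (fun a => (a : V)) (fun b => (b : V)))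
    (by
      rintro _ ⟨a, rfl⟩ _ ⟨b, rfl⟩ h
      exact congrArg _ (Subtype.ext h))
    (by
      rintro _ ⟨a, rfl⟩ _ ⟨b, rfl⟩ h
      rfl)
  have hf' : ∀ a : A', f (.inl a) = a := fun a => hf _ ⟨a, rfl⟩
  have hne : ∀ (a : A) (b : (B \ A : Finset V)), (a : V) ≠ b := fun a b h =>
    (Finset.mem_sdiff.1 b.2).2 (h ▸ a.2)
  obtain ⟨p, hp⟩ := hc.exists_smul_eq
    (Sum.elim (fun a : A => (a : V)) (fun b : (B \ A : Finset V) => (b : V)))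
    (Sum.elim (fun a : A => (a : V)) (fun b : (B \ A : Finset V) => f (.inr b)))
    (by
      rintro (a | a) (b | b) h
      · exact congrArg _ (Subtype.ext h)
      · exact (hne a b h).elim
      · exact (hne b a h.symm).elim
      · exact congrArg _ (Subtype.ext h))
    (by
      rintro (a | a) (b | b) h
      · exact congrArg _ (Subtype.ext h)
      · have h' : f (.inl ⟨a, hAA' a a.2⟩) = f (.inr b) := (hf' _).trans h
        simpa using hfinj h'
      · have h' : f (.inl ⟨b, hAA' b b.2⟩) = f (.inr a) := (hf' _).trans h.symm
        simpa using hfinj h'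
      · simpa using hfinj h)
    (by
      have key : ∀ (a : A) (b : (B \ A : Finset V)), c a (f (.inr b)) = c a b := by
        intro a b
        have := hfd (.inl ⟨a, hAA' a a.2⟩) (.inr b) (by simp)
        rw [hf'] at this
        simpa [d, htA a a.2] using this
      rintro (a | a) (b | b) h
      · rfl
      · exact (key a b).symm
      · exact (hc.symm _ _).trans ((key b a).symm.trans (hc.symm _ _))
      · exact (hfd (.inr a) (.inr b) (by simpa using h)).symm)
  have hpA : ∀ a ∈ A, p • a = a := fun a ha => hp (.inl ⟨a, ha⟩)
  have hpB : ∀ b (h : b ∈ B \ A), p • b = f (.inr ⟨b, h⟩) := fun b h => hp (.inr ⟨b, h⟩)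
  have hpA' : ∀ b ∈ B \ A, p • b ∉ A' := fun b hb hbA => by
    rw [hpB b hb] at hbA
    simpa using hfinj (hf' ⟨_, hbA⟩)
  have hpg : ∀ a ∈ A, ∀ b ∈ B \ A, c (g • a) (p • b) = c a (p • b) := by
    intro a ha b hb
    have h1 := hfd (.inl ⟨_, hgA' a ha⟩) (.inr ⟨b, hb⟩) (by simp)
    have h2 := hfd (.inl ⟨_, hAA' a ha⟩) (.inr ⟨b, hb⟩) (by simp)
    rw [hf', ← hpB] at h1 h2
    rw [h1, h2]
    simp only [d, htg a ha, htA a ha]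
  let m : V → V := fun x => if x ∈ A then g • x else x
  have hmA : ∀ a ∈ A, m a = g • a := fun a ha => if_pos ha
  have hmB : ∀ b ∈ B \ A, m (p • b) = p • b := fun b hb => if_neg fun h => hpA' b hb (hAA' _ h)
  obtain ⟨q, hq⟩ := hc.hom (A ∪ (B \ A).image (p • ·)) m
    (by
      intro x hx y hy hxy
      rcases Finset.mem_union.1 hx with hx | hx <;> rcases Finset.mem_union.1 hy with hy | hy
      · rw [hmA x hx, hmA y hy] at hxy
        exact smul_left_cancel g hxy
      · obtain ⟨b, hb, rfl⟩ := Finset.mem_image.1 hy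
        rw [hmA x hx, hmB b hb] at hxy
        exact (hpA' b hb (hxy ▸ hgA' x hx)).elim
      · obtain ⟨b, hb, rfl⟩ := Finset.mem_image.1 hx
        rw [hmA y hy, hmB b hb] at hxy
        exact (hpA' b hb (hxy ▸ hgA' y hy)).elim
      · obtain ⟨b, hb, rfl⟩ := Finset.mem_image.1 hx
        obtain ⟨b', hb', rfl⟩ := Finset.mem_image.1 hy
        rwa [hmB b hb, hmB b' hb'] at hxy)
    (by
      intro x hx y hy hxy
      rcases Finset.mem_union.1 hx with hx | hx <;> rcases Finset.mem_union.1 hy with hy | hy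
      · rw [hmA x hx, hmA y hy, aut_color g hxy]
      · obtain ⟨b, hb, rfl⟩ := Finset.mem_image.1 hy
        rw [hmA x hx, hmB b hb, hpg x hx b hb]
      · obtain ⟨b, hb, rfl⟩ := Finset.mem_image.1 hx
        rw [hmA y hy, hmB b hb, hc.symm, hpg y hy b hb, hc.symm]
      · obtain ⟨b, hb, rfl⟩ := Finset.mem_image.1 hx
        obtain ⟨b', hb', rfl⟩ := Finset.mem_image.1 hy
        rw [hmB b hb, hmB b' hb'])
  have hqA : ∀ a ∈ A, q • a = g • a := fun a ha => by
    rw [hq a (Finset.mem_union_left _ ha), hmA a ha]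
  have hpH : p ∈ H := hA p hpA
  have hpq : p⁻¹ * q * p ∈ H := by
    refine hB _ fun b hb => ?_
    rw [mul_smul, mul_smul, inv_smul_eq_iff]
    by_cases hbA : b ∈ A
    · rw [hpA b hbA, hqA b hbA, hg b (Finset.mem_inter.2 ⟨hbA, hb⟩)]
    · have hb' := Finset.mem_sdiff.2 ⟨hb, hbA⟩
      rw [hq _ (Finset.mem_union_right _ (Finset.mem_image_of_mem _ hb')), hmB b hb']
  have hqH : q ∈ H := by
    have := H.mul_mem (H.mul_mem hpH hpq) (H.inv_mem hpH)
    rwa [show p * (p⁻¹ * q * p) * p⁻¹ = q by group] at this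
  have hgq : q⁻¹ * g ∈ H := hA _ fun a ha => by
    rw [mul_smul, ← hqA a ha, inv_smul_smul]
  simpa using H.mul_mem hqH hgq

/-- A subgroup containing the pointwise stabilizers of two finite sets contains the pointwise
stabilizer of their intersection. -/
theorem IsRandom.mem_of_stabilizers_le (hc : IsRandom c) {A B : Finset V}
    (hA : ∀ g : aut c, (∀ x ∈ A, g • x = x) → g ∈ H)
    (hB : ∀ g : aut c, (∀ x ∈ B, g • x = x) → g ∈ H) {g : aut c}
    (hg : ∀ x ∈ A ∩ B, g • x = x) : g ∈ H := by
  obtain ⟨σ, hσ, hσA⟩ := hc.exists_free_position (A := A ∩ B) (A' := A ∪ A.image (g • ·)) (B := A)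
    (Finset.inter_subset_left.trans Finset.subset_union_left) Finset.inter_subset_left
  have hσA' : ∀ x ∈ A, x ∉ B → σ • x ∉ A ∪ A.image (g • ·) := fun x hx hxB =>
    (hσA x hx fun h => hxB (Finset.mem_inter.1 h).2).1
  have h1 : σ ∈ H := hc.mem_of_stabilizers_le_of_disjoint hA hB hσ
    fun x hx hxB h => hσA' x hx hxB (Finset.mem_union_left _ h)
  have h2 : σ⁻¹ * g ∈ H := by
    refine hc.mem_of_stabilizers_le_of_disjoint hA hB (fun x hx => ?_) fun x hx hxB h => ?_
    · rw [mul_smul, hg x hx, inv_smul_eq_iff, hσ x hx]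
    · rw [mul_smul] at h
      by_cases hB' : σ⁻¹ • g • x ∈ B
      · have hy := Finset.mem_inter.2 ⟨h, hB'⟩
        have h3 := hσ _ hy
        rw [smul_inv_smul] at h3
        have h4 := hg _ hy
        rw [← h3] at h4
        have h5 := smul_left_cancel g h4
        rw [← h3, h5] at hB'
        exact hxB hB'
      · refine hσA' _ h hB' (Finset.mem_union_right _ ?_)
        rw [smul_inv_smul]
        exact Finset.mem_image_of_mem _ hx
  simpa using H.mul_mem h1 h2

/-- A proper open subgroup with few double cosets is a point stabilizer. -/
theorem IsRandom.exists_eq_stabilizer (hc : IsRandom c) {F₀ : Finset V}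
    (hF₀ : ∀ g : aut c, (∀ x ∈ F₀, g • x = x) → g ∈ H) (hH : H ≠ ⊤)
    (cls : aut c → Option (Fin k))
    (hcls : ∀ g g', cls g = cls g' → ∃ h ∈ H, ∃ h' ∈ H, g' = h * g * h') :
    ∃ w : V, H = MulAction.stabilizer (aut c) w := by
  obtain ⟨F, hF, hmin⟩ := (measure Finset.card).wf.has_min
    {F : Finset V | ∀ g : aut c, (∀ x ∈ F, g • x = x) → g ∈ H} ⟨F₀, hF₀⟩
  have himg : ∀ h ∈ H, F.image (h • ·) = F := by
    intro h hh
    have hhF : ∀ g : aut c, (∀ x ∈ F.image (h • ·), g • x = x) → g ∈ H := by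
      intro g hg
      have : h⁻¹ * g * h ∈ H := hF _ fun x hx => by
        rw [mul_smul, mul_smul, hg _ (Finset.mem_image_of_mem _ hx), inv_smul_smul]
      have := H.mul_mem (H.mul_mem hh this) (H.inv_mem hh)
      rwa [show h * (h⁻¹ * g * h) * h⁻¹ = g by group] at this
    have hle : F.card ≤ (F.image (h • ·) ∩ F).card := not_lt.1 <|
      hmin (F.image (h • ·) ∩ F) fun g => hc.mem_of_stabilizers_le hhF hF
    have h1 : F.image (h • ·) ∩ F = F :=
      Finset.eq_of_subset_of_card_le Finset.inter_subset_right hle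
    exact (Finset.eq_of_subset_of_card_le (Finset.inter_eq_right.1 h1)
      Finset.card_image_le).symm
  have hne : F.Nonempty := by
    rw [Finset.nonempty_iff_ne_empty]
    rintro rfl
    exact hH (eq_top_iff.2 fun g _ => hF g (by simp))
  obtain ⟨f, hfF⟩ := hne
  by_cases hF1 : F = {f}
  · refine ⟨f, le_antisymm (fun h hh => ?_) fun g hg => hF g ?_⟩
    · have := himg h hh
      rw [hF1, Finset.image_singleton, Finset.singleton_inj] at this
      exact this
    · rw [hF1]
      simpa using hg
  exfalso
  have hcard : 2 ≤ F.card := by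
    by_contra! h
    refine hF1 (Finset.eq_singleton_iff_unique_mem.2 ⟨hfF, fun x hx => ?_⟩)
    exact Finset.card_le_one.1 (by omega) x hx f hfF
  choose z hzF hz using fun i : Fin k => hc.ext F fun x => if x = f then i else c f x
  have hex : ∀ i, ∃ g : aut c, F.image (g • ·) = insert (z i) (F.erase f) := by
    intro i
    obtain ⟨g, hg⟩ := hc.hom F (fun x => if x = f then z i else x)
      (by
        intro x hx y hy hxy
        have h1 : x ≠ z i := fun h => hzF i (h ▸ hx)
        have h2 : y ≠ z i := fun h => hzF i (h ▸ hy)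
        grind)
      (by
        intro x hx y hy hxy
        have h1 := hz i x hx
        have h2 := hz i y hy
        have h3 := hc.symm
        grind)
    refine ⟨g, ?_⟩
    rw [Finset.image_congr (g := fun x => if x = f then z i else x) hg]
    ext x
    simp only [Finset.mem_image, Finset.mem_insert, Finset.mem_erase]
    grind
  choose q hq using hex
  obtain ⟨σ, -, hσ⟩ := hc.exists_free_position (A := ∅) (A' := F) (B := F) (by simp) (by simp)
  let u : Option (Option (Fin k)) → aut c := fun o => o.elim σ fun o' => o'.elim 1 q
  have hninj : ¬ Function.Injective (cls ∘ u) := fun h => by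
    have := Fintype.card_le_of_injective _ h
    simp at this
  simp only [Function.Injective, not_forall] at hninj
  obtain ⟨o, o', hoo', hne⟩ := hninj
  obtain ⟨h, hh, h', hh', hu⟩ := hcls _ _ hoo'
  have hK : F.image (u o' • ·) = (F.image (u o • ·)).image (h • ·) := by
    rw [hu]
    conv_rhs => rw [← himg h' hh']
    simp only [Finset.image_image, Function.comp_def, mul_smul]
  have hK' : (F.image (u o' • ·) ∩ F).card = (F.image (u o • ·) ∩ F).card := by
    rw [← Finset.card_image_of_injective (F.image (u o • ·) ∩ F) (MulAction.injective h),
      Finset.image_inter _ _ (MulAction.injective h), himg h hh, hK]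
  have hn : F.image (u none • ·) ∩ F = ∅ := by
    ext x
    simp only [Finset.mem_inter, Finset.notMem_empty, iff_false, not_and, Finset.mem_image]
    rintro ⟨y, hy, rfl⟩
    exact (hσ y hy (by simp)).1
  have h1 : F.image (u (some none) • ·) ∩ F = F := by simp [u]
  have hq' : ∀ i, F.image (u (some (some i)) • ·) = insert (z i) (F.erase f) := hq
  have hi : ∀ i, (F.image (u (some (some i)) • ·) ∩ F).card = F.card - 1 := fun i => by
    rw [hq', Finset.insert_inter_of_notMem (hzF i),
      Finset.inter_eq_left.2 (Finset.erase_subset _ _), Finset.card_erase_of_mem hfF]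
  rcases o with _ | _ | i <;> rcases o' with _ | _ | j <;>
    simp only [hn, h1, hi, Finset.card_empty] at hK'
  · exact hne rfl
  · omega
  · omega
  · omega
  · exact hne rfl
  · omega
  · omega
  · omega
  · rw [hq', hq'] at hK
    have hzz : h • z i = z j := by
      have : z j ∈ (insert (z i) (F.erase f)).image (h • ·) :=
        hK ▸ Finset.mem_insert_self _ _
      obtain ⟨y, hy, hyz⟩ := Finset.mem_image.1 this
      rcases Finset.mem_insert.1 hy with rfl | hy
      · exact hyz
      · have := himg h hh ▸ Finset.mem_image_of_mem (h • ·) (Finset.mem_of_mem_erase hy)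
        exact (hzF j (hyz ▸ this)).elim
    have hff : h • f = f := by
      have : f ∈ F.image (h • ·) := (himg h hh).symm ▸ hfF
      obtain ⟨y, hy, hyf⟩ := Finset.mem_image.1 this
      by_cases hyf' : y = f
      · exact hyf' ▸ hyf
      · have : h • y ∈ insert (z j) (F.erase f) := hK ▸ Finset.mem_image_of_mem _
          (Finset.mem_insert_of_mem (Finset.mem_erase.2 ⟨hyf', hy⟩))
        rw [show h • y = f from hyf] at this
        rcases Finset.mem_insert.1 this with h | h
        · exact (hzF j (h ▸ hfF)).elim
        · exact (Finset.notMem_erase _ _ h).elim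
    have hi := hz i f hfF
    have hj := hz j f hfF
    rw [if_pos rfl] at hi hj
    have : i = j := by
      rw [← hi, ← hj, ← hzz]
      conv_rhs => rw [← hff]
      exact (aut_color h fun hzf : z i = f => hzF i (hzf ▸ hfF)).symm
    exact hne (by rw [this])

end OpenSubgroup

theorem IsRandom.exists_smul_eq_point (hc : IsRandom c) (v w : V) : ∃ g : aut c, g • v = w := by
  obtain ⟨g, hg⟩ := hc.hom {v} (fun _ => w) (by simp) (by
    simp only [Finset.mem_singleton]
    rintro x rfl y rfl h
    exact (h rfl).elim)
  exact ⟨g, hg v (Finset.mem_singleton_self v)⟩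

theorem IsRandom.exists_smul_eq_pair (hc : IsRandom c) {u v u' v' : V} (huv : u ≠ v)
    (huv' : u' ≠ v') (h : c u v = c u' v') : ∃ g : aut c, g • u = u' ∧ g • v = v' := by
  obtain ⟨g, hg⟩ := hc.exists_smul_eq (B := Bool) (fun b => cond b u v) (fun b => cond b u' v')
    (by rintro (_ | _) (_ | _) hb <;> simp_all)
    (by rintro (_ | _) (_ | _) hb <;> simp_all)
    (by
      rintro (_ | _) (_ | _) hb
      · exact (hb rfl).elim
      · exact (hc.symm _ _).trans (h.trans (hc.symm _ _))
      · exact h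
      · exact (hb rfl).elim)
  exact ⟨g, hg true, hg false⟩

theorem IsRandom.exists_color_eq (hc : IsRandom c) (i : Fin k) (v : V) :
    ∃ u, u ≠ v ∧ c u v = i := by
  obtain ⟨z, hz, h⟩ := hc.ext {v} fun _ => i
  exact ⟨z, by simpa using hz, h v (Finset.mem_singleton_self v)⟩

theorem IsRandom.eq_of_stabilizer (hc : IsRandom c) {v w : V}
    (h : ∀ g : aut c, g • v = v → g • w = w) : v = w := by
  by_contra hvw
  obtain ⟨z, hz, hzc⟩ := hc.ext {v, w} fun _ => c w v
  simp only [Finset.mem_insert, Finset.mem_singleton, not_or] at hz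
  obtain ⟨g, hgw, hgv⟩ := hc.exists_smul_eq_pair (Ne.symm hvw) hz.1 (hzc v (by simp)).symm
  exact hz.2 (hgw.symm.trans (h g hgv))

theorem IsRandom.exists_stabilizer_map [NeZero k] [Countable V] (hc : IsRandom c)
    (φ : MulAut (aut c)) (v : V) : ∃ w : V, ∀ g : aut c, g • v = v ↔ φ g • w = w := by
  let H := (MulAction.stabilizer (aut c) v).comap φ.symm.toMonoidHom
  have hH : ∀ g, g ∈ H ↔ φ.symm g • v = v := fun _ => Iff.rfl
  choose t ht using hc.exists_smul_eq_point v
  obtain ⟨F, hF⟩ := hc.exists_stabilizer_le (H := H) (r := fun w => φ (t w)) fun y =>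
    ⟨φ.symm y • v, (hH _).2 (by
      rw [map_mul, map_inv, MulEquiv.symm_apply_apply, mul_smul, inv_smul_eq_iff, ht])⟩
  have hne : H ≠ ⊤ := fun h => by
    obtain ⟨u, hu, -⟩ := hc.exists_color_eq 0 v
    have : φ (t u) ∈ H := h ▸ Subgroup.mem_top _
    rw [hH, MulEquiv.symm_apply_apply, ht] at this
    exact hu this
  obtain ⟨w, hw⟩ := hc.exists_eq_stabilizer hF hne
    (fun g => if φ.symm g • v = v then none else some (c v (φ.symm g • v)))
    fun g g' hgg' => by
      have : ∃ h : aut c, h • v = v ∧ h • φ.symm g • v = φ.symm g' • v := by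
        by_cases h1 : φ.symm g • v = v <;> by_cases h2 : φ.symm g' • v = v
        · exact ⟨1, by simp, by simp [h1, h2]⟩
        · simp [h1, h2] at hgg'
        · simp [h1, h2] at hgg'
        · simp only [h1, h2, if_false, Option.some.injEq] at hgg'
          exact hc.exists_smul_eq_pair (Ne.symm h1) (Ne.symm h2) hgg'
      obtain ⟨h, hv, hg⟩ := this
      refine ⟨φ h, (hH _).2 (by simpa using hv), (φ h * g)⁻¹ * g', (hH _).2 ?_, by group⟩
      rw [map_mul, map_inv, map_mul, MulEquiv.symm_apply_apply, mul_smul, inv_smul_eq_iff,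
        mul_smul, hg]
  refine ⟨w, fun g => ?_⟩
  rw [← MulAction.mem_stabilizer_iff (a := w), ← hw, hH, MulEquiv.symm_apply_apply]

/-- The automorphism `φ` of the automorphism group is induced by the permutation `σ` of the
vertices, which permutes the colors by `π`. -/
structure Induces (φ : MulAut (aut c)) (σ : Equiv.Perm V) (π : Equiv.Perm (Fin k)) : Prop where
  smul : ∀ (g : aut c) (v : V), φ g • σ v = σ (g • v)
  color : ∀ u v : V, u ≠ v → c (σ u) (σ v) = π (c u v)

theorem IsRandom.exists_equivariant_perm [NeZero k] [Countable V] (hc : IsRandom c)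
    (φ : MulAut (aut c)) :
    ∃ σ : Equiv.Perm V, ∀ (g : aut c) (v : V), φ g • σ v = σ (g • v) := by
  choose s hs using hc.exists_stabilizer_map φ
  have hinj : Function.Injective s := fun v w h => hc.eq_of_stabilizer fun g hg => by
    rwa [hs, ← h, ← hs]
  have hsurj : Function.Surjective s := fun w => by
    obtain ⟨v, hv⟩ := hc.exists_stabilizer_map φ.symm w
    refine ⟨v, (hc.eq_of_stabilizer fun g hg => ?_).symm⟩
    rw [hv] at hg
    simpa using (hs v _).1 hg
  refine ⟨Equiv.ofBijective s ⟨hinj, hsurj⟩, fun g v => hc.eq_of_stabilizer fun h hh => ?_⟩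
  obtain ⟨h, rfl⟩ := φ.surjective h
  change φ h • φ g • s v = φ g • s v at hh
  change φ h • s (g • v) = s (g • v)
  rw [← hs, ← inv_smul_eq_iff, ← mul_smul, ← mul_smul, hs, map_mul, map_mul, map_inv,
    mul_smul, mul_smul, hh, inv_smul_smul]

theorem IsRandom.exists_induces [NeZero k] [Countable V] [Nonempty V] (hc : IsRandom c)
    (φ : MulAut (aut c)) : ∃ σ π, Induces φ σ π := by
  obtain ⟨σ, hσ⟩ := hc.exists_equivariant_perm φ
  obtain ⟨b⟩ := ‹Nonempty V›
  choose a hab ha using fun i => hc.exists_color_eq i b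
  let p : Fin k → Fin k := fun i => c (σ (a i)) (σ b)
  have hp : ∀ u v, u ≠ v → c (σ u) (σ v) = p (c u v) := by
    intro u v huv
    obtain ⟨g, hga, hgb⟩ := hc.exists_smul_eq_pair (hab (c u v)) huv (ha _)
    rw [← hga, ← hgb, ← hσ, ← hσ, aut_color (φ g) (σ.injective.ne (hab _)), aut_color g (hab _), ha]
  have hinj : Function.Injective p := by
    intro i j hij
    obtain ⟨g, hga, hgb⟩ := hc.exists_smul_eq_pair (σ.injective.ne (hab i))
      (σ.injective.ne (hab j)) hij
    obtain ⟨g, rfl⟩ := φ.surjective g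
    rw [hσ] at hga hgb
    rw [← ha i, ← ha j, ← σ.injective hga]
    conv_rhs => rw [← σ.injective hgb]
    exact (aut_color g (hab i)).symm
  exact ⟨σ, Equiv.ofBijective p (Finite.injective_iff_bijective.1 hinj), hσ, hp⟩

theorem Induces.color_perm_eq [Nonempty V] (hc : IsRandom c) {φ : MulAut (aut c)}
    {σ τ : Equiv.Perm V} {π ρ : Equiv.Perm (Fin k)} (h : Induces φ σ π) (h' : Induces φ τ ρ) :
    π = ρ := by
  have hστ : ∀ v, σ v = τ v := fun v => hc.eq_of_stabilizer fun g hg => by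
    obtain ⟨g, rfl⟩ := φ.surjective g
    rw [h.smul] at hg
    rw [h'.smul, σ.injective hg]
  ext i
  obtain ⟨b⟩ := ‹Nonempty V›
  obtain ⟨a, hab, rfl⟩ := hc.exists_color_eq i b
  rw [← h.color a b hab, ← h'.color a b hab, hστ, hστ]

theorem Induces.mul {φ ψ : MulAut (aut c)} {σ τ : Equiv.Perm V} {π ρ : Equiv.Perm (Fin k)}
    (h : Induces φ σ π) (h' : Induces ψ τ ρ) : Induces (φ * ψ) (σ * τ) (π * ρ) where
  smul g v := by
    rw [MulAut.mul_apply, Equiv.Perm.mul_apply, Equiv.Perm.mul_apply, h.smul, h'.smul]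
  color u v huv := by
    simp only [Equiv.Perm.mul_apply]
    rw [h.color _ _ (τ.injective.ne huv), h'.color _ _ huv]

theorem induces_conj (g : aut c) : Induces (MulAut.conj g) (g : Equiv.Perm V) 1 where
  smul h v := by
    change (g * h * g⁻¹) • g • v = g • h • v
    simp [mul_smul]
  color u v huv := aut_color g huv

/-- Finite approximations to permutations of the vertices that permute the colors by `π`. -/
structure RecolorApprox (c : V → V → Fin k) (π : Equiv.Perm (Fin k)) where
  /-- The finite set on which the approximation is fixed. -/
  dom : Finset V
  /-- The underlying map. -/
  map : V → V
  injOn : Set.InjOn map dom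
  color : ∀ x ∈ dom, ∀ y ∈ dom, x ≠ y → c (map x) (map y) = π (c x y)

instance (π : Equiv.Perm (Fin k)) : Preorder (RecolorApprox c π) where
  le p q := p.dom ⊆ q.dom ∧ ∀ x ∈ p.dom, q.map x = p.map x
  le_refl p := ⟨subset_rfl, fun _ _ => rfl⟩
  le_trans p q r h h' := ⟨h.1.trans h'.1, fun x hx => (h'.2 x (h.1 hx)).trans (h.2 x hx)⟩

namespace RecolorApprox

variable {π : Equiv.Perm (Fin k)}

theorem exists_insert (hc : IsRandom c) (p : RecolorApprox c π) {x y : V} (hx : x ∉ p.dom)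
    (hy : ∀ a ∈ p.dom, y ≠ p.map a) (hxy : ∀ a ∈ p.dom, c y (p.map a) = π (c x a)) :
    ∃ q ≥ p, x ∈ q.dom ∧ q.map x = y := by
  have hne : ∀ a ∈ p.dom, Function.update p.map x y a = p.map a := fun a ha =>
    Function.update_of_ne (fun h : a = x => hx (h ▸ ha)) _ _
  have hself : Function.update p.map x y x = y := Function.update_self _ _ _
  refine ⟨⟨insert x p.dom, Function.update p.map x y, fun a ha b hb hab => ?_,
    fun a ha b hb hab => ?_⟩, ⟨Finset.subset_insert _ _, hne⟩, Finset.mem_insert_self _ _, hself⟩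
  · rcases Finset.mem_insert.1 ha with rfl | ha' <;> rcases Finset.mem_insert.1 hb with rfl | hb'
    · rfl
    · rw [hself, hne b hb'] at hab
      exact (hy b hb' hab).elim
    · rw [hself, hne a ha'] at hab
      exact (hy a ha' hab.symm).elim
    · rw [hne a ha', hne b hb'] at hab
      exact p.injOn ha' hb' hab
  · rcases Finset.mem_insert.1 ha with rfl | ha' <;> rcases Finset.mem_insert.1 hb with rfl | hb'
    · exact (hab rfl).elim
    · rw [hself, hne b hb', hxy b hb']
    · rw [hself, hne a ha', hc.symm, hxy a ha', hc.symm]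
    · rw [hne a ha', hne b hb', p.color a ha' b hb' hab]

theorem exists_mem_dom (hc : IsRandom c) (p : RecolorApprox c π) (x : V) : ∃ q ≥ p, x ∈ q.dom := by
  by_cases hx : x ∈ p.dom
  · exact ⟨p, le_refl p, hx⟩
  have : Nonempty V := ⟨x⟩
  obtain ⟨y, hy, hyc⟩ := hc.ext (p.dom.image p.map)
    fun y => π (c x (Function.invFunOn p.map p.dom y))
  obtain ⟨q, hq, hxq, -⟩ := p.exists_insert hc (y := y) hx
    (fun a ha h => hy (h ▸ Finset.mem_image_of_mem _ ha))
    (fun a ha => by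
      rw [hyc _ (Finset.mem_image_of_mem _ ha), p.injOn.leftInvOn_invFunOn ha])
  exact ⟨q, hq, hxq⟩

theorem exists_mem_range (hc : IsRandom c) (p : RecolorApprox c π) (y : V) :
    ∃ q ≥ p, ∃ x ∈ q.dom, q.map x = y := by
  by_cases hy : y ∈ p.dom.image p.map
  · obtain ⟨x, hx, hxy⟩ := Finset.mem_image.1 hy
    exact ⟨p, le_refl p, x, hx, hxy⟩
  obtain ⟨x, hx, hxc⟩ := hc.ext p.dom fun a => π.symm (c y (p.map a))
  obtain ⟨q, hq, hxq⟩ := p.exists_insert hc (y := y) hx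
    (fun a ha h => hy (h ▸ Finset.mem_image_of_mem _ ha))
    (fun a ha => by rw [hxc a ha, Equiv.apply_symm_apply])
  exact ⟨q, hq, x, hxq⟩

end RecolorApprox

/-- Every permutation of the colors is realized by a permutation of the vertices. -/
theorem IsRandom.exists_recoloring [Countable V] (hc : IsRandom c) (π : Equiv.Perm (Fin k)) :
    ∃ σ : Equiv.Perm V, ∀ u v, u ≠ v → c (σ u) (σ v) = π (c u v) := by
  have hle : ∀ p q : RecolorApprox c π, p ≤ q →
      p.dom ⊆ q.dom ∧ ∀ x ∈ p.dom, q.map x = p.map x := fun _ _ h => h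
  obtain ⟨σ, I, -, hdir, hσ, hcov, -⟩ := exists_perm_of_cofinal (κ := Empty)
    (P := RecolorApprox c π) (fun p => (p.dom : Set V)) (fun p x => p.map x)
    (fun p q h => (hle p q h).1) (fun p q h => (hle p q h).2) (fun p => p.injOn)
    (fun x p => p.exists_mem_dom hc x) (fun y p => p.exists_mem_range hc y)
    Empty.elim (fun i => i.elim) ⟨∅, id, by simp, by simp⟩
  refine ⟨σ, fun u v huv => ?_⟩
  obtain ⟨p, hp, hu⟩ := hcov u
  obtain ⟨q, hq, hv⟩ := hcov v
  obtain ⟨s, hs, hps, hqs⟩ := hdir p hp q hq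
  rw [hσ s hs u (hps.1 hu), hσ s hs v (hqs.1 hv), s.color u (hps.1 hu) v (hqs.1 hv) huv]

theorem exists_induces_of_recoloring {σ : Equiv.Perm V} {π : Equiv.Perm (Fin k)}
    (hσ : ∀ u v, u ≠ v → c (σ u) (σ v) = π (c u v)) : ∃ φ : MulAut (aut c), Induces φ σ π := by
  have hσ' : ∀ u v, u ≠ v → π (c (σ⁻¹ u) (σ⁻¹ v)) = c u v := fun u v huv => by
    rw [← hσ _ _ (σ⁻¹.injective.ne huv)]
    simp
  have h1 : ∀ g ∈ aut c, σ * g * σ⁻¹ ∈ aut c := by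
    intro g hg u v huv
    have huv' := σ⁻¹.injective.ne huv
    simp only [Equiv.Perm.mul_apply]
    rw [hσ _ _ (g.injective.ne huv'), hg _ _ huv', hσ' u v huv]
  have h2 : ∀ g ∈ aut c, σ⁻¹ * g * σ ∈ aut c := by
    intro g hg u v huv
    have huv' := σ.injective.ne huv
    apply π.injective
    simp only [Equiv.Perm.mul_apply]
    rw [hσ' _ _ (g.injective.ne huv'), hg _ _ huv', hσ u v huv]
  let φ : MulAut (aut c) :=
    { toFun := fun g => ⟨σ * g * σ⁻¹, h1 g g.2⟩
      invFun := fun g => ⟨σ⁻¹ * g * σ, h2 g g.2⟩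
      left_inv := fun g => Subtype.ext (by simp [mul_assoc])
      right_inv := fun g => Subtype.ext (by simp [mul_assoc])
      map_mul' := fun g h => Subtype.ext (by simp [mul_assoc]) }
  refine ⟨φ, fun g v => ?_, hσ⟩
  change (σ * g * σ⁻¹ : Equiv.Perm V) (σ v) = σ ((g : Equiv.Perm V) v)
  simp

/-- The outer automorphism group of the automorphism group of the random colored graph is the
group of permutations of the colors. -/
theorem IsRandom.exists_hom_ker_eq_range_conj [NeZero k] [Countable V] [Nonempty V]
    (hc : IsRandom c) : ∃ e : MulAut (aut c) →* Equiv.Perm (Fin k),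
      Function.Surjective e ∧ e.ker = (MulAut.conj : aut c →* MulAut (aut c)).range := by
  choose σ π hπ using hc.exists_induces
  refine ⟨MonoidHom.mk' π fun φ ψ => (hπ _).color_perm_eq hc ((hπ φ).mul (hπ ψ)),
    fun ρ => ?_, ?_⟩
  · obtain ⟨τ, hτ⟩ := hc.exists_recoloring ρ
    obtain ⟨φ, hφ⟩ := exists_induces_of_recoloring hτ
    exact ⟨φ, (hπ φ).color_perm_eq hc hφ⟩
  · ext φ
    rw [MonoidHom.mem_ker, MonoidHom.mk'_apply, MonoidHom.mem_range]
    constructor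
    · intro h
      refine ⟨⟨σ φ, fun u v huv => by rw [(hπ φ).color u v huv, h]; rfl⟩,
        MulEquiv.ext fun g => aut_ext fun v => ?_⟩
      obtain ⟨v, rfl⟩ := (σ φ).surjective v
      rw [(hπ φ).smul]
      change (σ φ * g * (σ φ)⁻¹ : Equiv.Perm V) (σ φ v) = σ φ ((g : Equiv.Perm V) v)
      simp
    · rintro ⟨g, rfl⟩
      exact (hπ _).color_perm_eq hc (induces_conj g)

end ColoredGraph

/-- For `k ≥ 2`, the `k`-colored random graph `R_k` (the countable
homogeneous structure universal for finite complete graphs with edges colored in `k`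
colors) satisfies `Out(Aut(R_k)) ≅ Sym(k)`: there is a surjective homomorphism from
`Aut(Aut(R_k))` onto `Sym(k)` whose kernel is exactly the group of inner automorphisms. -/
theorem stmt_7 (k : ℕ) (hk : 2 ≤ k) (V : Type*) [Countable V] [Infinite V]
    (c : V → V → Fin k) (hsymm : ∀ u v : V, c u v = c v u)
    (hhom : ∀ S T : Set V, S.Finite → T.Finite → ∀ e : S ≃ T,
      (∀ u v : S, u ≠ v → c (e u : V) (e v : V) = c (u : V) (v : V)) →
        ∃ σ ∈ ColoredGraph.aut c, ∀ a : S, σ (a : V) = (e a : V))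
    (huniv : ∀ (W : Type) (_ : Fintype W) (d : W → W → Fin k),
      (∀ u v : W, d u v = d v u) →
        ∃ f : W ↪ V, ∀ u v : W, u ≠ v → c (f u) (f v) = d u v) :
    ∃ e : MulAut ↥(ColoredGraph.aut c) →* Equiv.Perm (Fin k),
      Function.Surjective e ∧
      e.ker = (MulAut.conj :
        ↥(ColoredGraph.aut c) →* MulAut ↥(ColoredGraph.aut c)).range := by
  have : NeZero k := ⟨by omega⟩
  have hc := ColoredGraph.isRandom_of_homogeneous_of_universal hsymm hhom huniv
  exact hc.exists_hom_ker_eq_range_conj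
end
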